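/- arXiv:1908.00899 — 2 statements merged into one kernel-verified Lean document; each statement's English description precedes it below -/
import Mathlib

section
/- Let X ⊂ P^{n_1} × ... × P^{n_k} be irreducible with multidimension Dim(X) = P × Q for polymatroid polytopes P ⊂ [n_I] and Q ⊂ [n_J] in complementary sets of factors. Then there exist integers p and q with p + q = dim(X) such that every e' ∈ P has |e'| = p and every e'' ∈ Q has |e''| = q, and moreover dim π_I(X) = p and dim π_J(X) = q, so that X = π_I(X) × π_J(X). -/
/-!
The proof computes the multidimension and the dimension of projections by transcendence degrees.
Fix an affine chart `v ⟨i, c i⟩ = 1` of the multiprojective space meeting `X`; the part of `X` in it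
is irreducible (`chartSet_prime`), so its coordinate ring is a domain, and algebraic independence of
coordinate functions is a matroid.

*Slices.* Pairs of a point of the chart and a family of forms vanishing there make up an incidence
variety, whose coordinate ring is a polynomial ring over that of the chart. If the number of forms
in the factors of a projection exceeds the transcendence degree of the coordinates in these
factors, their coefficients are algebraically dependent on the incidence variety, and a general
slice misses the image (`sum_le_of_mem_MDim`). If the forms are in bijection with an independent
set of coordinate functions, respecting the factors, their coefficients are independent
(`indep_coefFn`). When this set is a transcendence basis, the incidence variety is
generically finite over the space of slices, and a general slice meets the variety in a nonempty
finite set. Thus the numbers of elements of a basis in the factors form a vector of the multidimension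
(`mem_MDim_of_basis`), and the dimension of a projection is a transcendence degree (`dimOf_pull`).
Relations found in the chart extend to all of `X` by `incidence_transfer`.

*Splitting.* Let `p` and `q` be the common coordinate sums of the vectors of `P` and `Q`. A basis of
the coordinate functions that contains a basis of the first group of coordinates counts to a vector
of `Dim X = P × Q`, so the first group has transcendence degree `p`; similarly the second group has
transcendence degree `q`, and all coordinates together have transcendence degree `p + q`. Hence
bases of the two groups are together independent.

*Recombining points.* Let `B` be such a union of two bases, and
send each coordinate of the first group to the first factor, and of the second group to the
second factor, of the coordinate ring of the square of the chart. All images are algebraic over the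
images of `B`. An equation `f` of the chart maps to zero: otherwise its image divides a nonzero
polynomial in the images of `B`, which restricts to a nonzero function on the diagonal since `B` is
independent, whereas `f` restricts to zero (`eval_piecewise_eq_zero`). So the first group of
coordinates of one point of `X` and the second group of another always make up a point of `X`
(`piecewise_mem`), which is the asserted product decomposition.
-/

open scoped BigOperators

namespace MultiProj

variable {ι : Type*} [Fintype ι] [DecidableEq ι]

/-- Multiprojective space: a product of complex projective spaces `ℙ^{n i}`. -/
abbrev PStack (n : ι → ℕ) := (i : ι) → Projectivization ℂ (Fin (n i + 1) → ℂ)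

/-- A linear form (given by its coefficient vector) vanishes at a point of the
projectivization of a coordinate space. -/
def PLinVanish {κ : Type*} [Fintype κ] (c : κ → ℂ)
    (p : Projectivization ℂ (κ → ℂ)) : Prop :=
  ∀ (v : κ → ℂ) (hv : v ≠ 0), Projectivization.mk ℂ v hv = p → ∑ a, c a * v a = 0

/-- A polynomial in the multihomogeneous coordinates vanishes at a point of the
multiprojective space, i.e. at every system of homogeneous representatives. -/
def PolyVanish {n : ι → ℕ} (f : MvPolynomial ((i : ι) × Fin (n i + 1)) ℂ)
    (x : PStack n) : Prop :=
  ∀ v : (i : ι) → Fin (n i + 1) → ℂ,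
    (∀ i, ∃ hv : v i ≠ 0, Projectivization.mk ℂ (v i) hv = x i) →
    MvPolynomial.eval (fun p => v p.1 p.2) f = 0

/-- Algebraic subsets of multiprojective space. -/
def IsAlgebraicSet {n : ι → ℕ} (X : Set (PStack n)) : Prop :=
  ∃ F : Set (MvPolynomial ((i : ι) × Fin (n i + 1)) ℂ),
    X = {x | ∀ f ∈ F, PolyVanish f x}

/-- Irreducible multiprojective varieties: nonempty algebraic sets that are not
contained in the union of two algebraic sets without being contained in one. -/
def IsIrredVariety {n : ι → ℕ} (X : Set (PStack n)) : Prop :=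
  IsAlgebraicSet X ∧ X.Nonempty ∧
    ∀ A B : Set (PStack n), IsAlgebraicSet A → IsAlgebraicSet B →
      X ⊆ A ∪ B → (X ⊆ A ∨ X ⊆ B)

/-- An irreducible component of a multiprojective variety. -/
def IsComponentOf {n : ι → ℕ} (Y X : Set (PStack n)) : Prop :=
  IsIrredVariety Y ∧ Y ⊆ X ∧
    ∀ Y' : Set (PStack n), IsIrredVariety Y' → Y ⊆ Y' → Y' ⊆ X → Y' = Y

/-- Parameter space for a multilinear slice of type `e`: `e i` linear forms in
the variables of the `i`-th factor. -/
abbrev SliceParams (n : ι → ℕ) (e : ι → ℕ) :=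
  (i : ι) → Fin (e i) → (Fin (n i + 1) → ℂ)

/-- The common zero set in multiprojective space of a multilinear slice. -/
def SliceZeros {n : ι → ℕ} {e : ι → ℕ} (L : SliceParams n e) : Set (PStack n) :=
  {x | ∀ (i : ι) (j : Fin (e i)), PLinVanish (L i j) (x i)}

/-- A property holds generically (on a dense open set) of a parameter. -/
def Generic {α : Type*} [TopologicalSpace α] (P : α → Prop) : Prop :=
  ∃ U : Set α, IsOpen U ∧ Dense U ∧ ∀ a ∈ U, P a

/-- The multidimension `Dim(X)`: the set of vectors `e` such that a general
multilinear slice of type `e` meets `X` in finitely many, and at least one, points. -/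
def MDim {n : ι → ℕ} (X : Set (PStack n)) : Set (ι → ℕ) :=
  {e | (∀ i, e i ≤ n i) ∧
    Generic (fun L : SliceParams n e =>
      (X ∩ SliceZeros L).Finite ∧ (X ∩ SliceZeros L).Nonempty)}

/-- `Deg_X(e) = d`: a general multilinear slice of type `e` meets `X` in exactly
`d` points. -/
def DegIs {n : ι → ℕ} (X : Set (PStack n)) (e : ι → ℕ) (d : ℕ) : Prop :=
  Generic (fun L : SliceParams n e =>
    (X ∩ SliceZeros L).Finite ∧ (X ∩ SliceZeros L).ncard = d)

/-- The intrinsic dimension of a multiprojective variety, read off as the common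
total degree of the vectors in its multidimension. -/
noncomputable def dimOf {n : ι → ℕ} (X : Set (PStack n)) : ℕ :=
  sSup {m | ∃ e ∈ MDim X, ∑ i, e i = m}

/-- Projection of the multiprojective space onto the factors indexed by `I`. -/
def resMap {n : ι → ℕ} (I : Finset ι) (x : PStack n) :
    PStack (fun i : {j // j ∈ I} => n i.1) :=
  fun i => x i.1

/-- `dim π_I(X)`: the dimension of the projection of `X` onto the factors
indexed by `I`. -/
noncomputable def dimProj {n : ι → ℕ} (I : Finset ι) (X : Set (PStack n)) : ℕ :=
  dimOf (resMap I '' X)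

/-- An equidimensional multiprojective variety: all irreducible components have
the same multidimension. -/
def Equidimensional {n : ι → ℕ} (X : Set (PStack n)) : Prop :=
  IsAlgebraicSet X ∧ X.Nonempty ∧
    ∀ Y Y' : Set (PStack n), IsComponentOf Y X → IsComponentOf Y' X →
      MDim Y = MDim Y'

/-- The set of lattice points of a polymatroid polytope inside the box `[n]`,
cut out by a submodular, monotone rank function. -/
def IsPolymatroidSet (n : ι → ℕ) (P : Set (ι → ℕ)) : Prop :=
  ∃ r : Finset ι → ℕ,
    (∀ A B : Finset ι, r (A ∪ B) + r (A ∩ B) ≤ r A + r B) ∧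
    (∀ A B : Finset ι, A ⊆ B → r A ≤ r B) ∧
    P = {e | (∀ i, e i ≤ n i) ∧ (∑ i, e i = r Finset.univ) ∧
          ∀ S : Finset ι, ∑ i ∈ S, e i ≤ r S}

section Product

variable {ι₁ ι₂ : Type*} [Fintype ι₁] [DecidableEq ι₁] [Fintype ι₂] [DecidableEq ι₂]

/-- Combine points of two multiprojective spaces into a point of the product
multiprojective space, indexed by the disjoint union of the index sets. -/
def combine {n₁ : ι₁ → ℕ} {n₂ : ι₂ → ℕ} (y : PStack n₁) (z : PStack n₂) :
    PStack (Sum.elim n₁ n₂) := fun i =>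
  match i with
  | Sum.inl a => y a
  | Sum.inr b => z b

/-- The Cartesian product of multiprojective varieties in disjoint factors. -/
def prodSet {n₁ : ι₁ → ℕ} {n₂ : ι₂ → ℕ} (Y : Set (PStack n₁)) (Z : Set (PStack n₂)) :
    Set (PStack (Sum.elim n₁ n₂)) :=
  {x | ∃ y ∈ Y, ∃ z ∈ Z, x = combine y z}

/-- Projection of the product multiprojective space onto the first group of factors. -/
def projL {n₁ : ι₁ → ℕ} {n₂ : ι₂ → ℕ} (x : PStack (Sum.elim n₁ n₂)) : PStack n₁ :=
  fun a => x (Sum.inl a)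

/-- Projection of the product multiprojective space onto the second group of factors. -/
def projR {n₁ : ι₁ → ℕ} {n₂ : ι₂ → ℕ} (x : PStack (Sum.elim n₁ n₂)) : PStack n₂ :=
  fun b => x (Sum.inr b)

end Product

section Segre

/-- Degree `δ` of a subset `S` of the projective space `ℙ(ℂ^κ)` of dimension `d`:
a general collection of `d` hyperplanes meets `S` in exactly `δ` points. -/
def ProjDegIs {κ : Type*} [Fintype κ] (S : Set (Projectivization ℂ (κ → ℂ)))
    (d : ℕ) (δ : ℕ) : Prop :=
  Generic (fun c : Fin d → κ → ℂ =>
    (S ∩ {p | ∀ j, PLinVanish (c j) p}).Finite ∧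
    (S ∩ {p | ∀ j, PLinVanish (c j) p}).ncard = δ)

/-- `σ` is a Segre embedding: on homogeneous representatives it is given by the
tensor (outer) product of the coordinate vectors of the factors. -/
def IsSegreMap (n : ι → ℕ)
    (σ : PStack n → Projectivization ℂ (((i : ι) → Fin (n i + 1)) → ℂ)) : Prop :=
  ∀ (x : PStack n) (v : (i : ι) → Fin (n i + 1) → ℂ),
    (∀ i, ∃ hv : v i ≠ 0, Projectivization.mk ℂ (v i) hv = x i) →
    ∃ h : (fun a : (i : ι) → Fin (n i + 1) => ∏ i, v i (a i)) ≠ 0,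
      Projectivization.mk ℂ (fun a : (i : ι) → Fin (n i + 1) => ∏ i, v i (a i)) h = σ x

end Segre

end MultiProj

open MultiProj

namespace MultiSplit

open MvPolynomial

/-! ### Variables and algebraic independence -/

/-- If taking constant coefficients is injective on `S`, the variables are algebraically
independent over `S`. -/
theorem indep_X_over {R S T : Type*} [CommRing R] [CommRing S]
    [Algebra S (MvPolynomial T R)]
    (hinj : Function.Injective
      ((constantCoeff (σ := T) (R := R)).comp (algebraMap S (MvPolynomial T R)))) :
    AlgebraicIndependent S (X : T → MvPolynomial T R) := by
  classical
  rw [algebraicIndependent_iff]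
  intro p hp
  by_contra hne
  -- for a minimal exponent `β` of `p`, the coefficient at `β` of the value of `p` only sees the
  -- constant coefficient of the coefficient at `β` of `p`
  obtain ⟨β, hβ, hmin⟩ := p.support.exists_minimal (by simpa using hne)
  have h1 : coeff β (aeval (X : T → MvPolynomial T R) p) =
      constantCoeff (algebraMap S (MvPolynomial T R) (coeff β p)) := by
    have key : ∀ α : T →₀ ℕ, (∏ i ∈ α.support, (X i : MvPolynomial T R) ^ α i) = monomial α 1 := by
      intro α
      rw [monomial_eq]; simp [Finsupp.prod]
    rw [aeval_def, eval₂_eq, coeff_sum, Finset.sum_eq_single β]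
    · rw [key, coeff_mul_monomial']; simp [constantCoeff_eq]
    · intro α hα hne'
      rw [key, coeff_mul_monomial', if_neg]
      intro hle
      exact hne' (le_antisymm hle (hmin hα hle))
    · intro h; exact absurd hβ h
  rw [hp, coeff_zero] at h1
  have := hinj (a₁ := coeff β p) (a₂ := 0) (by simp [← h1])
  exact (mem_support_iff.mp hβ) this

/-- Polynomials whose constant coefficients are independent are independent of each other and of
the variables: a relation among them would specialise to one among the constant coefficients. -/
theorem indep_sum_of_constantCoeff {R T J : Type*} [CommRing R] [Algebra ℂ R]
    (s : J → MvPolynomial T R)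
    (h : AlgebraicIndependent ℂ fun j => constantCoeff (s j)) :
    AlgebraicIndependent ℂ (Sum.elim (X : T → MvPolynomial T R) s) := by
  have hs : AlgebraicIndependent ℂ s := by
    refine h.of_ringHom_of_comp_eq (RingHom.id ℂ) (constantCoeff (σ := T) (R := R))
      Function.injective_id ?_
    refine RingHom.ext fun x => ?_
    change algebraMap ℂ R x = constantCoeff (algebraMap ℂ (MvPolynomial T R) x)
    rw [IsScalarTower.algebraMap_apply ℂ R (MvPolynomial T R), algebraMap_eq, constantCoeff_C]
  rw [AlgebraicIndependent.sumElim_iff]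
  refine ⟨hs, indep_X_over ?_⟩
  rw [RingHom.injective_iff_ker_eq_bot, RingHom.ker_eq_bot_iff_eq_zero]
  rintro ⟨x, hx⟩ h0
  rw [Algebra.adjoin_range_eq_range_aeval] at hx
  obtain ⟨p, hp⟩ := hx
  have h2 : aeval (fun j => constantCoeff (s j)) p = 0 := by
    have : constantCoeff (aeval s p) = 0 := by
      rw [← h0]; exact congrArg _ hp
    rw [← this, ← RingHom.coe_coe (aeval s), ← RingHom.comp_apply,
      ← RingHom.coe_coe (aeval fun j => _)]
    congr 1
    ext <;> simp [IsScalarTower.algebraMap_apply ℂ R (MvPolynomial T R)]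
  have h3 := algebraicIndependent_iff.mp h p h2
  subst h3
  ext1
  simpa using hp.symm

/-- Polynomials whose values at one point with complex coordinates are independent are independent
of each other and of the variables. Translation of the variables reduces this to constant
coefficients. -/
theorem indep_sum_of_eval {R T J : Type*} [CommRing R] [Algebra ℂ R]
    (s : J → MvPolynomial T R) (t₀ : T → ℂ)
    (h : AlgebraicIndependent ℂ fun j => eval (fun t => algebraMap ℂ R (t₀ t)) (s j)) :
    AlgebraicIndependent ℂ (Sum.elim (X : T → MvPolynomial T R) s) := by
  let sh : MvPolynomial T R →ₐ[ℂ] MvPolynomial T R :=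
    (aeval (R := R) fun t => X t + C (algebraMap ℂ R (t₀ t))).restrictScalars ℂ
  have h1 : AlgebraicIndependent ℂ (Sum.elim (X : T → MvPolynomial T R) (sh ∘ s)) := by
    apply indep_sum_of_constantCoeff
    convert h using 2 with j
    have : (constantCoeff : MvPolynomial T R →+* R).comp
        (sh : MvPolynomial T R →+* MvPolynomial T R) = eval (fun t => algebraMap ℂ R (t₀ t)) := by
      ext <;> simp [sh]
    rw [← this]; rfl
  rw [algebraicIndependent_iff] at h1 ⊢
  intro F hF
  let u : MvPolynomial (T ⊕ J) ℂ →ₐ[ℂ] MvPolynomial (T ⊕ J) ℂ :=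
    aeval (Sum.elim (fun t => X (Sum.inl t) + C (t₀ t)) (fun j => X (Sum.inr j)))
  let w : MvPolynomial (T ⊕ J) ℂ →ₐ[ℂ] MvPolynomial (T ⊕ J) ℂ :=
    aeval (Sum.elim (fun t => X (Sum.inl t) - C (t₀ t)) (fun j => X (Sum.inr j)))
  have h2 : (aeval (Sum.elim (X : T → MvPolynomial T R) (sh ∘ s))).comp u =
      sh.comp (aeval (Sum.elim (X : T → MvPolynomial T R) s)) := by
    ext x : 1
    rcases x with t | j <;> simp [u, sh]
  have h3 : u F = 0 := h1 _ (by
    have := congrArg (fun φ => φ F) h2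
    simpa [hF] using this)
  have h4 : w.comp u = AlgHom.id ℂ _ := by
    ext x : 1
    rcases x with t | j <;> simp [u, w, ← algebraMap_eq]
  have := congrArg (fun φ => φ F) h4
  simpa [h3] using this.symm

/-! ### Points of algebraic extensions and general points -/

/-- A maximal ideal containing a proper ideal gives a complex point. -/
theorem exists_point_of_ne_top {B : Type*} [CommRing B] [Algebra ℂ B] [Algebra.FiniteType ℂ B]
    (I : Ideal B) (hI : I ≠ ⊤) : ∃ ψ : B →ₐ[ℂ] ℂ, ∀ x ∈ I, ψ x = 0 := by
  obtain ⟨M, hM, hIM⟩ := I.exists_le_maximal hI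
  let := Ideal.Quotient.field M
  have : Module.Finite ℂ (B ⧸ M) := finite_of_finite_type_of_isJacobsonRing ℂ (B ⧸ M)
  let ψ : (B ⧸ M) →ₐ[ℂ] ℂ := IsAlgClosed.lift (R := ℂ) (S := B ⧸ M) (M := ℂ)
  refine ⟨ψ.comp (Ideal.Quotient.mkₐ ℂ M), fun x hx => ?_⟩
  have : Ideal.Quotient.mkₐ ℂ M x = 0 := Ideal.Quotient.eq_zero_iff_mem.mpr (hIM hx)
  simp only [AlgHom.comp_apply, this, map_zero]

/-- A general complex point of `A` lifts to a point of a domain `B` that is finitely generated and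
algebraic over `A`. After inverting the product `g` of the leading coefficients of equations of the
generators, `B` is integral over `A`, so lying over applies. -/
theorem exists_generic_lift {A B : Type*} [CommRing A] [IsDomain A] [CommRing B] [IsDomain B]
    [Algebra ℂ A] [Algebra ℂ B] [Algebra A B] [IsScalarTower ℂ A B] [Algebra.FiniteType ℂ B]
    [Algebra.IsAlgebraic A B] (hinj : Function.Injective (algebraMap A B)) :
    ∃ g : A, g ≠ 0 ∧ ∀ ev : A →ₐ[ℂ] ℂ, ev g ≠ 0 →
      ∃ ψ : B →ₐ[ℂ] ℂ, ∀ a, ψ (algebraMap A B a) = ev a := by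
  obtain ⟨S, hS⟩ := (inferInstance : Algebra.FiniteType ℂ B)
  obtain ⟨g, hg0, hg⟩ := Algebra.IsAlgebraic.exists_integral_multiples A S
  refine ⟨g, hg0, fun ev hev => ?_⟩
  let C' := integralClosure A B
  -- every element of `B` becomes integral after multiplication by a power of `g`
  have hpow : ∀ b : B, ∃ N : ℕ, IsIntegral A (algebraMap A B g ^ N * b) := by
    intro b
    have hb : b ∈ Algebra.adjoin ℂ (S : Set B) := by rw [hS]; trivial
    have hgi : ∀ k, IsIntegral A (algebraMap A B g ^ k) := fun k => isIntegral_algebraMap.pow k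
    induction hb using Algebra.adjoin_induction with
    | mem x hx => exact ⟨1, by simpa [Algebra.smul_def] using hg x hx⟩
    | algebraMap r =>
      refine ⟨0, ?_⟩
      rw [pow_zero, one_mul, IsScalarTower.algebraMap_apply ℂ A B]
      exact isIntegral_algebraMap
    | add x y _ _ hx hy =>
      obtain ⟨N, hN⟩ := hx
      obtain ⟨M, hM⟩ := hy
      refine ⟨N + M, ?_⟩
      have := ((hgi M).mul hN).add ((hgi N).mul hM)
      convert this using 1; ring
    | mul x y _ _ hx hy =>
      obtain ⟨N, hN⟩ := hx
      obtain ⟨M, hM⟩ := hy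
      refine ⟨N + M, ?_⟩
      have := hN.mul hM
      convert this using 1; ring
  have hevs : Function.Surjective ev := fun z => ⟨algebraMap ℂ A z, by simp⟩
  have hmax : (RingHom.ker ev).IsMaximal := RingHom.ker_isMaximal_of_surjective ev hevs
  have hinjC : Function.Injective (algebraMap A C') := by
    intro x y hxy
    apply hinj
    exact congrArg (algebraMap C' B) hxy
  obtain ⟨Q, hQmax, hQ⟩ := Ideal.exists_ideal_over_maximal_of_isIntegral (S := C')
    (RingHom.ker ev) (by rw [(RingHom.injective_iff_ker_eq_bot _).mp hinjC]; exact bot_le)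
  -- the ideal generated in `B` by `Q` after inverting `g`
  let Q' : Ideal B :=
    { carrier := {b | ∃ N : ℕ, ∃ q ∈ Q, algebraMap A B g ^ N * b = (q : B)}
      zero_mem' := ⟨0, 0, Q.zero_mem, by simp⟩
      add_mem' := by
        rintro x y ⟨N, q, hq, hx⟩ ⟨M, r, hr, hy⟩
        refine ⟨N + M, algebraMap A C' g ^ M * q + algebraMap A C' g ^ N * r,
          Q.add_mem (Q.mul_mem_left _ hq) (Q.mul_mem_left _ hr), ?_⟩
        simp only [Subalgebra.coe_add, Subalgebra.coe_mul, Subalgebra.coe_pow, ← hx, ← hy]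
        change _ = algebraMap A B g ^ M * _ + algebraMap A B g ^ N * _
        ring
      smul_mem' := by
        rintro b x ⟨N, q, hq, hx⟩
        obtain ⟨M, hM⟩ := hpow b
        refine ⟨M + N, (⟨_, hM⟩ : C') * q, Q.mul_mem_left _ hq, ?_⟩
        simp only [Subalgebra.coe_mul, ← hx, smul_eq_mul]
        ring }
  have hQ'top : Q' ≠ ⊤ := by
    rw [Ne, Ideal.eq_top_iff_one]
    rintro ⟨N, q, hq, h1⟩
    have h2 : algebraMap A C' g ^ N = q := by
      apply Subtype.ext
      rw [← h1, mul_one]; rfl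
    have h3 : algebraMap A C' g ∈ Q := hQmax.isPrime.mem_of_pow_mem N (h2 ▸ hq)
    have h4 : g ∈ RingHom.ker ev := by rw [← hQ]; exact h3
    exact hev h4
  obtain ⟨ψ, hψ⟩ := exists_point_of_ne_top Q' hQ'top
  refine ⟨ψ, fun a => ?_⟩
  have h5 : a - algebraMap ℂ A (ev a) ∈ RingHom.ker ev := by
    rw [RingHom.mem_ker]; simp
  rw [← hQ] at h5
  have h6 := hψ (algebraMap A B (a - algebraMap ℂ A (ev a))) ⟨0, _, h5, by simp⟩
  rw [map_sub, map_sub, ← IsScalarTower.algebraMap_apply ℂ A B, AlgHom.commutes, sub_eq_zero] at h6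
  simpa using h6

/-- The ratio of two algebraic elements is algebraic; clearing denominators, the two elements
satisfy a homogeneous relation. -/
theorem ratio_relation {A D : Type*} [CommRing A] [IsDomain A] [CommRing D] [IsDomain D]
    [Algebra A D] {a b : D} (ha : IsAlgebraic A a)
    (hb : IsAlgebraic A b) (hb0 : b ≠ 0) :
    ∃ p : Polynomial A, p ≠ 0 ∧
      ∑ k ∈ Finset.range (p.natDegree + 1),
        algebraMap A D (p.coeff k) * (a ^ k * b ^ (p.natDegree - k)) = 0 := by
  let K := FractionRing D
  have hi : Function.Injective (algebraMap D K) := IsFractionRing.injective D K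
  have hb0' : algebraMap D K b ≠ 0 := fun h => hb0 (hi (by simpa using h))
  have h1 : IsAlgebraic A (algebraMap D K a * (algebraMap D K b)⁻¹) :=
    (ha.algebraMap).mul (hb.algebraMap).inv
  obtain ⟨p, hp, hp0⟩ := h1
  refine ⟨p, hp, hi ?_⟩
  rw [map_sum, map_zero]
  rw [Polynomial.aeval_eq_sum_range] at hp0
  have h2 := congrArg (fun z => z * algebraMap D K b ^ p.natDegree) hp0
  simp only [zero_mul, Finset.sum_mul] at h2
  rw [← h2]
  refine Finset.sum_congr rfl fun k hk => ?_
  have hk' : k ≤ p.natDegree := by simpa [Nat.lt_succ_iff] using hk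
  obtain ⟨m, hm⟩ := Nat.exists_eq_add_of_le hk'
  rw [hm, Nat.add_sub_cancel_left, Algebra.smul_def, IsScalarTower.algebraMap_apply A D K]
  simp only [map_mul, map_pow]
  rw [pow_add, mul_pow, inv_pow]
  have h3 := inv_mul_cancel₀ (pow_ne_zero k hb0')
  linear_combination (-(algebraMap D K (algebraMap A D (p.coeff k)) * algebraMap D K a ^ k *
    algebraMap D K b ^ m)) * h3

/-- The locus where a polynomial does not vanish, pulled back along an affine map, is open, and
dense as soon as it is nonempty: on the line from any point to `x₀` it is cofinite. -/
theorem generic_of_poly {E T : Type*} [TopologicalSpace E] [AddCommGroup E] [Module ℂ E]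
    [IsTopologicalAddGroup E] [ContinuousSMul ℂ E] (g : MvPolynomial T ℂ) (f : E → T → ℂ)
    (hcont : Continuous f) (haff : ∀ x y : E, ∀ t : ℂ, f (x + t • (y - x)) = f x + t • (f y - f x))
    (x₀ : E) (hx₀ : eval (f x₀) g ≠ 0) :
    IsOpen {x | eval (f x) g ≠ 0} ∧ Dense {x | eval (f x) g ≠ 0} := by
  constructor
  · exact isOpen_ne_fun ((MvPolynomial.continuous_eval g).comp hcont) continuous_const
  · intro x
    rw [mem_closure_iff_nhds]
    intro U hU
    -- the restriction of the polynomial to the line from `x` to `x₀`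
    let φ : MvPolynomial T ℂ →ₐ[ℂ] Polynomial ℂ :=
      aeval fun t => Polynomial.C (f x t) + Polynomial.X * Polynomial.C (f x₀ t - f x t)
    let q : Polynomial ℂ := φ g
    have hq : ∀ z : ℂ, q.eval z = eval (f (x + z • (x₀ - x))) g := by
      intro z
      have : (Polynomial.evalRingHom z).comp φ.toRingHom =
          eval (f (x + z • (x₀ - x))) := by
        ext <;> simp [φ, haff]
      exact congrArg (fun φ => φ g) this
    have hq0 : q ≠ 0 := by
      intro h
      have := hq 1
      simp [h] at this
      exact hx₀ this.symm
    have hc : Continuous fun z : ℂ => x + z • (x₀ - x) := by fun_prop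
    have hV : (fun z : ℂ => x + z • (x₀ - x)) ⁻¹' U ∈ nhds (0 : ℂ) :=
      hc.continuousAt.preimage_mem_nhds (by simpa using hU)
    have hinf : Set.Infinite ((fun z : ℂ => x + z • (x₀ - x)) ⁻¹' U) := infinite_of_mem_nhds 0 hV
    obtain ⟨z, hz, hzr⟩ := hinf.exists_notMem_finset q.roots.toFinset
    refine ⟨_, hz, ?_⟩
    simp only [Set.mem_ofPred_eq, ← hq]
    intro h
    exact hzr (by simp [hq0, h])

/-! ### Algebraic closure and transcendence bases -/

theorem encard_range_of_indep {A : Type*} [CommRing A] [Algebra ℂ A] {T : Type*} {τ : T → A} (hτ : AlgebraicIndependent ℂ τ) :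
    (Set.range τ).encard = ENat.card T := by
  rw [← Set.image_univ, hτ.injective.encard_image, Set.encard_univ]

section Matroid
variable {A : Type*} [CommRing A] [IsDomain A] [Algebra ℂ A] [FaithfulSMul ℂ A]

/-- The set of elements algebraic over the subalgebra generated by `S`. -/
def aclosure (S : Set A) : Set A := (AlgebraicIndependent.matroid ℂ A).closure S

theorem mem_aclosure {S : Set A} {a : A} : a ∈ aclosure S ↔ IsAlgebraic (Algebra.adjoin ℂ S) a := by
  rw [aclosure, AlgebraicIndependent.matroid_closure_eq]; rfl

theorem subset_aclosure (S : Set A) : S ⊆ aclosure S :=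
  (AlgebraicIndependent.matroid ℂ A).subset_closure S (Set.subset_univ _)

theorem aclosure_mono {S S' : Set A} (h : S ⊆ S') : aclosure S ⊆ aclosure S' :=
  (AlgebraicIndependent.matroid ℂ A).closure_subset_closure h

theorem aclosure_subset_of_subset {S S' : Set A} (h : S ⊆ aclosure S') :
    aclosure S ⊆ aclosure S' :=
  (AlgebraicIndependent.matroid ℂ A).closure_subset_closure_of_subset_closure h

theorem aclosure_add {S : Set A} {a b : A} (ha : a ∈ aclosure S) (hb : b ∈ aclosure S) :
    a + b ∈ aclosure S := by
  rw [mem_aclosure] at *; exact ha.add hb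

theorem aclosure_mul {S : Set A} {a b : A} (ha : a ∈ aclosure S) (hb : b ∈ aclosure S) :
    a * b ∈ aclosure S := by
  rw [mem_aclosure] at *; exact ha.mul hb

theorem aclosure_algebraMap {S : Set A} (z : ℂ) : algebraMap ℂ A z ∈ aclosure S := by
  rw [mem_aclosure, IsScalarTower.algebraMap_apply ℂ (Algebra.adjoin ℂ S) A]
  exact isAlgebraic_algebraMap _

theorem aclosure_neg {S : Set A} {a : A} (ha : a ∈ aclosure S) : -a ∈ aclosure S := by
  rw [mem_aclosure] at *; exact ha.neg

theorem aclosure_sum {S : Set A} {α : Type*} (s : Finset α) (f : α → A)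
    (h : ∀ i ∈ s, f i ∈ aclosure S) : ∑ i ∈ s, f i ∈ aclosure S := by
  classical
  induction s using Finset.induction_on with
  | empty => simpa using aclosure_algebraMap (S := S) 0
  | insert i s hi ih =>
    rw [Finset.sum_insert hi]
    exact aclosure_add (h _ (by simp)) (ih fun j hj => h j (by simp [hj]))

theorem indep_range_iff {T : Type*} {τ : T → A} (hτ : AlgebraicIndependent ℂ τ) :
    (AlgebraicIndependent.matroid ℂ A).Indep (Set.range τ) := by
  rw [AlgebraicIndependent.matroid_indep_iff]
  exact hτ.coe_range

/-- An independent family in the algebraic closure of `S` has at most as many members as `S`. -/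
theorem card_le_of_subset_aclosure {T : Type*} {τ : T → A} (hτ : AlgebraicIndependent ℂ τ)
    {S : Set A} (h : Set.range τ ⊆ aclosure S) : ENat.card T ≤ S.encard := by
  rw [← encard_range_of_indep hτ]
  refine ((indep_range_iff hτ).encard_le_eRk_of_subset h).trans ?_
  rw [aclosure, Matroid.eRk_closure_eq]
  exact Matroid.eRk_le_encard _ _

/-- An independent family in the algebraic closure of `S` with at least as many members as `S` is a
transcendence basis of it. -/
theorem subset_aclosure_of_card_le {T : Type*} [Finite T] {τ : T → A}
    (hτ : AlgebraicIndependent ℂ τ) {S : Set A} (h : Set.range τ ⊆ aclosure S)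
    (hS : S.encard ≤ ENat.card T) : aclosure S ⊆ aclosure (Set.range τ) := by
  have h1 := (Matroid.isRkFinite_of_finite (AlgebraicIndependent.matroid ℂ A)
    (Set.finite_range τ)).closure_eq_closure_of_subset_of_eRk_ge_eRk h (by
      rw [aclosure, Matroid.eRk_closure_eq, (indep_range_iff hτ).eRk_eq_encard,
        encard_range_of_indep hτ]
      exact (Matroid.eRk_le_encard _ _).trans hS)
  change aclosure _ = aclosure _ at h1
  rw [h1]
  exact subset_aclosure _

/-- Algebraicity over `τ`, expressed over the polynomial ring acting through evaluation at `τ`. -/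
theorem isAlgebraic_of_mem_aclosure {T : Type*} {τ : T → A}
    [Algebra (MvPolynomial T ℂ) A] (hal : ∀ p, algebraMap (MvPolynomial T ℂ) A p = aeval τ p)
    {a : A} (ha : a ∈ aclosure (Set.range τ)) : IsAlgebraic (MvPolynomial T ℂ) a := by
  rw [mem_aclosure, Algebra.adjoin_range_eq_range_aeval] at ha
  refine IsAlgebraic.of_ringHom_of_comp_eq (aeval τ : MvPolynomial T ℂ →ₐ[ℂ] A).rangeRestrict
    (RingHom.id A) (a := a) ha (AlgHom.rangeRestrict_surjective _) Function.injective_id ?_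
  refine RingHom.ext fun p => ?_
  exact (hal p).symm

/-- Algebraic dependence is preserved by injective homomorphisms. -/
theorem map_mem_aclosure {B : Type*} [CommRing B] [IsDomain B] [Algebra ℂ B] [FaithfulSMul ℂ B]
    (f : A →ₐ[ℂ] B) (hf : Function.Injective f) {S : Set A} {a : A} (ha : a ∈ aclosure S) :
    f a ∈ aclosure (f '' S) := by
  rw [mem_aclosure] at ha ⊢
  let f' : Algebra.adjoin ℂ S →ₐ[ℂ] Algebra.adjoin ℂ (f '' S) :=
    (f.comp (Algebra.adjoin ℂ S).val).codRestrict _ fun x => by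
      rw [← AlgHom.map_adjoin]; exact ⟨x, x.2, rfl⟩
  refine ha.ringHom_of_comp_eq f' f (fun x y h => ?_) (RingHom.ext fun x => rfl)
  exact Subtype.ext (hf (congrArg Subtype.val h))

end Matroid

theorem encard_incidence_le {R T : Type*} [CommRing R] (U : Set R) :
    (Set.range (X : T → MvPolynomial T R) ∪ (fun r => (C r : MvPolynomial T R)) '' U).encard ≤
      ENat.card T + U.encard := by
  refine (Set.encard_union_le _ _).trans (add_le_add ?_ (Set.encard_image_le _ _))
  rw [← Set.image_univ]
  exact (Set.encard_image_le _ _).trans (by simp)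

section Incidence
variable {R : Type*} [CommRing R] [IsDomain R] [Algebra ℂ R] [FaithfulSMul ℂ R]
  {T J : Type*}

/-- Polynomials are algebraic over the variables together with any set over which their
coefficients are algebraic. -/
theorem range_subset_aclosure (s : J → MvPolynomial T R) {U : Set R}
    (h : ∀ j t, coeff t (s j) ∈ aclosure U) :
    Set.range (Sum.elim (X : T → MvPolynomial T R) s) ⊆
      aclosure (Set.range (X : T → MvPolynomial T R) ∪
        (fun r => (C r : MvPolynomial T R)) '' U) := by
  set S0 := Set.range (X : T → MvPolynomial T R) ∪ (fun r => (C r : MvPolynomial T R)) '' U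
  have hX : ∀ t, (X t : MvPolynomial T R) ∈ aclosure S0 := fun t =>
    subset_aclosure _ (Or.inl ⟨t, rfl⟩)
  have hC : ∀ r ∈ aclosure U, (C r : MvPolynomial T R) ∈ aclosure S0 := by
    intro r hr
    have := map_mem_aclosure (Algebra.algHom ℂ R (MvPolynomial T R)) (C_injective T R) hr
    exact aclosure_mono Set.subset_union_right this
  rintro _ ⟨t | j, rfl⟩
  · exact hX t
  · rw [Sum.elim_inr, (s j).as_sum]
    refine aclosure_sum _ _ fun d hd => ?_
    rw [monomial_eq]
    refine aclosure_mul (hC _ (h j d)) ?_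
    have h1 : (1 : MvPolynomial T R) ∈ aclosure S0 := by
      simpa using aclosure_algebraMap (S := S0) 1
    refine Finset.prod_induction _ (· ∈ aclosure S0) (fun _ _ => aclosure_mul) h1 fun i _ => ?_
    have h2 := hX i
    rw [mem_aclosure] at h2 ⊢
    exact h2.pow _

/-- If the polynomials `s` are independent of each other and of the variables, there are at most as
many of them as the transcendence degree of their coefficients. -/
theorem card_le_of_incidence_indep [Finite T] (s : J → MvPolynomial T R) {U : Set R}
    (h : ∀ j t, coeff t (s j) ∈ aclosure U)
    (hind : AlgebraicIndependent ℂ (Sum.elim (X : T → MvPolynomial T R) s)) :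
    ENat.card J ≤ U.encard := by
  have h1 := (card_le_of_subset_aclosure hind (range_subset_aclosure s h)).trans
    (encard_incidence_le U)
  rw [ENat.card_sum] at h1
  exact (ENat.add_le_add_iff_left (by simpa using ‹Finite T›)).mp h1

/-- If there are as many independent polynomials as the transcendence degree of their coefficients,
then everything algebraic over the coefficients is algebraic over the variables and the
polynomials. -/
theorem C_mem_aclosure_of_incidence_indep [Finite T] [Finite J] (s : J → MvPolynomial T R) {U : Set R}
    (h : ∀ j t, coeff t (s j) ∈ aclosure U)
    (hind : AlgebraicIndependent ℂ (Sum.elim (X : T → MvPolynomial T R) s))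
    (hU : U.encard ≤ ENat.card J) {r : R} (hr : r ∈ aclosure U) :
    (C r : MvPolynomial T R) ∈ aclosure (Set.range (Sum.elim (X : T → MvPolynomial T R) s)) := by
  refine subset_aclosure_of_card_le hind (range_subset_aclosure s h) ?_ ?_
  · rw [ENat.card_sum]
    exact (encard_incidence_le U).trans (by gcongr)
  · have := map_mem_aclosure (Algebra.algHom ℂ R (MvPolynomial T R)) (C_injective T R) hr
    exact aclosure_mono Set.subset_union_right this

end Incidence

/-! ### Coordinate rings -/

noncomputable section Coord

variable {σ : Type*} (W : Set (σ → ℂ))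

/-- The coordinate ring of a set of points of affine space. -/
def CoordRing : Type _ := MvPolynomial σ ℂ ⧸ vanishingIdeal ℂ W

instance : CommRing (CoordRing W) := inferInstanceAs (CommRing (_ ⧸ vanishingIdeal ℂ W))

instance : Algebra ℂ (CoordRing W) := inferInstanceAs (Algebra ℂ (_ ⧸ vanishingIdeal ℂ W))

instance [h : (vanishingIdeal ℂ W).IsPrime] : IsDomain (CoordRing W) :=
  inferInstanceAs (IsDomain (_ ⧸ vanishingIdeal ℂ W))

instance [h : (vanishingIdeal ℂ W).IsPrime] : FaithfulSMul ℂ (CoordRing W) :=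
  (faithfulSMul_iff_algebraMap_injective _ _).mpr (algebraMap ℂ _).injective

instance {T : Type*} [h : (vanishingIdeal ℂ W).IsPrime] :
    FaithfulSMul ℂ (MvPolynomial T (CoordRing W)) :=
  (faithfulSMul_iff_algebraMap_injective _ _).mpr (algebraMap ℂ _).injective

/-- Restriction of polynomials to a set of points. -/
def coordMk : MvPolynomial σ ℂ →ₐ[ℂ] CoordRing W := Ideal.Quotient.mkₐ ℂ (vanishingIdeal ℂ W)

/-- The coordinate functions. -/
def coordFn (p : σ) : CoordRing W := coordMk W (X p)

theorem coordMk_surjective : Function.Surjective (coordMk W) := Ideal.Quotient.mk_surjective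

theorem coordMk_eq_zero (f : MvPolynomial σ ℂ) : coordMk W f = 0 ↔ f ∈ vanishingIdeal ℂ W :=
  Ideal.Quotient.eq_zero_iff_mem

theorem mem_vanishing_iff (f : MvPolynomial σ ℂ) :
    f ∈ vanishingIdeal ℂ W ↔ ∀ w ∈ W, eval w f = 0 := by
  rw [mem_vanishingIdeal_iff]; simp [aeval_eq_eval]

theorem aeval_coordFn (f : MvPolynomial σ ℂ) : aeval (coordFn W) f = coordMk W f := by
  have : aeval (coordFn W) = coordMk W := by
    ext p; simp [coordFn]
  rw [this]

instance [Finite σ] : Algebra.FiniteType ℂ (CoordRing W) :=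
  Algebra.FiniteType.of_surjective (coordMk W) (coordMk_surjective W)

variable {W}

/-- Evaluation of elements of the coordinate ring at a point killed by the vanishing ideal. -/
def coordEval (w : σ → ℂ) (hw : ∀ f ∈ vanishingIdeal ℂ W, eval w f = 0) : CoordRing W →ₐ[ℂ] ℂ :=
  Ideal.Quotient.liftₐ _ (aeval w) (fun f hf => by simpa [aeval_eq_eval] using hw f hf)

theorem coordEval_coordMk (w : σ → ℂ) (hw : ∀ f ∈ vanishingIdeal ℂ W, eval w f = 0)
    (f : MvPolynomial σ ℂ) : coordEval w hw (coordMk W f) = eval w f := by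
  rw [← aeval_eq_eval]; exact Ideal.Quotient.liftₐ_apply _ _ _ _

theorem coordEval_coordFn (w : σ → ℂ) (hw : ∀ f ∈ vanishingIdeal ℂ W, eval w f = 0) (p : σ) :
    coordEval w hw (coordFn W p) = w p := by
  rw [coordFn, coordEval_coordMk, eval_X]

theorem eval_eq_zero_of_mem {w : σ → ℂ} (hw : w ∈ W) (f : MvPolynomial σ ℂ)
    (hf : f ∈ vanishingIdeal ℂ W) : eval w f = 0 := (mem_vanishing_iff W f).mp hf w hw

end Coord

/-! ### The incidence variety of points and slices -/

section IncidenceVariety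

variable {ι : Type*} {n : ι → ℕ} (W : Set (((i : ι) × Fin (n i + 1)) → ℂ))
  (c : (i : ι) → Fin (n i + 1)) {J : Type*} (π : J → ι)

/-- Indices of the coefficients of a family of linear forms, the `j`-th of which is a form in the
variables of the factor `π j`. -/
abbrev CoefIdx (n : ι → ℕ) (π : J → ι) : Type _ := (j : J) × Fin (n (π j) + 1)

/-- Indices of the coefficients other than those of the chart coordinates. -/
abbrev FreeIdx (c : (i : ι) → Fin (n i + 1)) (π : J → ι) : Type _ :=
  {t : CoefIdx n π // t.2 ≠ c (π t.1)}

/-- The coordinate ring of the incidence variety of pairs of a point of `W` and a family of forms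
vanishing there. As the chart coordinates are `1` on `W`, the coefficients of the chart coordinates
are determined by the point and the other coefficients, which are free. -/
abbrev IncRing : Type _ := MvPolynomial (FreeIdx c π) (CoordRing W)

/-- The coefficient of the chart coordinate in the `j`-th form on the incidence variety. -/
noncomputable def chartCoef (j : J) : IncRing W c π :=
  - ∑ b : {b : Fin (n (π j) + 1) // b ≠ c (π j)},
    X ⟨⟨j, b.1⟩, b.2⟩ * C (coordFn W ⟨π j, b.1⟩)

/-- The coefficients of the forms, as functions on the incidence variety. -/
noncomputable def coefFn (t : CoefIdx n π) : IncRing W c π :=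
  if h : t.2 = c (π t.1) then chartCoef W c π t.1 else X ⟨t, h⟩

/-- Splitting off the coefficients of the chart coordinates. -/
def splitIdx : CoefIdx n π ≃ FreeIdx c π ⊕ J where
  toFun t := if h : t.2 = c (π t.1) then Sum.inr t.1 else Sum.inl ⟨t, h⟩
  invFun := Sum.elim (fun t => t.1) (fun j => ⟨j, c (π j)⟩)
  left_inv := by
    rintro ⟨j, a⟩
    by_cases h : a = c (π j)
    · simp [h]
    · simp [h]
  right_inv := by
    rintro (⟨⟨j, a⟩, h⟩ | j)
    · simp at h; simp [h]
    · simp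

theorem coefFn_eq : coefFn W c π = Sum.elim X (chartCoef W c π) ∘ splitIdx c π := by
  funext t
  by_cases h : t.2 = c (π t.1) <;> simp [coefFn, splitIdx, h]

theorem range_coefFn : Set.range (coefFn W c π) = Set.range (Sum.elim X (chartCoef W c π)) := by
  rw [coefFn_eq, (splitIdx c π).surjective.range_comp]

variable {W c π}

theorem indep_coefFn_iff : AlgebraicIndependent ℂ (coefFn W c π) ↔
    AlgebraicIndependent ℂ (Sum.elim X (chartCoef W c π)) := by
  rw [coefFn_eq]
  exact algebraicIndependent_equiv (splitIdx c π)

theorem coordFn_chart (hc : ∀ w ∈ W, ∀ i, w ⟨i, c i⟩ = 1) (i : ι) : coordFn W ⟨i, c i⟩ = 1 := by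
  have : coordMk W (X ⟨i, c i⟩ - 1) = 0 := by
    rw [coordMk_eq_zero, mem_vanishing_iff]
    intro w hw
    simp [hc w hw i]
  rwa [map_sub, map_one, sub_eq_zero] at this

/-- Evaluation at a point of the incidence variety. -/
theorem exists_incEval (w : ((i : ι) × Fin (n i + 1)) → ℂ) (hw : w ∈ W)
    (hc : ∀ w ∈ W, ∀ i, w ⟨i, c i⟩ = 1)
    (L : CoefIdx n π → ℂ) (hL : ∀ j, ∑ a, L ⟨j, a⟩ * w ⟨π j, a⟩ = 0) :
    ∃ ψ : IncRing W c π →+* ℂ, (∀ t, ψ (coefFn W c π t) = L t) ∧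
      (∀ p, ψ (C (coordFn W p)) = w p) ∧ ∀ z, ψ (algebraMap ℂ _ z) = z := by
  classical
  let ev := coordEval w (eval_eq_zero_of_mem hw)
  let ψ : IncRing W c π →+* ℂ := eval₂Hom ev.toRingHom (fun t => L t.1)
  have hC : ∀ p, ψ (C (coordFn W p)) = w p := fun p => by
    simp [ψ, ev, coordEval_coordFn]
  refine ⟨ψ, ?_, hC, ?_⟩
  · rintro ⟨j, a⟩
    by_cases h : a = c (π j)
    · subst h
      have h1 := hL j
      rw [← Finset.add_sum_erase _ _ (Finset.mem_univ (c (π j))), hc w hw, mul_one] at h1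
      rw [coefFn, dif_pos rfl, chartCoef, map_neg, map_sum]
      simp only [map_mul, hC]
      have h2 : ∑ b : {b : Fin (n (π j) + 1) // b ≠ c (π j)}, L ⟨j, b.1⟩ * w ⟨π j, b.1⟩ =
          ∑ b ∈ Finset.univ.erase (c (π j)), L ⟨j, b⟩ * w ⟨π j, b⟩ := by
        rw [← Finset.sum_subtype (Finset.univ.erase (c (π j))) (p := fun b => b ≠ c (π j))
          (by simp) (fun b => L ⟨j, b⟩ * w ⟨π j, b⟩)]
      have h3 : ∀ b : {b : Fin (n (π j) + 1) // b ≠ c (π j)},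
          ψ (X ⟨⟨j, b.1⟩, b.2⟩) = L ⟨j, b.1⟩ := by
        intro b; simp [ψ]
      simp only [h3]
      rw [h2]
      linear_combination -h1
    · rw [coefFn, dif_neg h]
      simp [ψ]
  · intro z
    rw [IsScalarTower.algebraMap_apply ℂ (CoordRing W) (IncRing W c π), algebraMap_eq]
    simp [ψ]

theorem eval_eq_incEval {L : CoefIdx n π → ℂ} (ψ : IncRing W c π →+* ℂ)
    (h1 : ∀ t, ψ (coefFn W c π t) = L t) (h2 : ∀ z, ψ (algebraMap ℂ _ z) = z)
    (Φ : MvPolynomial (CoefIdx n π) ℂ) : ψ (aeval (coefFn W c π) Φ) = eval L Φ := by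
  have : ψ.comp (aeval (coefFn W c π)).toRingHom = eval L := by
    ext t
    · simpa using h2 _
    · simp [h1]
  exact congrArg (fun φ => φ Φ) this

/-- An algebraically independent family of coordinates, one for each form, makes all coefficients
of the forms independent on the incidence variety. -/
theorem indep_coefFn (hc : ∀ w ∈ W, ∀ i, w ⟨i, c i⟩ = 1) (b : (j : J) → Fin (n (π j) + 1))
    (hb : AlgebraicIndependent ℂ fun j => coordFn W ⟨π j, b j⟩) :
    AlgebraicIndependent ℂ (coefFn W c π) := by
  classical
  rw [indep_coefFn_iff]
  have hbc : ∀ j, b j ≠ c (π j) := by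
    intro j h
    have := hb.transcendental j
    rw [h, coordFn_chart hc] at this
    exact this isAlgebraic_one
  -- specialise the `j`-th form to `r - x_{b j}` in the chart, where `r` is its chart coefficient;
  -- vanishing at the point makes `r` equal to the coordinate `b j`
  refine indep_sum_of_eval _ (fun t => if t.1.2 = b t.1.1 then -1 else 0) ?_
  convert hb using 2 with j
  rw [chartCoef, map_neg, map_sum, Finset.sum_eq_single ⟨b j, hbc j⟩]
  · simp
  · rintro ⟨a, ha⟩ - hne
    have : a ≠ b j := fun h => hne (Subtype.ext h)
    simp [this]
  · simp

variable [hW : (vanishingIdeal ℂ W).IsPrime]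

theorem coeff_chartCoef_mem {U : Set ((i : ι) × Fin (n i + 1))} (j : J)
    (h : ∀ a, coordFn W ⟨π j, a⟩ ∈ aclosure (coordFn W '' U)) (t) :
    coeff t (chartCoef W c π j) ∈ aclosure (coordFn W '' U) := by
  classical
  rw [chartCoef, coeff_neg, coeff_sum]
  refine aclosure_neg (aclosure_sum _ _ fun b _ => ?_)
  rw [mul_comm, coeff_C_mul, coeff_X]
  refine aclosure_mul (h _) ?_
  split_ifs
  · simpa using aclosure_algebraMap (A := CoordRing W) 1
  · simpa using aclosure_algebraMap (A := CoordRing W) 0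

/-- If there are more forms than the transcendence degree of the coordinates in their factors, then
the coefficients of forms with a common zero on `W` satisfy a fixed polynomial relation. -/
theorem exists_incidence_relation [Finite J] (hc : ∀ w ∈ W, ∀ i, w ⟨i, c i⟩ = 1)
    {U : Set ((i : ι) × Fin (n i + 1))}
    (h : ∀ j a, coordFn W ⟨π j, a⟩ ∈ aclosure (coordFn W '' U)) (hU : U.encard < ENat.card J) :
    ∃ Φ : MvPolynomial (CoefIdx n π) ℂ, Φ ≠ 0 ∧ ∀ w ∈ W, ∀ L : CoefIdx n π → ℂ,
      (∀ j, ∑ a, L ⟨j, a⟩ * w ⟨π j, a⟩ = 0) → eval L Φ = 0 := by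
  have hnot : ¬ AlgebraicIndependent ℂ (coefFn W c π) := by
    intro hind
    rw [indep_coefFn_iff] at hind
    have := card_le_of_incidence_indep _ (fun j t => coeff_chartCoef_mem j (h j) t) hind
    exact absurd (this.trans (Set.encard_image_le _ _)) (not_le.mpr hU)
  rw [algebraicIndependent_iff] at hnot
  push Not at hnot
  obtain ⟨Φ, hΦ, hne⟩ := hnot
  refine ⟨Φ, hne, fun w hw L hL => ?_⟩
  obtain ⟨ψ, h1, -, h3⟩ := exists_incEval w hw hc L hL
  rw [← eval_eq_incEval ψ h1 h3, hΦ, map_zero]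

/-- If there are as many forms as the transcendence degree, and their coefficients are independent
on the incidence variety, then the ratio of two coordinates of a point of `W` on a slice satisfies
a fixed equation whose coefficients are polynomials in the coefficients of the slice. -/
theorem exists_ratio_relation [Finite J] (hc : ∀ w ∈ W, ∀ i, w ⟨i, c i⟩ = 1)
    {U : Set ((i : ι) × Fin (n i + 1))}
    (h : ∀ j a, coordFn W ⟨π j, a⟩ ∈ aclosure (coordFn W '' U)) (hU : U.encard ≤ ENat.card J)
    (hind : AlgebraicIndependent ℂ (coefFn W c π)) {p q : (i : ι) × Fin (n i + 1)}
    (hp : coordFn W p ∈ aclosure (coordFn W '' U)) (hq : coordFn W q ∈ aclosure (coordFn W '' U))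
    (hq0 : coordFn W q ≠ 0) :
    ∃ P : Polynomial (MvPolynomial (CoefIdx n π) ℂ), P ≠ 0 ∧
      ∀ w ∈ W, ∀ L : CoefIdx n π → ℂ, (∀ j, ∑ a, L ⟨j, a⟩ * w ⟨π j, a⟩ = 0) →
        ∑ k ∈ Finset.range (P.natDegree + 1),
          eval L (P.coeff k) * (w p ^ k * w q ^ (P.natDegree - k)) = 0 := by
  let : Algebra (MvPolynomial (CoefIdx n π) ℂ) (IncRing W c π) :=
    (aeval (coefFn W c π)).toRingHom.toAlgebra
  have hC : ∀ {p}, coordFn W p ∈ aclosure (coordFn W '' U) →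
      IsAlgebraic (MvPolynomial (CoefIdx n π) ℂ) (C (coordFn W p) : IncRing W c π) := by
    intro p hp
    refine isAlgebraic_of_mem_aclosure (τ := coefFn W c π) (fun _ => rfl) ?_
    rw [range_coefFn]
    rw [indep_coefFn_iff] at hind
    exact C_mem_aclosure_of_incidence_indep _ (fun j t => coeff_chartCoef_mem j (h j) t) hind
      ((Set.encard_image_le _ _).trans hU) hp
  obtain ⟨P, hP, hrel⟩ := ratio_relation (hC hp) (hC hq)
    (fun h0 => hq0 (C_injective _ _ (by rw [h0, map_zero])))
  refine ⟨P, hP, fun w hw L hL => ?_⟩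
  obtain ⟨ψ, h1, h2, h3⟩ := exists_incEval w hw hc L hL
  have := congrArg ψ hrel
  rw [map_sum, map_zero] at this
  rw [← this]
  refine Finset.sum_congr rfl fun k _ => ?_
  rw [map_mul, map_mul, map_pow, map_pow, h2, h2]
  congr 1
  exact (eval_eq_incEval ψ h1 h3 _).symm

/-- If there are as many forms as the dimension, and their coefficients are independent on the
incidence variety, then the incidence variety dominates the space of slices, so a general slice
contains a point satisfying the equations of `W`. -/
theorem exists_slice_point [Finite J] [Finite ι] (hc : ∀ w ∈ W, ∀ i, w ⟨i, c i⟩ = 1)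
    {U : Set ((i : ι) × Fin (n i + 1))}
    (h : ∀ p, coordFn W p ∈ aclosure (coordFn W '' U)) (hU : U.encard ≤ ENat.card J)
    (hind : AlgebraicIndependent ℂ (coefFn W c π)) :
    ∃ g : MvPolynomial (CoefIdx n π) ℂ, g ≠ 0 ∧ ∀ L : CoefIdx n π → ℂ, eval L g ≠ 0 →
      ∃ w : ((i : ι) × Fin (n i + 1)) → ℂ, (∀ f ∈ vanishingIdeal ℂ W, eval w f = 0) ∧
        (∀ i, w ⟨i, c i⟩ = 1) ∧ ∀ j, ∑ a, L ⟨j, a⟩ * w ⟨π j, a⟩ = 0 := by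
  let : Algebra (MvPolynomial (CoefIdx n π) ℂ) (IncRing W c π) :=
    (aeval (coefFn W c π)).toRingHom.toAlgebra
  have : IsScalarTower ℂ (MvPolynomial (CoefIdx n π) ℂ) (IncRing W c π) :=
    IsScalarTower.of_algebraMap_eq fun z => ((aeval (coefFn W c π)).commutes z).symm
  have : Algebra.FiniteType ℂ (IncRing W c π) := Algebra.FiniteType.trans (S := CoordRing W)
    inferInstance inferInstance
  have hcl : ∀ d : IncRing W c π, d ∈ aclosure (Set.range (coefFn W c π)) := by
    have hR : ∀ r : CoordRing W, r ∈ aclosure (coordFn W '' U) := by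
      intro r
      obtain ⟨f, rfl⟩ := coordMk_surjective W r
      induction f using MvPolynomial.induction_on with
      | C z =>
        rw [← algebraMap_eq, AlgHom.commutes]
        exact aclosure_algebraMap z
      | add f g hf hg => rw [map_add]; exact aclosure_add hf hg
      | mul_X f p hf => rw [map_mul]; exact aclosure_mul hf (h p)
    intro d
    induction d using MvPolynomial.induction_on with
    | C r =>
      rw [range_coefFn]
      rw [indep_coefFn_iff] at hind
      exact C_mem_aclosure_of_incidence_indep _
        (fun j t => coeff_chartCoef_mem j (fun a => h _) t) hind
        ((Set.encard_image_le _ _).trans hU) (hR r)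
    | add f g hf hg => exact aclosure_add hf hg
    | mul_X f t hf =>
      refine aclosure_mul hf (subset_aclosure _ ⟨t.1, ?_⟩)
      rw [coefFn, dif_neg t.2]
  have : Algebra.IsAlgebraic (MvPolynomial (CoefIdx n π) ℂ) (IncRing W c π) :=
    ⟨fun d => isAlgebraic_of_mem_aclosure (τ := coefFn W c π) (fun _ => rfl) (hcl d)⟩
  obtain ⟨g, hg0, hg⟩ := exists_generic_lift (A := MvPolynomial (CoefIdx n π) ℂ)
    (B := IncRing W c π) hind
  refine ⟨g, hg0, fun L hL => ?_⟩
  obtain ⟨ψ, hψ⟩ := hg (aeval L) (by rwa [aeval_eq_eval])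
  have hψt : ∀ t, ψ (coefFn W c π t) = L t := by
    intro t
    have := hψ (X t)
    rw [show algebraMap (MvPolynomial (CoefIdx n π) ℂ) (IncRing W c π) (X t) = coefFn W c π t from
      aeval_X _ _] at this
    rw [this, aeval_X]
  refine ⟨fun p => ψ (C (coordFn W p)), ?_, ?_, ?_⟩
  · intro f hf
    have h1 : eval (fun p => ψ (C (coordFn W p))) f =
        ψ (C (coordMk W f)) := by
      let φ : CoordRing W →ₐ[ℂ] ℂ := ψ.comp (Algebra.algHom ℂ (CoordRing W) (IncRing W c π))
      have h2 : (aeval (fun p => ψ (C (coordFn W p)))) =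
          φ.comp (coordMk W) := by
        ext p; simp [φ, coordFn]; rfl
      rw [← aeval_eq_eval]
      exact congrArg (fun φ => φ f) h2
    rw [h1, (coordMk_eq_zero W f).mpr hf, map_zero, map_zero]
  · intro i
    change ψ (C (coordFn W _)) = 1
    rw [coordFn_chart hc, map_one, map_one]
  · intro j
    classical
    have h1 := hψt ⟨j, c (π j)⟩
    rw [coefFn, dif_pos rfl, chartCoef, map_neg, map_sum] at h1
    have h3 : ∀ b : {b : Fin (n (π j) + 1) // b ≠ c (π j)},
        ψ (X ⟨⟨j, b.1⟩, b.2⟩) = L ⟨j, b.1⟩ := by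
      intro b
      have := hψt ⟨j, b.1⟩
      rwa [coefFn, dif_neg b.2] at this
    simp only [map_mul, h3] at h1
    have h2 : ∑ b : {b : Fin (n (π j) + 1) // b ≠ c (π j)},
        L ⟨j, b.1⟩ * ψ (C (coordFn W ⟨π j, b.1⟩)) =
        ∑ b ∈ Finset.univ.erase (c (π j)), L ⟨j, b⟩ * ψ (C (coordFn W ⟨π j, b⟩)) := by
      rw [← Finset.sum_subtype (Finset.univ.erase (c (π j))) (p := fun b => b ≠ c (π j))
        (by simp) (fun b => L ⟨j, b⟩ * ψ (C (coordFn W ⟨π j, b⟩)))]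
    rw [h2] at h1
    rw [← Finset.add_sum_erase _ _ (Finset.mem_univ (c (π j)))]
    simp only [coordFn_chart hc, map_one, mul_one]
    linear_combination -h1

end IncidenceVariety

/-! ### Multicones and charts -/

section Cone

variable {ι : Type*} {n : ι → ℕ}

/-- Indices of the multihomogeneous coordinates. -/
abbrev HIdx (n : ι → ℕ) : Type _ := (i : ι) × Fin (n i + 1)

/-- `v` is a system of multihomogeneous coordinates of the point `x`. -/
def IsRep (v : HIdx n → ℂ) (x : PStack n) : Prop :=
  ∀ i, ∃ hv : (fun a => v ⟨i, a⟩) ≠ 0, Projectivization.mk ℂ (fun a => v ⟨i, a⟩) hv = x i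

/-- The multicone over `Z`. -/
def cone (Z : Set (PStack n)) : Set (HIdx n → ℂ) := {v | ∃ x ∈ Z, IsRep v x}

/-- Rescaling of multihomogeneous coordinates. -/
def scaleVec (lam : ι → ℂ) (v : HIdx n → ℂ) : HIdx n → ℂ := fun p => lam p.1 * v p

/-- The points of `Z` in the affine chart `v ⟨i, c i⟩ = 1`. -/
def chartSet (Z : Set (PStack n)) (c : (i : ι) → Fin (n i + 1)) : Set (HIdx n → ℂ) :=
  {w | w ∈ cone Z ∧ ∀ i, w ⟨i, c i⟩ = 1}

theorem polyVanish_iff (f : MvPolynomial (HIdx n) ℂ) (x : PStack n) :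
    PolyVanish f x ↔ ∀ v, IsRep v x → eval v f = 0 := by
  constructor
  · intro h v hv
    exact h (fun i a => v ⟨i, a⟩) hv
  · intro h v hv
    exact h (fun p => v p.1 p.2) hv

theorem exists_rep (x : PStack n) : ∃ v, IsRep v x :=
  ⟨fun p => (x p.1).rep p.2, fun i => ⟨(x i).rep_nonzero, (x i).mk_rep⟩⟩

theorem exists_isRep {v : HIdx n → ℂ} (h : ∀ i, ∃ a, v ⟨i, a⟩ ≠ 0) : ∃ x, IsRep v x := by
  have h' : ∀ i, (fun a => v ⟨i, a⟩) ≠ 0 := fun i h0 => by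
    obtain ⟨a, ha⟩ := h i
    exact ha (congrFun h0 a)
  exact ⟨fun i => Projectivization.mk ℂ _ (h' i), fun i => ⟨h' i, rfl⟩⟩

theorem IsRep.exists_ne {v : HIdx n → ℂ} {x : PStack n} (h : IsRep v x) (i : ι) :
    ∃ a, v ⟨i, a⟩ ≠ 0 := by
  obtain ⟨h0, -⟩ := h i
  exact Function.ne_iff.mp h0

theorem IsRep.scale {v : HIdx n → ℂ} {x : PStack n} (h : IsRep v x) {lam : ι → ℂ}
    (hlam : ∀ i, lam i ≠ 0) : IsRep (scaleVec lam v) x := by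
  intro i
  obtain ⟨h0, h1⟩ := h i
  refine ⟨fun h2 => h0 ?_, ?_⟩
  · funext a
    have := congrFun h2 a
    simpa [scaleVec, hlam i] using this
  · rw [← h1, Projectivization.mk_eq_mk_iff']
    exact ⟨lam i, rfl⟩

theorem IsRep.eq_scale {v v' : HIdx n → ℂ} {x : PStack n} (h : IsRep v x) (h' : IsRep v' x) :
    ∃ lam : ι → ℂ, (∀ i, lam i ≠ 0) ∧ v' = scaleVec lam v := by
  have : ∀ i, ∃ l : ℂ, l ≠ 0 ∧ ∀ a, v' ⟨i, a⟩ = l * v ⟨i, a⟩ := by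
    intro i
    obtain ⟨h0, h1⟩ := h i
    obtain ⟨h0', h1'⟩ := h' i
    rw [← h1, Projectivization.mk_eq_mk_iff'] at h1'
    obtain ⟨l, hl⟩ := h1'
    refine ⟨l, ?_, fun a => (congrFun hl a).symm⟩
    rintro rfl
    exact h0' (by rw [← hl, zero_smul])
  choose lam h1 h2 using this
  exact ⟨lam, h1, funext fun p => h2 p.1 p.2⟩

theorem IsRep.unique {v : HIdx n → ℂ} {x x' : PStack n} (h : IsRep v x) (h' : IsRep v x') :
    x = x' := by
  funext i
  obtain ⟨h0, h1⟩ := h i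
  obtain ⟨h0', h1'⟩ := h' i
  rw [← h1, ← h1']

theorem cone_scale {Z : Set (PStack n)} {v : HIdx n → ℂ} (hv : v ∈ cone Z) {lam : ι → ℂ}
    (hlam : ∀ i, lam i ≠ 0) : scaleVec lam v ∈ cone Z := by
  obtain ⟨x, hx, h⟩ := hv
  exact ⟨x, hx, h.scale hlam⟩

theorem mem_of_rep_mem_cone {Z : Set (PStack n)} {v : HIdx n → ℂ} {x : PStack n}
    (hv : v ∈ cone Z) (h : IsRep v x) : x ∈ Z := by
  obtain ⟨x', hx', h'⟩ := hv
  rwa [h.unique h']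

theorem normalize_mem_chartSet {Z : Set (PStack n)} {c : (i : ι) → Fin (n i + 1)}
    {v : HIdx n → ℂ} (hv : v ∈ cone Z) (hc : ∀ i, v ⟨i, c i⟩ ≠ 0) :
    scaleVec (fun i => (v ⟨i, c i⟩)⁻¹) v ∈ chartSet Z c :=
  ⟨cone_scale hv fun i => inv_ne_zero (hc i), fun i => inv_mul_cancel₀ (hc i)⟩

theorem mem_sliceZeros_iff {e : ι → ℕ} (L : SliceParams n e) {v : HIdx n → ℂ} {x : PStack n}
    (h : IsRep v x) : x ∈ SliceZeros L ↔ ∀ i j, ∑ a, L i j a * v ⟨i, a⟩ = 0 := by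
  constructor
  · intro hx i j
    obtain ⟨h0, h1⟩ := h i
    exact hx i j _ h0 h1
  · intro hL i j w hw hwx
    obtain ⟨h0, h1⟩ := h i
    rw [← h1, Projectivization.mk_eq_mk_iff'] at hwx
    obtain ⟨l, hl⟩ := hwx
    have := congrArg (l * ·) (hL i j)
    simp only [mul_zero, Finset.mul_sum] at this
    rw [← this]
    refine Finset.sum_congr rfl fun a _ => ?_
    rw [← hl]
    simp only [Pi.smul_apply, smul_eq_mul]
    ring

theorem cone_nonempty {Z : Set (PStack n)} (hZ : IsIrredVariety Z) : (cone Z).Nonempty := by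
  obtain ⟨x, hx⟩ := hZ.2.1
  obtain ⟨v, hv⟩ := exists_rep x
  exact ⟨v, x, hx, hv⟩

/-- The part of an algebraic set in a chart is cut out by its vanishing ideal. -/
theorem mem_cone_of_vanishing {Z : Set (PStack n)} (hZ : IsAlgebraicSet Z)
    {c : (i : ι) → Fin (n i + 1)} {w : HIdx n → ℂ} (hw : ∀ i, w ⟨i, c i⟩ = 1)
    (h : ∀ f ∈ vanishingIdeal ℂ (chartSet Z c), eval w f = 0) : w ∈ cone Z := by
  obtain ⟨x, hx⟩ := exists_isRep (v := w) fun i => ⟨c i, by simp [hw]⟩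
  refine ⟨x, ?_, hx⟩
  obtain ⟨F, hF⟩ := hZ
  rw [hF]
  intro f hf
  rw [polyVanish_iff]
  intro v' hv'
  obtain ⟨lam, hlam, rfl⟩ := hx.eq_scale hv'
  have hr : ∀ w, eval w (bind₁ (fun p => C (lam p.1) * X p) f) = eval (scaleVec lam w) f := by
    intro w
    rw [← aeval_eq_eval, aeval_bind₁, ← aeval_eq_eval]
    congr 2
    funext p
    simp [scaleVec]
  rw [← hr]
  refine h _ ((mem_vanishing_iff _ _).mpr fun w' hw' => ?_)
  rw [hr]
  obtain ⟨x', hx', hr'⟩ := hw'.1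
  rw [hF] at hx'
  exact (polyVanish_iff f x').mp (hx' f hf) _ (hr'.scale hlam)

variable [Fintype ι]

/-- The multicone over an irreducible variety is irreducible. -/
theorem cone_prime {Z : Set (PStack n)} (hZ : IsIrredVariety Z) (f g : MvPolynomial (HIdx n) ℂ)
    (h : ∀ v ∈ cone Z, eval v f * eval v g = 0) :
    (∀ v ∈ cone Z, eval v f = 0) ∨ (∀ v ∈ cone Z, eval v g = 0) := by
  have key : ∀ f : MvPolynomial (HIdx n) ℂ, IsAlgebraicSet {x : PStack n | PolyVanish f x} :=
    fun f => ⟨{f}, by simp⟩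
  have hcov : Z ⊆ {x | PolyVanish f x} ∪ {x | PolyVanish g x} := by
    intro x hx
    by_contra hcon
    rw [Set.mem_union, not_or] at hcon
    obtain ⟨h1, h2⟩ := hcon
    rw [Set.mem_ofPred_eq, polyVanish_iff] at h1 h2
    push Not at h1 h2
    obtain ⟨v, hv, hvf⟩ := h1
    obtain ⟨v', hv', hvg⟩ := h2
    obtain ⟨lam, hlam, rfl⟩ := hv.eq_scale hv'
    -- restrict to the torus orbit of `v`
    let r : MvPolynomial (HIdx n) ℂ → MvPolynomial ι ℂ := fun f =>
      bind₁ (fun p => X p.1 * C (v p)) f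
    have hr : ∀ f l, eval l (r f) = eval (scaleVec l v) f := by
      intro f l
      simp only [r]
      rw [← aeval_eq_eval, aeval_bind₁, ← aeval_eq_eval]
      congr 2
      funext p
      simp [scaleVec]
    have h0 : r f * r g * ∏ i, X i = 0 := by
      refine MvPolynomial.funext fun l => ?_
      rw [map_mul, map_mul, map_prod, map_zero, hr, hr]
      by_cases hl : ∀ i, l i ≠ 0
      · rw [h _ ⟨x, hx, hv.scale hl⟩, zero_mul]
      · push Not at hl
        obtain ⟨i, hi⟩ := hl
        rw [Finset.prod_eq_zero (Finset.mem_univ i) (by simpa using hi), mul_zero]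
    rcases mul_eq_zero.mp h0 with h0 | h0
    · rcases mul_eq_zero.mp h0 with h0 | h0
      · apply hvf
        have := hr f (fun _ => 1)
        rw [h0, map_zero] at this
        rw [this]
        congr 2
        funext p
        simp [scaleVec]
      · apply hvg
        rw [← hr, h0, map_zero]
    · rw [Finset.prod_eq_zero_iff] at h0
      obtain ⟨i, -, hi⟩ := h0
      exact X_ne_zero i hi
  have h3 : ∀ f : MvPolynomial (HIdx n) ℂ, Z ⊆ {x | PolyVanish f x} →
      ∀ v ∈ cone Z, eval v f = 0 := by
    rintro f hf v ⟨x, hx, hv⟩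
    exact (polyVanish_iff f x).mp (hf hx) v hv
  exact (hZ.2.2 _ _ (key f) (key g) hcov).imp (h3 f) (h3 g)

/-- A chart meeting an irreducible variety is dense in it. -/
theorem chart_dense {Z : Set (PStack n)} (hZ : IsIrredVariety Z) {c : (i : ι) → Fin (n i + 1)}
    (hc : ∃ v ∈ cone Z, ∀ i, v ⟨i, c i⟩ ≠ 0) (f : MvPolynomial (HIdx n) ℂ)
    (h : ∀ v ∈ cone Z, (∀ i, v ⟨i, c i⟩ ≠ 0) → eval v f = 0) : ∀ v ∈ cone Z, eval v f = 0 := by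
  refine (cone_prime hZ f (∏ i, X ⟨i, c i⟩) fun v hv => ?_).resolve_right ?_
  · by_cases h1 : ∀ i, v ⟨i, c i⟩ ≠ 0
    · rw [h v hv h1, zero_mul]
    · push Not at h1
      obtain ⟨i, hi⟩ := h1
      rw [map_prod, Finset.prod_eq_zero (Finset.mem_univ i) (by simpa using hi), mul_zero]
  · obtain ⟨v, hv, hne⟩ := hc
    intro h0
    have := h0 v hv
    rw [map_prod, Finset.prod_eq_zero_iff] at this
    obtain ⟨i, -, hi⟩ := this
    exact hne i (by simpa using hi)

/-- Multihomogenization of a polynomial on a chart, up to a power of the chart coordinates. -/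
theorem exists_homogenization (c : (i : ι) → Fin (n i + 1)) (f : MvPolynomial (HIdx n) ℂ) :
    ∃ (F : MvPolynomial (HIdx n) ℂ) (N : ℕ), ∀ v : HIdx n → ℂ, (∀ i, v ⟨i, c i⟩ ≠ 0) →
      eval v F = (∏ i, v ⟨i, c i⟩) ^ N * eval (scaleVec (fun i => (v ⟨i, c i⟩)⁻¹) v) f := by
  classical
  induction f using MvPolynomial.induction_on with
  | C z => exact ⟨C z, 0, fun v _ => by simp⟩
  | add f g hf hg =>
    obtain ⟨F, N, hF⟩ := hf
    obtain ⟨G, M, hG⟩ := hg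
    refine ⟨(∏ i, X ⟨i, c i⟩) ^ M * F + (∏ i, X ⟨i, c i⟩) ^ N * G, N + M, fun v hv => ?_⟩
    simp only [map_add, map_mul, map_pow, map_prod, eval_X, hF v hv, hG v hv]
    ring
  | mul_X f p hf =>
    obtain ⟨F, N, hF⟩ := hf
    refine ⟨F * (X p * ∏ i ∈ Finset.univ.erase p.1, X ⟨i, c i⟩), N + 1, fun v hv => ?_⟩
    simp only [map_mul, map_prod, eval_X, hF v hv, scaleVec, pow_succ]
    rw [← Finset.mul_prod_erase Finset.univ (fun i => v ⟨i, c i⟩) (Finset.mem_univ p.1)]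
    have := hv p.1
    field_simp

/-- The part of an irreducible variety in a chart meeting it is irreducible. -/
theorem chartSet_prime {Z : Set (PStack n)} (hZ : IsIrredVariety Z) {c : (i : ι) → Fin (n i + 1)}
    (hc : ∃ v ∈ cone Z, ∀ i, v ⟨i, c i⟩ ≠ 0) : (vanishingIdeal ℂ (chartSet Z c)).IsPrime := by
  have hone : ∀ w ∈ chartSet Z c, scaleVec (fun i => (w ⟨i, c i⟩)⁻¹) w = w := by
    intro w hw
    funext p
    simp [scaleVec, hw.2]
  have hne : ∀ w ∈ chartSet Z c, ∀ i, w ⟨i, c i⟩ ≠ 0 := fun w hw i => by simp [hw.2]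
  constructor
  · rw [Ideal.ne_top_iff_one, mem_vanishing_iff]
    obtain ⟨v, hv, hv0⟩ := hc
    intro h
    simpa using h _ (normalize_mem_chartSet hv hv0)
  · intro f g hfg
    obtain ⟨F, N, hF⟩ := exists_homogenization c f
    obtain ⟨G, M, hG⟩ := exists_homogenization c g
    rw [mem_vanishing_iff] at hfg
    have hFG : ∀ v ∈ cone Z, eval v (F * G) = 0 := by
      refine chart_dense hZ hc _ fun v hv hv0 => ?_
      have := hfg _ (normalize_mem_chartSet hv hv0)
      rw [map_mul] at this
      rw [map_mul, hF v hv0, hG v hv0, mul_mul_mul_comm, this, mul_zero]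
    rw [mem_vanishing_iff, mem_vanishing_iff]
    refine (cone_prime hZ F G (by simpa using hFG)).imp (fun h w hw => ?_) (fun h w hw => ?_)
    · have := hF w (hne w hw)
      rw [h w hw.1, hone w hw] at this
      simpa [hw.2] using this.symm
    · have := hG w (hne w hw)
      rw [h w hw.1, hone w hw] at this
      simpa [hw.2] using this.symm

/-- A polynomial relation between the linear forms of a slice and the points of `Z` on it extends
from a chart to all of `Z`: the slice through a given point moves along with the point. -/
theorem incidence_transfer {Z : Set (PStack n)} (hZ : IsIrredVariety Z)
    {c : (i : ι) → Fin (n i + 1)} (hc : ∃ v ∈ cone Z, ∀ i, v ⟨i, c i⟩ ≠ 0)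
    {J : Type*} {π : J → ι} (H : MvPolynomial (CoefIdx n π ⊕ HIdx n) ℂ)
    (h : ∀ v ∈ cone Z, (∀ i, v ⟨i, c i⟩ ≠ 0) → ∀ L : CoefIdx n π → ℂ,
      (∀ j, ∑ a, L ⟨j, a⟩ * v ⟨π j, a⟩ = 0) → eval (Sum.elim L v) H = 0)
    {v : HIdx n → ℂ} (hv : v ∈ cone Z) (L : CoefIdx n π → ℂ)
    (hL : ∀ j, ∑ a, L ⟨j, a⟩ * v ⟨π j, a⟩ = 0) : eval (Sum.elim L v) H = 0 := by
  classical
  have hv0 : ∀ i, ∃ a, v ⟨i, a⟩ ≠ 0 := by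
    obtain ⟨x, -, hx⟩ := hv
    exact hx.exists_ne
  choose c' hc' using hv0
  -- forms through the point `u` which for `u = v` are the given ones
  let M : (HIdx n → ℂ) → CoefIdx n π → ℂ := fun u t =>
    (v ⟨π t.1, c' (π t.1)⟩)⁻¹ * (L t * u ⟨π t.1, c' (π t.1)⟩ -
      if t.2 = c' (π t.1) then ∑ b, L ⟨t.1, b⟩ * u ⟨π t.1, b⟩ else 0)
  have hM : ∀ u j, ∑ a, M u ⟨j, a⟩ * u ⟨π j, a⟩ = 0 := by
    intro u j
    simp only [M, mul_assoc, ← Finset.mul_sum, sub_mul, Finset.sum_sub_distrib, ite_mul, zero_mul,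
      Finset.sum_ite_eq', Finset.mem_univ, if_true]
    rw [Finset.sum_mul, ← Finset.sum_sub_distrib, Finset.sum_eq_zero, mul_zero]
    intro a _
    ring
  have hMv : M v = L := by
    funext ⟨j, a⟩
    simp only [M, hL, ite_self, sub_zero]
    field_simp [hc' (π j)]
  let m : CoefIdx n π → MvPolynomial (HIdx n) ℂ := fun t =>
    C (v ⟨π t.1, c' (π t.1)⟩)⁻¹ * (C (L t) * X ⟨π t.1, c' (π t.1)⟩ -
      if t.2 = c' (π t.1) then ∑ b, C (L ⟨t.1, b⟩) * X ⟨π t.1, b⟩ else 0)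
  have hm : ∀ u, eval u (bind₁ (Sum.elim m X) H) = eval (Sum.elim (M u) u) H := by
    intro u
    rw [← aeval_eq_eval, aeval_bind₁, ← aeval_eq_eval]
    congr 2
    funext t
    rcases t with t | p
    · simp only [Sum.elim_inl, m, M, aeval_eq_eval]
      split_ifs <;> simp
    · simp
  rw [← hMv, ← hm]
  refine chart_dense hZ hc _ (fun u hu hu0 => ?_) v hv
  rw [hm]
  exact h u hu hu0 _ (hM u)

end Cone

/-! ### Slices: upper bound and finiteness -/

section Slices

variable {ι κ : Type*} {n : ι → ℕ}

/-- Forgetting factors and reindexing the remaining ones. -/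
def pullPt (f : κ → ι) (x : PStack n) : PStack (fun k => n (f k)) := fun k => x (f k)

/-- Forgetting coordinates, compatibly with `pullPt`. -/
def pullVec (f : κ → ι) (v : HIdx n → ℂ) : HIdx (fun k => n (f k)) → ℂ := fun p => v ⟨f p.1, p.2⟩

theorem IsRep.pull (f : κ → ι) {v : HIdx n → ℂ} {x : PStack n} (h : IsRep v x) :
    IsRep (pullVec f v) (pullPt f x) := fun k => h (f k)

/-- The factor in which a form of a slice of type `e` lives. -/
abbrev sliceFactor (f : κ → ι) (e : κ → ℕ) : ((k : κ) × Fin (e k)) → ι := fun j => f j.1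

/-- The coefficients of a slice as a single vector. -/
def flat {f : κ → ι} {e : κ → ℕ} (L : SliceParams (fun k => n (f k)) e) :
    CoefIdx n (sliceFactor f e) → ℂ := fun t => L t.1.1 t.1.2 t.2

theorem pullPt_mem_slice_iff {f : κ → ι} {e : κ → ℕ} (L : SliceParams (fun k => n (f k)) e)
    {v : HIdx n → ℂ} {x : PStack n} (h : IsRep v x) : pullPt f x ∈ SliceZeros L ↔
      ∀ j, ∑ a, flat L ⟨j, a⟩ * v ⟨sliceFactor f e j, a⟩ = 0 := by
  rw [mem_sliceZeros_iff L (h.pull f)]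
  exact ⟨fun h j => h j.1 j.2, fun h i j => h ⟨i, j⟩⟩

/-- A nonzero polynomial in the coefficients of a slice is nonzero for general slices. -/
theorem flat_generic {f : κ → ι} {e : κ → ℕ} (g : MvPolynomial (CoefIdx n (sliceFactor f e)) ℂ)
    (hg : g ≠ 0) : IsOpen {L : SliceParams (fun k => n (f k)) e | eval (flat L) g ≠ 0} ∧
      Dense {L : SliceParams (fun k => n (f k)) e | eval (flat L) g ≠ 0} := by
  obtain ⟨l, hl⟩ : ∃ l, eval l g ≠ 0 := by
    by_contra! h
    exact hg (MvPolynomial.funext fun l => by rw [h, map_zero])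
  refine generic_of_poly g flat ?_ (fun _ _ _ => rfl) (fun k j a => l ⟨⟨k, j⟩, a⟩) hl
  unfold flat
  fun_prop

theorem perp_scale {J : Type*} {π : J → ι} {L : CoefIdx n π → ℂ} {v : HIdx n → ℂ} (lam : ι → ℂ)
    (hL : ∀ j, ∑ a, L ⟨j, a⟩ * v ⟨π j, a⟩ = 0) :
    ∀ j, ∑ a, L ⟨j, a⟩ * scaleVec lam v ⟨π j, a⟩ = 0 := by
  intro j
  rw [← mul_zero (lam (π j)), ← hL j, Finset.mul_sum]
  refine Finset.sum_congr rfl fun a _ => ?_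
  simp only [scaleVec]
  ring

variable [Fintype ι] [Fintype κ] {Z : Set (PStack n)} {c : (i : ι) → Fin (n i + 1)}

/-- The type of a slice meeting the image of `Z` is at most the transcendence degree of the
coordinates of the image. -/
theorem sum_le_of_mem_MDim (hZ : IsIrredVariety Z) (hc : ∃ v ∈ cone Z, ∀ i, v ⟨i, c i⟩ ≠ 0)
    {U : Set (HIdx n)} {f : κ → ι}
    (hU : ∀ k a, coordFn (chartSet Z c) ⟨f k, a⟩ ∈
      letI := chartSet_prime hZ hc; aclosure (coordFn (chartSet Z c) '' U))
    {e : κ → ℕ} (he : e ∈ MDim (pullPt f '' Z)) : ((∑ k, e k : ℕ) : ℕ∞) ≤ U.encard := by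
  have := chartSet_prime hZ hc
  by_contra! hlt
  have hcard : ENat.card ((k : κ) × Fin (e k)) = ((∑ k, e k : ℕ) : ℕ∞) := by
    rw [ENat.card_eq_coe_fintype_card, Fintype.card_sigma]
    simp
  rw [← hcard] at hlt
  obtain ⟨Φ, hΦ, h⟩ := exists_incidence_relation (W := chartSet Z c) (c := c)
    (π := sliceFactor f e) (fun w hw => hw.2) (fun j a => hU j.1 a) hlt
  have hZΦ : ∀ v ∈ cone Z, ∀ L : CoefIdx n (sliceFactor f e) → ℂ,
      (∀ j, ∑ a, L ⟨j, a⟩ * v ⟨sliceFactor f e j, a⟩ = 0) → eval L Φ = 0 := by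
    intro v hv L hL
    have hr : ∀ (L : CoefIdx n (sliceFactor f e) → ℂ) (v : HIdx n → ℂ),
        eval (Sum.elim L v) (rename Sum.inl Φ) = eval L Φ := fun L v => by
      rw [eval_rename, Sum.elim_comp_inl]
    rw [← hr L v]
    refine incidence_transfer hZ hc _ (fun u hu hu0 M hM => ?_) hv L hL
    rw [hr]
    exact h _ (normalize_mem_chartSet hu hu0) M (perp_scale _ hM)
  obtain ⟨-, O, hO, hOd, hOP⟩ := he
  obtain ⟨h1, h2⟩ := flat_generic Φ hΦ
  obtain ⟨L, hLO, hL⟩ := h2.inter_open_nonempty O hO hOd.nonempty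
  obtain ⟨-, ⟨_, ⟨x, hx, rfl⟩, hxL⟩⟩ := hOP L hLO
  obtain ⟨v, hv⟩ := exists_rep x
  exact hL (hZΦ v ⟨x, hx, hv⟩ _ ((pullPt_mem_slice_iff L hv).mp hxL))

/-- On a general slice, the ratio of two coordinates in the same factor is a root of a nonzero
polynomial depending only on the slice. -/
theorem exists_ratio_poly (hZ : IsIrredVariety Z) (hc : ∃ v ∈ cone Z, ∀ i, v ⟨i, c i⟩ ≠ 0)
    {J : Type*} [Finite J] {π : J → ι} {U : Set (HIdx n)}
    [hW : (vanishingIdeal ℂ (chartSet Z c)).IsPrime]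
    (hU : ∀ j a, coordFn (chartSet Z c) ⟨π j, a⟩ ∈ aclosure (coordFn (chartSet Z c) '' U))
    (hUJ : U.encard ≤ ENat.card J)
    (hind : AlgebraicIndependent ℂ (coefFn (chartSet Z c) c π)) (i : ι)
    (hi : ∀ a, coordFn (chartSet Z c) ⟨i, a⟩ ∈ aclosure (coordFn (chartSet Z c) '' U))
    (a b : Fin (n i + 1)) :
    ∃ P : Polynomial (MvPolynomial (CoefIdx n π) ℂ), P ≠ 0 ∧
      ∀ v ∈ cone Z, ∀ L : CoefIdx n π → ℂ, (∀ j, ∑ a, L ⟨j, a⟩ * v ⟨π j, a⟩ = 0) →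
        v ⟨i, b⟩ ≠ 0 → (P.map (eval L)).eval (v ⟨i, a⟩ / v ⟨i, b⟩) = 0 := by
  by_cases hb0 : coordFn (chartSet Z c) ⟨i, b⟩ = 0
  · refine ⟨1, one_ne_zero, fun v hv _ _ hvb => absurd ?_ hvb⟩
    rw [coordFn, coordMk_eq_zero, mem_vanishing_iff] at hb0
    have := chart_dense hZ hc (X ⟨i, b⟩) (fun u hu hu0 => ?_) v hv
    · simpa using this
    · have := hb0 _ (normalize_mem_chartSet hu hu0)
      simpa [scaleVec, hu0 i] using this
  obtain ⟨P, hP, h⟩ := exists_ratio_relation (W := chartSet Z c) (c := c) (π := π)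
    (fun w hw => hw.2) hU hUJ hind (hi a) (hi b) hb0
  refine ⟨P, hP, fun v hv L hL hvb => ?_⟩
  let H : MvPolynomial (CoefIdx n π ⊕ HIdx n) ℂ := ∑ k ∈ Finset.range (P.natDegree + 1),
    rename Sum.inl (P.coeff k) * (X (Sum.inr ⟨i, a⟩) ^ k *
      X (Sum.inr ⟨i, b⟩) ^ (P.natDegree - k))
  have hH : ∀ (L : CoefIdx n π → ℂ) (v : HIdx n → ℂ), eval (Sum.elim L v) H =
      ∑ k ∈ Finset.range (P.natDegree + 1),
        eval L (P.coeff k) * (v ⟨i, a⟩ ^ k * v ⟨i, b⟩ ^ (P.natDegree - k)) := by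
    intro L v
    simp only [H, map_sum, map_mul, map_pow, eval_X, eval_rename, Sum.elim_comp_inl, Sum.elim_inr]
  have h0 : eval (Sum.elim L v) H = 0 := by
    refine incidence_transfer hZ hc _ (fun u hu hu0 M hM => ?_) hv L hL
    have h1 := h _ (normalize_mem_chartSet hu hu0) M (perp_scale _ hM)
    rw [hH]
    -- the relation is homogeneous in the coordinates of the factor `i`
    refine (mul_eq_zero.mp ?_).resolve_left
      (pow_ne_zero P.natDegree (inv_ne_zero (hu0 i)))
    rw [← h1, Finset.mul_sum]
    refine Finset.sum_congr rfl fun k hk => ?_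
    have hk' : k + (P.natDegree - k) = P.natDegree := by
      have := Finset.mem_range.mp hk
      omega
    simp only [scaleVec]
    have hsplit : (u ⟨i, c i⟩)⁻¹ ^ P.natDegree =
        (u ⟨i, c i⟩)⁻¹ ^ k * (u ⟨i, c i⟩)⁻¹ ^ (P.natDegree - k) := by
      rw [← pow_add, hk']
    rw [hsplit, mul_pow, mul_pow]
    ring
  rw [hH] at h0
  rw [Polynomial.eval_map, Polynomial.eval₂_eq_sum_range]
  refine (mul_eq_zero.mp ?_).resolve_left (pow_ne_zero P.natDegree hvb)
  rw [← h0, Finset.mul_sum]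
  refine Finset.sum_congr rfl fun k hk => ?_
  have hk' : k + (P.natDegree - k) = P.natDegree := by
    have := Finset.mem_range.mp hk
    omega
  have hsplit : v ⟨i, b⟩ ^ P.natDegree = v ⟨i, b⟩ ^ k * v ⟨i, b⟩ ^ (P.natDegree - k) := by
    rw [← pow_add, hk']
  rw [hsplit, div_pow]
  field_simp

/-- A general slice by as many forms as the transcendence degree meets the image of `Z` in
finitely many points. -/
theorem generic_finite (hZ : IsIrredVariety Z) (hc : ∃ v ∈ cone Z, ∀ i, v ⟨i, c i⟩ ≠ 0)
    {f : κ → ι} {e : κ → ℕ} {U : Set (HIdx n)}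
    [hW : (vanishingIdeal ℂ (chartSet Z c)).IsPrime]
    (hU : ∀ k a, coordFn (chartSet Z c) ⟨f k, a⟩ ∈ aclosure (coordFn (chartSet Z c) '' U))
    (hUe : U.encard ≤ ENat.card ((k : κ) × Fin (e k)))
    (hind : AlgebraicIndependent ℂ (coefFn (chartSet Z c) c (sliceFactor f e))) :
    Generic (fun L : SliceParams (fun k => n (f k)) e =>
      ((pullPt f '' Z) ∩ SliceZeros L).Finite) := by
  classical
  have h := fun (k : κ) (a b : Fin (n (f k) + 1)) =>
    exists_ratio_poly (π := sliceFactor f e) hZ hc (fun j => hU j.1) hUe hind (f k) (hU k) a b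
  choose P hP hroot using h
  let g := ∏ t : (k : κ) × (Fin (n (f k) + 1) × Fin (n (f k) + 1)),
    (P t.1 t.2.1 t.2.2).leadingCoeff
  have hg : g ≠ 0 := Finset.prod_ne_zero_iff.mpr fun t _ =>
    mt Polynomial.leadingCoeff_eq_zero.mp (hP _ _ _)
  obtain ⟨h1, h2⟩ := flat_generic g hg
  refine ⟨_, h1, h2, fun L hL => ?_⟩
  rw [Set.mem_ofPred_eq, map_prod, Finset.prod_ne_zero_iff] at hL
  have hmap : ∀ k a b, (P k a b).map (eval (flat L)) ≠ 0 := by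
    intro k a b h0
    apply hL ⟨k, a, b⟩ (Finset.mem_univ _)
    have := congrArg (fun p => p.coeff (P k a b).natDegree) h0
    simpa using this
  let S : ((k : κ) → Fin (n (f k) + 1)) → Set (HIdx (fun k => n (f k)) → ℂ) := fun b =>
    {u | ∀ p, u p ∈ {z | ((P p.1 p.2 (b p.1)).map (eval (flat L))).IsRoot z}}
  have hS : ∀ b, (S b).Finite := by
    intro b
    exact Set.Finite.pi' (t := fun p : HIdx (fun k => n (f k)) =>
        {z | ((P p.1 p.2 (b p.1)).map (eval (flat L))).IsRoot z})
      fun p => Polynomial.finite_setOfPred_isRoot (hmap _ _ _)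
  have hfin : (⋃ b, ⋃ u ∈ S b, {y : PStack (fun k => n (f k)) | IsRep u y}).Finite :=
    Set.finite_iUnion fun b => (hS b).biUnion fun u _ =>
      Set.Subsingleton.finite fun y hy y' hy' => hy.unique hy'
  refine hfin.subset ?_
  rintro _ ⟨⟨x, hx, rfl⟩, hxL⟩
  obtain ⟨v, hv⟩ := exists_rep x
  choose b hb using fun k => hv.exists_ne (f k)
  simp only [Set.mem_iUnion]
  refine ⟨b, scaleVec (fun k => (v ⟨f k, b k⟩)⁻¹) (pullVec f v), fun p => ?_,
    (hv.pull f).scale fun k => inv_ne_zero (hb k)⟩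
  have := hroot p.1 p.2 (b p.1) v ⟨x, hx, hv⟩ _ ((pullPt_mem_slice_iff L hv).mp hxL) (hb _)
  rw [div_eq_inv_mul] at this
  exact this

end Slices

/-! ### Vectors of the multidimension from transcendence bases -/

section Membership

variable {ι κ : Type*} {n : ι → ℕ}

/-- A generic property of slices of all factors that depends on some of the factors only is generic
for slices of these factors. -/
theorem generic_restrict [Finite ι] {f : κ → ι} (hf : Function.Injective f)
    (e : ι → ℕ) {P : SliceParams (fun k => n (f k)) (fun k => e (f k)) → Prop}
    (h : Generic fun L : SliceParams n e => P fun k => L (f k)) : Generic P := by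
  have : Finite κ := Finite.of_injective f hf
  obtain ⟨O, hO, hOd, hOP⟩ := h
  let ρ : SliceParams n e →ₗ[ℂ] SliceParams (fun k => n (f k)) (fun k => e (f k)) :=
    { toFun := fun L k => L (f k)
      map_add' := fun _ _ => rfl
      map_smul' := fun _ _ => rfl }
  have hsurj : Function.Surjective ρ := by
    intro L
    have hex : ∀ i, ∃ y : Fin (e i) → (Fin (n i + 1) → ℂ), ∀ k (hk : f k = i), hk ▸ L k = y := by
      intro i
      by_cases hi : ∃ k, f k = i
      · obtain ⟨k, rfl⟩ := hi
        refine ⟨L k, fun k' hk' => ?_⟩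
        obtain rfl := hf hk'
        rfl
      · exact ⟨0, fun k hk => absurd ⟨k, hk⟩ hi⟩
    choose y hy using hex
    exact ⟨y, funext fun k => (hy (f k) k rfl).symm⟩
  refine ⟨ρ '' O, ρ.isOpenMap_of_finiteDimensional hsurj _ hO,
    hsurj.denseRange.dense_image ρ.continuous_of_finiteDimensional hOd, ?_⟩
  rintro _ ⟨L, hL, rfl⟩
  exact hOP L hL

theorem generic_and {α : Type*} [TopologicalSpace α] {P Q : α → Prop} (hP : Generic P)
    (hQ : Generic Q) : Generic fun a => P a ∧ Q a := by
  obtain ⟨U, hU, hUd, hUP⟩ := hP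
  obtain ⟨V, hV, hVd, hVP⟩ := hQ
  exact ⟨U ∩ V, hU.inter hV, hUd.inter_of_isOpen_left hVd hU,
    fun a ha => ⟨hUP a ha.1, hVP a ha.2⟩⟩

/-- The number of forms of a slice whose type counts the elements of `B` in the chosen factors. -/
theorem encard_basis_eq (B : Set (HIdx n)) {f : κ → ι} (hf : Function.Injective f) :
    ENat.card ((k : κ) × Fin (Nat.card {a // (⟨f k, a⟩ : HIdx n) ∈ B})) =
      {p | p ∈ B ∧ p.1 ∈ Set.range f}.encard := by
  let φ : ((k : κ) × {a // (⟨f k, a⟩ : HIdx n) ∈ B}) → {p | p ∈ B ∧ p.1 ∈ Set.range f} :=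
    fun t => ⟨⟨f t.1, t.2.1⟩, t.2.2, t.1, rfl⟩
  have hφ : Function.Bijective φ := by
    constructor
    · rintro ⟨k, a, ha⟩ ⟨k', a', ha'⟩ h
      have h1 := congrArg Subtype.val h
      simp only [φ, Sigma.mk.injEq] at h1
      obtain rfl := hf h1.1
      obtain rfl := eq_of_heq h1.2
      rfl
    · rintro ⟨⟨i, a⟩, ha, k, hk⟩
      change f k = i at hk
      subst hk
      exact ⟨⟨k, a, ha⟩, rfl⟩
  rw [Set.encard, ← ENat.card_congr (Equiv.ofBijective φ hφ)]
  exact ENat.card_congr (Equiv.sigmaCongrRight fun k => (Finite.equivFin _).symm)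

/-- For slices whose type counts the elements of an independent set `B` of coordinates in the chosen
factors, the coefficients are independent on the incidence variety: each form is paired with one
element of `B`. -/
theorem indep_coefFn_of_basis {c : (i : ι) → Fin (n i + 1)} {W : Set (HIdx n → ℂ)}
    [(vanishingIdeal ℂ W).IsPrime]
    (hc : ∀ w ∈ W, ∀ i, w ⟨i, c i⟩ = 1) {B : Set (HIdx n)}
    (hB : AlgebraicIndepOn ℂ (coordFn W) B) {f : κ → ι} (hf : Function.Injective f) :
    AlgebraicIndependent ℂ
      (coefFn W c (sliceFactor f fun k => Nat.card {a // (⟨f k, a⟩ : HIdx n) ∈ B})) := by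
  let b := fun j : (k : κ) × Fin (Nat.card {a // (⟨f k, a⟩ : HIdx n) ∈ B}) =>
    (Finite.equivFin {a // (⟨f j.1, a⟩ : HIdx n) ∈ B}).symm j.2
  have h0 := hB.comp (fun j => (⟨⟨f j.1, (b j).1⟩, (b j).2⟩ : B)) ?_
  · exact indep_coefFn (π := sliceFactor f fun k => Nat.card {a // (⟨f k, a⟩ : HIdx n) ∈ B}) hc
      (fun j => (b j).1) h0
  rintro ⟨k, j⟩ ⟨k', j'⟩ h
  have h1 := congrArg Subtype.val h
  simp only [Sigma.mk.injEq] at h1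
  obtain rfl := hf h1.1
  have h2 := Subtype.ext (eq_of_heq h1.2)
  obtain rfl := (Finite.equivFin _).symm.injective h2
  rfl

variable [Fintype ι] [Fintype κ] {Z : Set (PStack n)} {c : (i : ι) → Fin (n i + 1)}

/-- A general slice by as many independent forms as the dimension meets `Z`. -/
theorem generic_nonempty (hZ : IsIrredVariety Z) {e : ι → ℕ} {U : Set (HIdx n)}
    [hW : (vanishingIdeal ℂ (chartSet Z c)).IsPrime]
    (hU : ∀ p, coordFn (chartSet Z c) p ∈ aclosure (coordFn (chartSet Z c) '' U))
    (hUe : U.encard ≤ ENat.card ((i : ι) × Fin (e i)))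
    (hind : AlgebraicIndependent ℂ (coefFn (chartSet Z c) c (sliceFactor id e))) :
    Generic (fun L : SliceParams n e => (Z ∩ SliceZeros L).Nonempty) := by
  obtain ⟨g, hg, h⟩ := exists_slice_point (W := chartSet Z c) (c := c) (fun w hw => hw.2)
    hU hUe hind
  obtain ⟨h1, h2⟩ := flat_generic (n := n) (f := id) g hg
  refine ⟨_, h1, h2, fun L hL => ?_⟩
  obtain ⟨w, hw, hwc, hwL⟩ := h (flat (f := id) L) hL
  obtain ⟨x, hx, hwx⟩ := mem_cone_of_vanishing hZ.1 hwc hw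
  exact ⟨x, hx, (pullPt_mem_slice_iff (f := id) L hwx).mpr hwL⟩

/-- The numbers of elements of a transcendence basis of coordinate functions in the factors form
a vector of the multidimension, also after projection to factors whose coordinates are algebraic
over the part of the basis in these factors. -/
theorem mem_MDim_of_basis (hZ : IsIrredVariety Z) {f : κ → ι} (hf : Function.Injective f)
    [hW : (vanishingIdeal ℂ (chartSet Z c)).IsPrime] {B : Set (HIdx n)}
    (hB : AlgebraicIndepOn ℂ (coordFn (chartSet Z c)) B)
    (hspan : ∀ p, coordFn (chartSet Z c) p ∈ aclosure (coordFn (chartSet Z c) '' B))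
    (hspanf : ∀ k a, coordFn (chartSet Z c) ⟨f k, a⟩ ∈
      aclosure (coordFn (chartSet Z c) '' {p | p ∈ B ∧ p.1 ∈ Set.range f})) :
    (fun k => Nat.card {a // (⟨f k, a⟩ : HIdx n) ∈ B}) ∈ MDim (pullPt f '' Z) ∧
    ((∑ k, Nat.card {a // (⟨f k, a⟩ : HIdx n) ∈ B} : ℕ) : ℕ∞) =
      {p | p ∈ B ∧ p.1 ∈ Set.range f}.encard := by
  have hchart : ∀ w ∈ chartSet Z c, ∀ i, w ⟨i, c i⟩ = 1 := fun w hw => hw.2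
  have hc : ∃ v ∈ cone Z, ∀ i, v ⟨i, c i⟩ ≠ 0 := by
    by_contra hcon
    refine hW.ne_top ((Ideal.eq_top_iff_one _).mpr ((mem_vanishing_iff _ _).mpr fun w hw => ?_))
    exact absurd ⟨w, hw.1, fun i => by simp [hw.2]⟩ hcon
  have hcB : ∀ i, (⟨i, c i⟩ : HIdx n) ∉ B := by
    intro i hi
    have h1 := hB.transcendental ⟨_, hi⟩
    change Transcendental ℂ (coordFn (chartSet Z c) ⟨i, c i⟩) at h1
    rw [coordFn_chart hchart] at h1
    exact h1 isAlgebraic_one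
  refine ⟨⟨fun k => ?_, ?_⟩, ?_⟩
  · have h1 : Nat.card {a // (⟨f k, a⟩ : HIdx n) ∈ B} < Nat.card (Fin (n (f k) + 1)) :=
      Finite.card_subtype_lt (x := c (f k)) (hcB _)
    rw [Nat.card_fin] at h1
    exact Nat.lt_succ_iff.mp h1
  · refine generic_and (generic_finite hZ hc hspanf (encard_basis_eq B hf).ge
      (indep_coefFn_of_basis hchart hB hf)) ?_
    refine generic_restrict hf (fun i => Nat.card {a // (⟨i, a⟩ : HIdx n) ∈ B}) ?_
    have hBid : B ⊆ {p | p ∈ B ∧ p.1 ∈ Set.range id} := fun p hp => ⟨hp, p.1, rfl⟩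
    obtain ⟨O, hO, hOd, hOP⟩ := generic_nonempty hZ hspan
      ((Set.encard_le_encard hBid).trans (encard_basis_eq B (f := id) Function.injective_id).ge)
      (indep_coefFn_of_basis (f := id) hchart hB Function.injective_id)
    refine ⟨O, hO, hOd, fun L hL => ?_⟩
    obtain ⟨x, hx, hxL⟩ := hOP L hL
    exact ⟨pullPt f x, ⟨x, hx, rfl⟩, fun k => hxL (f k)⟩
  · rw [← encard_basis_eq B hf, ENat.card_eq_coe_fintype_card, Fintype.card_sigma]
    simp

end Membership

/-! ### Recombining points -/

section Mixing

variable {σ τ : Type*} {W : Set (σ → ℂ)} {V : Set (τ → ℂ)}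

/-- The homomorphism of coordinate rings induced by a substitution of variables. -/
noncomputable def coordPull (t : σ → τ) (h : ∀ v ∈ V, v ∘ t ∈ W) : CoordRing W →ₐ[ℂ] CoordRing V :=
  Ideal.Quotient.liftₐ (vanishingIdeal ℂ W) ((coordMk V).comp (rename t)) (fun f hf => by
    rw [AlgHom.comp_apply, coordMk_eq_zero, mem_vanishing_iff]
    intro v hv
    rw [eval_rename]
    exact (mem_vanishing_iff W f).mp hf _ (h v hv))

theorem coordPull_coordMk (t : σ → τ) (h : ∀ v ∈ V, v ∘ t ∈ W) (f : MvPolynomial σ ℂ) :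
    coordPull t h (coordMk W f) = coordMk V (rename t f) :=
  Ideal.Quotient.liftₐ_apply _ _ _ _

theorem coordPull_coordFn (t : σ → τ) (h : ∀ v ∈ V, v ∘ t ∈ W) (p : σ) :
    coordPull t h (coordFn W p) = coordFn V (t p) := by
  rw [coordFn, coordPull_coordMk, rename_X]; rfl

/-- A substitution inducing a surjection onto `W` is injective on coordinate rings. -/
theorem coordPull_injective (t : σ → τ) (h : ∀ v ∈ V, v ∘ t ∈ W)
    (hs : ∀ w ∈ W, ∃ v ∈ V, v ∘ t = w) : Function.Injective (coordPull t h) := by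
  rw [injective_iff_map_eq_zero]
  intro r hr
  obtain ⟨f, rfl⟩ := coordMk_surjective W r
  rw [coordPull_coordMk, coordMk_eq_zero, mem_vanishing_iff] at hr
  rw [coordMk_eq_zero, mem_vanishing_iff]
  intro w hw
  obtain ⟨v, hv, rfl⟩ := hs w hw
  have := hr v hv
  rwa [eval_rename] at this

/-- The product of a set with itself. -/
def sqSet (W : Set (σ → ℂ)) : Set (σ ⊕ σ → ℂ) := {v | v ∘ Sum.inl ∈ W ∧ v ∘ Sum.inr ∈ W}

theorem elim_mem_sqSet {w w' : σ → ℂ} (hw : w ∈ W) (hw' : w' ∈ W) : Sum.elim w w' ∈ sqSet W :=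
  ⟨by rwa [Sum.elim_comp_inl], by rwa [Sum.elim_comp_inr]⟩

/-- Two polynomials that are not identically zero on `W` are nonzero at a common point. -/
theorem exists_common_ne [hW : (vanishingIdeal ℂ W).IsPrime] (f g : MvPolynomial σ ℂ)
    (hf : ∃ w ∈ W, eval w f ≠ 0) (hg : ∃ w ∈ W, eval w g ≠ 0) :
    ∃ w ∈ W, eval w f ≠ 0 ∧ eval w g ≠ 0 := by
  by_contra! h
  have hfg : f * g ∈ vanishingIdeal ℂ W := by
    rw [mem_vanishing_iff]
    intro w hw
    rw [map_mul]
    by_cases h0 : eval w f = 0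
    · rw [h0, zero_mul]
    · rw [h w hw h0, mul_zero]
  obtain ⟨w, hw, hfw⟩ := hf
  obtain ⟨w', hw', hgw⟩ := hg
  rcases hW.mem_or_mem hfg with h1 | h1
  · exact hfw ((mem_vanishing_iff _ _).mp h1 w hw)
  · exact hgw ((mem_vanishing_iff _ _).mp h1 w' hw')

/-- Specialisation of the second group of variables to complex numbers. -/
theorem exists_fix_right (f : MvPolynomial (σ ⊕ σ) ℂ) (w' : σ → ℂ) :
    ∃ F : MvPolynomial σ ℂ, ∀ w, eval w F = eval (Sum.elim w w') f := by
  refine ⟨bind₁ (Sum.elim X fun p => C (w' p)) f, fun w => ?_⟩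
  rw [← aeval_eq_eval, aeval_bind₁, ← aeval_eq_eval]
  congr 2
  funext p
  rcases p with p | p <;> simp

/-- Specialisation of the first group of variables to complex numbers. -/
theorem exists_fix_left (f : MvPolynomial (σ ⊕ σ) ℂ) (w : σ → ℂ) :
    ∃ F : MvPolynomial σ ℂ, ∀ w', eval w' F = eval (Sum.elim w w') f := by
  refine ⟨bind₁ (Sum.elim (fun p => C (w p)) X) f, fun w' => ?_⟩
  rw [← aeval_eq_eval, aeval_bind₁, ← aeval_eq_eval]
  congr 2
  funext p
  rcases p with p | p <;> simp

/-- The product of an irreducible set with itself is irreducible. -/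
theorem sqSet_prime [hW : (vanishingIdeal ℂ W).IsPrime] : (vanishingIdeal ℂ (sqSet W)).IsPrime := by
  have hne : W.Nonempty := by
    by_contra h
    rw [Set.not_nonempty_iff_eq_empty] at h
    exact hW.ne_top ((Ideal.eq_top_iff_one _).mpr ((mem_vanishing_iff _ _).mpr (by simp [h])))
  constructor
  · rw [Ideal.ne_top_iff_one, mem_vanishing_iff]
    obtain ⟨w, hw⟩ := hne
    intro h
    simpa using h _ (elim_mem_sqSet hw hw)
  · intro f g hfg
    by_contra! hcon
    rw [mem_vanishing_iff, mem_vanishing_iff] at hcon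
    push Not at hcon
    obtain ⟨⟨v, hv, hvf⟩, ⟨u, hu, hug⟩⟩ := hcon
    rw [← Sum.elim_comp_inl_inr v] at hvf
    rw [← Sum.elim_comp_inl_inr u] at hug
    obtain ⟨f₁, hf₁⟩ := exists_fix_left f (v ∘ Sum.inl)
    obtain ⟨g₁, hg₁⟩ := exists_fix_left g (u ∘ Sum.inl)
    obtain ⟨w', hw', h1, h2⟩ := exists_common_ne f₁ g₁ ⟨_, hv.2, by rwa [hf₁]⟩
      ⟨_, hu.2, by rwa [hg₁]⟩
    rw [hf₁] at h1
    rw [hg₁] at h2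
    obtain ⟨f₂, hf₂⟩ := exists_fix_right f w'
    obtain ⟨g₂, hg₂⟩ := exists_fix_right g w'
    obtain ⟨w, hw, h3, h4⟩ := exists_common_ne f₂ g₂ ⟨_, hv.1, by rwa [hf₂]⟩
      ⟨_, hu.1, by rwa [hg₂]⟩
    rw [hf₂] at h3
    rw [hg₂] at h4
    have := (mem_vanishing_iff _ _).mp hfg _ (elim_mem_sqSet hw hw')
    rw [map_mul] at this
    exact mul_ne_zero h3 h4 this

/-- If the coordinates in `s` and those outside `s` have bases which together are independent,
then any point whose coordinates in `s` come from one point of `W` and the others from another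
point of `W` satisfies the equations of `W`. -/
theorem eval_piecewise_eq_zero [hW : (vanishingIdeal ℂ W).IsPrime] (s : Set σ)
    [DecidablePred (· ∈ s)] {B : Set σ} (hB : AlgebraicIndepOn ℂ (coordFn W) B)
    (h1 : ∀ p ∈ s, coordFn W p ∈ aclosure (coordFn W '' (B ∩ s)))
    (h2 : ∀ p ∉ s, coordFn W p ∈ aclosure (coordFn W '' (B \ s)))
    {w w' : σ → ℂ} (hw : w ∈ W) (hw' : w' ∈ W) {f : MvPolynomial σ ℂ}
    (hf : f ∈ vanishingIdeal ℂ W) : eval (s.piecewise w w') f = 0 := by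
  have hprime := sqSet_prime (W := W)
  -- the two projections of the square
  let α : CoordRing W →ₐ[ℂ] CoordRing (sqSet W) := coordPull Sum.inl fun v hv => hv.1
  let β : CoordRing W →ₐ[ℂ] CoordRing (sqSet W) := coordPull Sum.inr fun v hv => hv.2
  have hα : Function.Injective α := coordPull_injective _ _ fun u hu =>
    ⟨_, elim_mem_sqSet hu hu, Sum.elim_comp_inl _ _⟩
  have hβ : Function.Injective β := coordPull_injective _ _ fun u hu =>
    ⟨_, elim_mem_sqSet hu hu, Sum.elim_comp_inr _ _⟩
  -- restriction to the diagonal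
  have hdiag : ∀ v ∈ W, v ∘ Sum.elim id id ∈ sqSet W := fun v hv => by
    constructor
    · rw [Function.comp_assoc, Sum.elim_comp_inl]; exact hv
    · rw [Function.comp_assoc, Sum.elim_comp_inr]; exact hv
  let δ : CoordRing (sqSet W) →ₐ[ℂ] CoordRing W := coordPull (Sum.elim id id) hdiag
  -- the coordinates in `s` are taken from the first point, the others from the second
  let t : σ → σ ⊕ σ := s.piecewise Sum.inl Sum.inr
  let m : σ → CoordRing (sqSet W) := fun p => coordFn _ (t p)
  have hδm : ∀ g : MvPolynomial σ ℂ, δ (aeval m g) = coordMk W g := by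
    intro g
    rw [← aeval_coordFn, ← AlgHom.comp_apply, comp_aeval]
    congr 2
    funext p
    change coordPull _ _ (coordFn _ _) = _
    rw [coordPull_coordFn]
    by_cases hp : p ∈ s <;> simp [t, hp]
  have hm : ∀ p, m p ∈ aclosure (m '' B) := by
    intro p
    by_cases hp : p ∈ s
    · have := map_mem_aclosure α hα (h1 p hp)
      have e1 : ∀ q ∈ s, α (coordFn W q) = m q := fun q hq => by
        simp [α, m, t, hq, coordPull_coordFn]
      rw [e1 p hp] at this
      refine aclosure_mono ?_ this
      rintro _ ⟨_, ⟨q, ⟨hqB, hq⟩, rfl⟩, rfl⟩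
      exact ⟨q, hqB, (e1 q hq).symm⟩
    · have := map_mem_aclosure β hβ (h2 p hp)
      have e1 : ∀ q ∉ s, β (coordFn W q) = m q := fun q hq => by
        simp [β, m, t, hq, coordPull_coordFn]
      rw [e1 p hp] at this
      refine aclosure_mono ?_ this
      rintro _ ⟨_, ⟨q, ⟨hqB, hq⟩, rfl⟩, rfl⟩
      exact ⟨q, hqB, (e1 q hq).symm⟩
  have hmem : ∀ g : MvPolynomial σ ℂ, aeval m g ∈ aclosure (m '' B) := by
    intro g
    induction g using MvPolynomial.induction_on with
    | C z => rw [← algebraMap_eq, AlgHom.commutes]; exact aclosure_algebraMap z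
    | add f g hf hg => rw [map_add]; exact aclosure_add hf hg
    | mul_X f p hf => rw [map_mul, aeval_X]; exact aclosure_mul hf (hm p)
  -- a nonzero element `aeval m f` would divide a nonzero polynomial in the mixed basis,
  -- whose restriction to the diagonal is nonzero while that of `aeval m f` vanishes
  have hzero : aeval m f = 0 := by
    by_contra hne
    let : Algebra (MvPolynomial B ℂ) (CoordRing (sqSet W)) :=
      (aeval (fun p : B => m p)).toRingHom.toAlgebra
    have hal : IsAlgebraic (MvPolynomial B ℂ) (aeval m f) := by
      refine isAlgebraic_of_mem_aclosure (τ := fun p : B => m p) (fun _ => rfl) ?_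
      have := hmem f
      rwa [Set.image_eq_range] at this
    obtain ⟨r, hr0, d, hd⟩ := hal.exists_nonzero_dvd (mem_nonZeroDivisors_of_ne_zero hne)
    have h3 := congrArg δ hd
    rw [map_mul, hδm, (coordMk_eq_zero W f).mpr hf, zero_mul] at h3
    apply hr0
    have h4 : aeval (fun p : B => coordFn W p) r = 0 := by
      rw [← h3]
      change _ = δ (aeval (fun p : B => m p) r)
      have := hδm (rename Subtype.val r)
      rw [aeval_rename] at this
      change δ (aeval (m ∘ Subtype.val) r) = _ at this
      refine Eq.trans ?_ this.symm
      rw [← aeval_coordFn, aeval_rename]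
      rfl
    exact hB.eq_zero_of_aeval_eq_zero _ h4
  have h5 : coordMk (sqSet W) (rename t f) = 0 := by
    rw [← hzero, ← aeval_coordFn, aeval_rename]; rfl
  rw [coordMk_eq_zero, mem_vanishing_iff] at h5
  have h6 := h5 _ (elim_mem_sqSet hw hw')
  rw [eval_rename] at h6
  convert h6 using 2
  congr 1
  funext p
  by_cases hp : p ∈ s <;> simp [t, hp]

end Mixing

section MixCone

variable {ι : Type*} [Fintype ι] {n : ι → ℕ}

/-- If the homogeneous coordinates of the factors in `T` and of the factors outside `T` have
transcendence bases which together are independent, then the points of `Z` can be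
recombined freely along `T` and its complement. -/
theorem piecewise_mem {Z : Set (PStack n)} (hZ : IsIrredVariety Z)
    {c : (i : ι) → Fin (n i + 1)} (hc : ∃ v ∈ cone Z, ∀ i, v ⟨i, c i⟩ ≠ 0)
    [hW : (vanishingIdeal ℂ (chartSet Z c)).IsPrime] (T : Set ι) [DecidablePred (· ∈ T)]
    {B : Set (HIdx n)} (hB : AlgebraicIndepOn ℂ (coordFn (chartSet Z c)) B)
    (h1 : ∀ p : HIdx n, p.1 ∈ T →
      coordFn (chartSet Z c) p ∈ aclosure (coordFn (chartSet Z c) '' (B ∩ {p | p.1 ∈ T})))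
    (h2 : ∀ p : HIdx n, p.1 ∉ T →
      coordFn (chartSet Z c) p ∈ aclosure (coordFn (chartSet Z c) '' (B \ {p | p.1 ∈ T})))
    {x x' : PStack n} (hx : x ∈ Z) (hx' : x' ∈ Z) : T.piecewise x x' ∈ Z := by
  let s : Set (HIdx n) := {p | p.1 ∈ T}
  have hdec : DecidablePred (· ∈ s) := Classical.decPred _
  have hchart : ∀ v ∈ cone Z, ∀ v' ∈ cone Z, (∀ i, v ⟨i, c i⟩ ≠ 0) → (∀ i, v' ⟨i, c i⟩ ≠ 0) →
      s.piecewise v v' ∈ cone Z := by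
    intro v hv v' hv' hvc hvc'
    have hw := normalize_mem_chartSet hv hvc
    have hw' := normalize_mem_chartSet hv' hvc'
    have hmix := mem_cone_of_vanishing hZ.1 (c := c)
      (w := s.piecewise (scaleVec (fun i => (v ⟨i, c i⟩)⁻¹) v)
        (scaleVec (fun i => (v' ⟨i, c i⟩)⁻¹) v'))
      (fun i => by
        by_cases hi : (⟨i, c i⟩ : HIdx n) ∈ s
        · rw [Set.piecewise_eq_of_mem _ _ _ hi]; exact hw.2 i
        · rw [Set.piecewise_eq_of_notMem _ _ _ hi]; exact hw'.2 i)
      (fun f hf => eval_piecewise_eq_zero s hB h1 h2 hw hw' hf)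
    have := cone_scale hmix (lam := T.piecewise (fun i => v ⟨i, c i⟩) (fun i => v' ⟨i, c i⟩))
      (fun i => by
        by_cases hi : i ∈ T
        · rw [Set.piecewise_eq_of_mem _ _ _ hi]; exact hvc i
        · rw [Set.piecewise_eq_of_notMem _ _ _ hi]; exact hvc' i)
    convert this using 1
    funext p
    by_cases hp : p.1 ∈ T
    · have hp' : p ∈ s := hp
      simp [scaleVec, hp, hp', hvc]
    · have hp' : p ∉ s := hp
      simp [scaleVec, hp, hp', hvc']
  -- vanishing is extended from the chart to the whole cone, one argument at a time
  have hall : ∀ f : MvPolynomial (HIdx n) ℂ, (∀ v ∈ cone Z, eval v f = 0) →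
      ∀ v ∈ cone Z, ∀ v' ∈ cone Z, eval (s.piecewise v v') f = 0 := by
    intro f hf
    have ht : ∀ v v' : HIdx n → ℂ,
        eval (Sum.elim v v') (rename (s.piecewise Sum.inl Sum.inr) f) =
          eval (s.piecewise v v') f := by
      intro v v'
      rw [eval_rename]
      congr 2
      funext p
      by_cases hp : p ∈ s <;> simp [hp]
    intro v hv v' hv'
    obtain ⟨G, hG⟩ := exists_fix_right (rename (s.piecewise Sum.inl Sum.inr) f) v'
    rw [← ht, ← hG]
    refine chart_dense hZ hc G (fun u hu huc => ?_) v hv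
    obtain ⟨G', hG'⟩ := exists_fix_left (rename (s.piecewise Sum.inl Sum.inr) f) u
    rw [hG, ← hG']
    refine chart_dense hZ hc G' (fun u' hu' huc' => ?_) v' hv'
    rw [hG', ht]
    exact hf _ (hchart u hu u' hu' huc huc')
  obtain ⟨F, hF⟩ := hZ.1
  rw [hF]
  intro f hf
  rw [polyVanish_iff]
  intro v hv
  obtain ⟨u, hu⟩ := exists_rep x
  obtain ⟨u', hu'⟩ := exists_rep x'
  have hvan : ∀ v ∈ cone Z, eval v f = 0 := by
    rintro v ⟨y, hy, hvy⟩
    rw [hF] at hy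
    exact (polyVanish_iff f y).mp (hy f hf) v hvy
  have e : v = s.piecewise (s.piecewise v u) (s.piecewise u' v) := by
    funext p
    by_cases hp : p ∈ s <;> simp [hp]
  rw [e]
  refine hall f hvan _ ⟨x, hx, fun i => ?_⟩ _ ⟨x', hx', fun i => ?_⟩
  · by_cases hi : i ∈ T
    · have := hv i
      have hp : ∀ a, (⟨i, a⟩ : HIdx n) ∈ s := fun a => hi
      simpa [hi, hp] using this
    · have := hu i
      have hp : ∀ a, (⟨i, a⟩ : HIdx n) ∉ s := fun a => hi
      simpa [hp] using this
  · by_cases hi : i ∈ T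
    · have := hu' i
      have hp : ∀ a, (⟨i, a⟩ : HIdx n) ∈ s := fun a => hi
      simpa [hp] using this
    · have := hv i
      have hp : ∀ a, (⟨i, a⟩ : HIdx n) ∉ s := fun a => hi
      simpa [hi, hp] using this

end MixCone

/-! ### Adapted bases and dimension -/

section Bases

variable {R : Type*} [CommRing R] [IsDomain R] [Algebra ℂ R] [FaithfulSMul ℂ R]
  {σ : Type*} {ξ : σ → R}

/-- Independent subfamilies of `ξ` are the independent sets of the algebraic matroid pulled back
along `ξ`. -/
theorem indepOn_iff_comap {I : Set σ} :
    ((AlgebraicIndependent.matroid ℂ R).comap ξ).Indep I ↔ AlgebraicIndepOn ℂ ξ I := by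
  rw [Matroid.comap_indep_iff, AlgebraicIndependent.matroid_indep_iff]
  constructor
  · rintro ⟨h, hinj⟩
    exact (algebraicIndependent_equiv (Equiv.Set.imageOfInjOn ξ I hinj)
      (f := fun x : ξ '' I => (x : R))).mpr h
  · intro h
    refine ⟨?_, Set.injOn_iff_injective.mpr h.injective⟩
    exact AlgebraicIndependent.image_of_comp I ξ id h

theorem mem_aclosure_of_isBasis {I S : Set σ}
    (h : ((AlgebraicIndependent.matroid ℂ R).comap ξ).IsBasis I S) {p : σ} (hp : p ∈ S) :
    ξ p ∈ aclosure (ξ '' I) :=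
  (Matroid.comap_isBasis_iff.mp h).1.subset_closure ⟨p, hp, rfl⟩

/-- A transcendence basis of a subfamily extends to a transcendence basis of the whole family. -/
theorem exists_basis_adapted (ξ : σ → R) (s : Set σ) :
    ∃ B : Set σ, AlgebraicIndepOn ℂ ξ B ∧ (∀ p, ξ p ∈ aclosure (ξ '' B)) ∧
      ∀ p ∈ s, ξ p ∈ aclosure (ξ '' (B ∩ s)) := by
  obtain ⟨I, hI⟩ := ((AlgebraicIndependent.matroid ℂ R).comap ξ).exists_isBasis s
  obtain ⟨B, hB, hIB⟩ := hI.exists_isBase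
  refine ⟨B, indepOn_iff_comap.mp hB.indep, fun p => ?_, fun p hp => ?_⟩
  · exact mem_aclosure_of_isBasis hB.isBasis_ground (by simp)
  · rw [← hIB]
    exact mem_aclosure_of_isBasis hI hp

/-- A spanning family with at most as many members as a finite transcendence basis is
algebraically independent. -/
theorem indepOn_of_encard_le [Finite σ] {B S : Set σ} (hB : AlgebraicIndepOn ℂ ξ B)
    (hS : ∀ p, ξ p ∈ aclosure (ξ '' S)) (hle : S.encard ≤ B.encard) :
    AlgebraicIndepOn ℂ ξ S := by
  obtain ⟨I, hI⟩ := ((AlgebraicIndependent.matroid ℂ R).comap ξ).exists_isBasis S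
  have h1 : aclosure (ξ '' S) ⊆ aclosure (ξ '' I) := by
    refine aclosure_subset_of_subset ?_
    rintro _ ⟨p, hp, rfl⟩
    exact mem_aclosure_of_isBasis hI hp
  have h2 : ENat.card B ≤ (ξ '' I).encard := by
    refine card_le_of_subset_aclosure (τ := fun p : B => ξ p) hB ?_
    rintro _ ⟨p, rfl⟩
    exact h1 (hS p)
  have h3 : S.encard ≤ I.encard := hle.trans (h2.trans (Set.encard_image_le _ _))
  have h4 : I = S := (Set.toFinite I).eq_of_subset_of_encard_le hI.subset h3
  rw [← h4]
  exact indepOn_iff_comap.mp hI.indep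

end Bases

section Dimension

variable {ι κ : Type*} {n : ι → ℕ} [Fintype ι] [Fintype κ] {Z : Set (PStack n)}
  {c : (i : ι) → Fin (n i + 1)}

/-- The dimension of the projection to some of the factors is the transcendence degree of the
coordinates of these factors. -/
theorem dimOf_pull (hZ : IsIrredVariety Z) (hc : ∃ v ∈ cone Z, ∀ i, v ⟨i, c i⟩ ≠ 0)
    {f : κ → ι} (hf : Function.Injective f)
    [hW : (vanishingIdeal ℂ (chartSet Z c)).IsPrime] {B : Set (HIdx n)}
    (hB : AlgebraicIndepOn ℂ (coordFn (chartSet Z c)) B)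
    (hspan : ∀ p, coordFn (chartSet Z c) p ∈ aclosure (coordFn (chartSet Z c) '' B))
    (hspanf : ∀ k a, coordFn (chartSet Z c) ⟨f k, a⟩ ∈
      aclosure (coordFn (chartSet Z c) '' {p | p ∈ B ∧ p.1 ∈ Set.range f})) :
    dimOf (pullPt f '' Z) = ∑ k, Nat.card {a // (⟨f k, a⟩ : HIdx n) ∈ B} := by
  obtain ⟨hmem, hsum⟩ := mem_MDim_of_basis hZ hf hB hspan hspanf
  refine IsGreatest.csSup_eq ⟨⟨_, hmem, rfl⟩, ?_⟩
  rintro m ⟨e, he, rfl⟩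
  have := sum_le_of_mem_MDim hZ hc hspanf he
  rw [← hsum] at this
  exact_mod_cast this

end Dimension

end MultiSplit

/-! ### The splitting -/

open MultiSplit

/-- If `Dim(X) = P × Q` for polymatroid lattice-point sets `P`, `Q`
in complementary groups of factors, then there are `p`, `q` with `p + q = dim X`,
all elements of `P` have coordinate sum `p` and those of `Q` sum `q`,
`dim π_I(X) = p`, `dim π_J(X) = q`, and `X = π_I(X) × π_J(X)`. -/
theorem mdim_product_implies_split {ι₁ ι₂ : Type*}
    [Fintype ι₁] [DecidableEq ι₁] [Fintype ι₂] [DecidableEq ι₂]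
    {n₁ : ι₁ → ℕ} {n₂ : ι₂ → ℕ}
    (X : Set (PStack (Sum.elim n₁ n₂))) (hX : IsIrredVariety X)
    (P : Set (ι₁ → ℕ)) (Q : Set (ι₂ → ℕ))
    (hP : IsPolymatroidSet n₁ P) (hQ : IsPolymatroidSet n₂ Q)
    (hDim : MDim X = {e | (e ∘ Sum.inl) ∈ P ∧ (e ∘ Sum.inr) ∈ Q}) :
    ∃ p q : ℕ, p + q = dimOf X ∧
      (∀ e' ∈ P, ∑ i, e' i = p) ∧ (∀ e'' ∈ Q, ∑ j, e'' j = q) ∧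
      dimOf (projL '' X) = p ∧ dimOf (projR '' X) = q ∧
      X = prodSet (projL '' X) (projR '' X) := by
  classical
  -- a chart meeting `X`
  obtain ⟨v, hv⟩ := cone_nonempty hX
  have hv' := hv
  obtain ⟨x₀, hx₀, hrep⟩ := hv'
  choose c hcv using hrep.exists_ne
  have hc : ∃ v ∈ cone X, ∀ i, v ⟨i, c i⟩ ≠ 0 := ⟨v, hv, hcv⟩
  have hW := chartSet_prime hX hc
  obtain ⟨r₁, -, -, hr₁⟩ := hP
  obtain ⟨r₂, -, -, hr₂⟩ := hQ
  have hPsum : ∀ e ∈ P, ∑ i, e i = r₁ Finset.univ := fun e he => by rw [hr₁] at he; exact he.2.1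
  have hQsum : ∀ e ∈ Q, ∑ i, e i = r₂ Finset.univ := fun e he => by rw [hr₂] at he; exact he.2.1
  -- transcendence bases adapted to the two groups of coordinates
  let sL : Set (HIdx (Sum.elim n₁ n₂)) := {p | p.1 ∈ Set.range Sum.inl}
  let sR : Set (HIdx (Sum.elim n₁ n₂)) := {p | p.1 ∈ Set.range Sum.inr}
  obtain ⟨B, hB, hBs, hBL⟩ := exists_basis_adapted (coordFn (chartSet X c)) sL
  obtain ⟨B', hB', hBs', hBR⟩ := exists_basis_adapted (coordFn (chartSet X c)) sR
  have hid : pullPt (id : ι₁ ⊕ ι₂ → ι₁ ⊕ ι₂) '' X = X := Set.image_id X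
  have hrange : ∀ A : Set (HIdx (Sum.elim n₁ n₂)),
      {p | p ∈ A ∧ p.1 ∈ Set.range (id : ι₁ ⊕ ι₂ → ι₁ ⊕ ι₂)} = A := fun A => by simp
  have hfull : ∀ A : Set (HIdx (Sum.elim n₁ n₂)),
      AlgebraicIndepOn ℂ (coordFn (chartSet X c)) A →
      (∀ p, coordFn (chartSet X c) p ∈ aclosure (coordFn (chartSet X c) '' A)) →
      (fun i => Nat.card {a // (⟨i, a⟩ : HIdx (Sum.elim n₁ n₂)) ∈ A}) ∈ MDim X ∧
      ((∑ i, Nat.card {a // (⟨i, a⟩ : HIdx (Sum.elim n₁ n₂)) ∈ A} : ℕ) : ℕ∞) = A.encard := by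
    intro A hA hAs
    have := mem_MDim_of_basis hX Function.injective_id hA hAs (fun k a => by
      rw [hrange]; exact hAs _)
    rw [hrange] at this
    exact ⟨hid ▸ this.1, this.2⟩
  obtain ⟨heB, hcardB⟩ := hfull B hB hBs
  obtain ⟨heB', -⟩ := hfull B' hB' hBs'
  have hL := mem_MDim_of_basis hX Sum.inl_injective hB hBs (fun k a => hBL _ (Set.mem_range_self k))
  have hR := mem_MDim_of_basis hX Sum.inr_injective hB' hBs'
    (fun k a => hBR _ (Set.mem_range_self k))
  rw [hDim] at heB heB'
  have hLsum : ∑ k, Nat.card {a // (⟨Sum.inl k, a⟩ : HIdx (Sum.elim n₁ n₂)) ∈ B} =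
      r₁ Finset.univ := hPsum _ heB.1
  have hRsum : ∑ k, Nat.card {a // (⟨Sum.inr k, a⟩ : HIdx (Sum.elim n₁ n₂)) ∈ B'} =
      r₂ Finset.univ := hQsum _ heB'.2
  have hMsum : ∀ e ∈ MDim X, ∑ i, e i = r₁ Finset.univ + r₂ Finset.univ := by
    intro e he
    rw [hDim] at he
    rw [Fintype.sum_sum_type, ← hPsum _ he.1, ← hQsum _ he.2]
    rfl
  have hBmem : (fun i => Nat.card {a // (⟨i, a⟩ : HIdx (Sum.elim n₁ n₂)) ∈ B}) ∈ MDim X := by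
    rw [hDim]; exact heB
  -- the two bases of the groups of coordinates are together as large as a basis of everything
  have hindep : AlgebraicIndepOn ℂ (coordFn (chartSet X c)) (B ∩ sL ∪ B' ∩ sR) := by
    refine indepOn_of_encard_le hB ?_ ?_
    · rintro ⟨i | i, a⟩
      · exact aclosure_mono (Set.image_mono Set.subset_union_left) (hBL _ (Set.mem_range_self i))
      · exact aclosure_mono (Set.image_mono Set.subset_union_right) (hBR _ (Set.mem_range_self i))
    · refine (Set.encard_union_le _ _).trans (le_of_eq ?_)
      have h1 : (B ∩ sL).encard = ((r₁ Finset.univ : ℕ) : ℕ∞) := by rw [← hLsum]; exact hL.2.symm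
      have h2 : (B' ∩ sR).encard = ((r₂ Finset.univ : ℕ) : ℕ∞) := by rw [← hRsum]; exact hR.2.symm
      rw [h1, h2, ← hcardB, hMsum _ hBmem]
      push_cast
      rfl
  refine ⟨r₁ Finset.univ, r₂ Finset.univ, ?_, hPsum, hQsum, ?_, ?_, ?_⟩
  · have hg : IsGreatest {m | ∃ e ∈ MDim X, ∑ i, e i = m} (r₁ Finset.univ + r₂ Finset.univ) := by
      refine ⟨⟨_, hBmem, hMsum _ hBmem⟩, ?_⟩
      rintro m ⟨e, he, rfl⟩
      exact (hMsum e he).le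
    exact hg.csSup_eq.symm
  · rw [← hLsum]
    exact dimOf_pull hX hc Sum.inl_injective hB hBs (fun k a => hBL _ (Set.mem_range_self k))
  · rw [← hRsum]
    exact dimOf_pull hX hc Sum.inr_injective hB' hBs' (fun k a => hBR _ (Set.mem_range_self k))
  · apply Set.Subset.antisymm
    · intro x hx
      refine ⟨_, ⟨x, hx, rfl⟩, _, ⟨x, hx, rfl⟩, ?_⟩
      funext i
      rcases i with i | i <;> rfl
    · rintro _ ⟨_, ⟨x, hx, rfl⟩, _, ⟨x', hx', rfl⟩, rfl⟩
      have hmem := piecewise_mem hX hc (Set.range Sum.inl) hindep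
        (fun p hp => aclosure_mono (Set.image_mono
          (Set.subset_inter Set.subset_union_left Set.inter_subset_right)) (hBL p hp))
        (fun p hp => by
          obtain ⟨i | i, a⟩ := p
          · exact absurd (Set.mem_range_self i) hp
          · refine aclosure_mono (Set.image_mono
              (Set.subset_sdiff.mpr ⟨Set.subset_union_right, ?_⟩)) (hBR _ (Set.mem_range_self i))
            rw [Set.disjoint_left]
            rintro q ⟨-, j, hj⟩ ⟨k, hk⟩
            exact absurd (hk.trans hj.symm) Sum.inl_ne_inr) hx hx'
      convert hmem using 1
      funext i
      rcases i with i | i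
      · rw [Set.piecewise_eq_of_mem _ _ _ (Set.mem_range_self i)]; rfl
      · rw [Set.piecewise_eq_of_notMem _ _ _ (by simp)]; rfl
end

section
/- The algebraic matroid interpretation of multidimension: let Y ⊂ (P^1)^k be an irreducible multiprojective variety of intrinsic dimension e. Then Dim(Y) consists of 0-1 vectors with exactly e ones, and a 0-1 vector e with support S ⊂ {1,...,k}, |S| = e, lies in Dim(Y) if and only if the projection π_S : Y → (P^1)^e onto the factors indexed by S is surjective. -/
/-!
# The multidimension of an irreducible variety in `(ℙ¹)^k`

Let `ξ` be a generic point of the multicone over `Y`, with coordinates in the fraction field `K` of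
the multihomogeneous coordinate ring of `Y`, and let `aff ξ i = ξ_{i,1} / ξ_{i,0}` be its affine
coordinates. They define a matroid on `Fin k` (`coordMatroid`), whose independent sets are the sets
`S` for which the `aff ξ i`, `i ∈ S`, are algebraically independent over `ℂ`. The theorem follows
from three facts.

* The projection of `Y` to the factors in `S` is surjective iff `S` is independent
  (`surjective_iff`). If `S` is independent and a point of `(ℙ¹)^S` is prescribed, there is a
  valuation ring of `K / ℂ` whose place sends the affine coordinates in `S` to this point; since
  both coordinates of each factor can be made integral with one of them equal to `1`, the place
  specializes `ξ`, and the Nullstellensatz turns the specialization into a complex point of `Y`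
  (`exists_point_of_indep`, the valuative form of properness). Conversely a relation among the
  coordinates in `S` would hold at the points cut out by arbitrary linear forms
  (`indep_of_dense`).
* A 0-1 vector is in `MDim Y` iff its support `S` is a basis (`mem_MDim_iff`). General slices are
  nonempty iff `S` is independent. If every other coordinate `j` satisfies an equation over those
  in `S`, this equation, specialized to a general slice, remains nonzero and leaves finitely many
  values for `j` (`generic_finite`); otherwise `insert j S` is independent and every slice contains
  points with arbitrary `j`-th coordinate.
* All bases of a matroid have the same size, so `dimOf Y` is the rank of `coordMatroid`
  (`dimOf_eq`), and an independent set of that size is a basis.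
-/

open scoped BigOperators

open MultiProj

namespace P1Matroid
open MvPolynomial

/-! ### Generic points -/

/-- Homogeneous coordinates on `(ℙ¹)^k`: the pair `⟨i, a⟩` is the `a`-th coordinate of factor `i`. -/
abbrev Coord (k : ℕ) := (_ : Fin k) × Fin (1 + 1)

/-- Points of `(ℙ¹)^k`. -/
abbrev Pt (k : ℕ) := PStack (fun _ : Fin k => 1)

/-- The family `v` is a system of homogeneous representatives of the point `y`. -/
def IsRep {k : ℕ} (v : Fin k → Fin (1 + 1) → ℂ) (y : Pt k) : Prop :=
  ∀ i, ∃ hv : v i ≠ 0, Projectivization.mk ℂ (v i) hv = y i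

/-- The polynomial `g` vanishes on (the multicone over) `Y`. -/
def VanishesOn {k : ℕ} (Y : Set (Pt k)) (g : MvPolynomial (Coord k) ℂ) : Prop :=
  ∀ y ∈ Y, PolyVanish (n := fun _ : Fin k => 1) g y

lemma exists_rep {k : ℕ} (y : Pt k) : ∃ v, IsRep v y :=
  ⟨fun i => (y i).rep, fun i => ⟨(y i).rep_nonzero, (y i).mk_rep⟩⟩

lemma IsRep.smul {k : ℕ} {v : Fin k → Fin (1 + 1) → ℂ} {y : Pt k} (h : IsRep v y)
    (μ : Fin k → ℂ) (hμ : ∀ i, μ i ≠ 0) : IsRep (fun i => μ i • v i) y := by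
  intro i
  obtain ⟨hv, e⟩ := h i
  refine ⟨smul_ne_zero (hμ i) hv, ?_⟩
  rw [← e, Projectivization.mk_eq_mk_iff']
  exact ⟨μ i, rfl⟩

lemma IsRep.exists_smul {k : ℕ} {v w : Fin k → Fin (1 + 1) → ℂ} {y : Pt k} (h : IsRep v y)
    (h' : IsRep w y) : ∃ μ : Fin k → ℂ, (∀ i, μ i ≠ 0) ∧ ∀ i, w i = μ i • v i := by
  have : ∀ i, ∃ m : ℂ, m ≠ 0 ∧ w i = m • v i := by
    intro i
    obtain ⟨hv, e⟩ := h i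
    obtain ⟨hw, e'⟩ := h' i
    rw [← e, Projectivization.mk_eq_mk_iff'] at e'
    obtain ⟨a, ha⟩ := e'
    refine ⟨a, ?_, ha.symm⟩
    rintro rfl
    exact hw (by rw [← ha, zero_smul])
  choose μ h1 h2 using this
  exact ⟨μ, h1, h2⟩

/-- The multigraded rescaling `x_{i,a} ↦ μ_i x_{i,a}`. -/
noncomputable def scalePoly {k : ℕ} (μ : Fin k → ℂ) :
    MvPolynomial (Coord k) ℂ →ₐ[ℂ] MvPolynomial (Coord k) ℂ :=
  aeval (fun p => C (μ p.1) * X p)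

lemma aeval_scalePoly {k : ℕ} {L : Type*} [Field L] [Algebra ℂ L] (μ : Fin k → ℂ)
    (x : Coord k → L) (g : MvPolynomial (Coord k) ℂ) :
    aeval x (scalePoly μ g) = aeval (fun p => algebraMap ℂ L (μ p.1) * x p) g := by
  have : (aeval x).comp (scalePoly μ) =
      aeval (R := ℂ) (fun p : Coord k => algebraMap ℂ L (μ p.1) * x p) := by
    ext p
    simp [scalePoly]
  exact DFunLike.congr_fun this g

lemma VanishesOn.scale {k : ℕ} {Y : Set (Pt k)} {g : MvPolynomial (Coord k) ℂ}
    (h : VanishesOn Y g) (μ : Fin k → ℂ) (hμ : ∀ i, μ i ≠ 0) :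
    VanishesOn Y (scalePoly μ g) := by
  intro y hy v hv
  have := h y hy _ (IsRep.smul (y := y) hv μ hμ)
  have e := aeval_scalePoly μ (fun p : Coord k => v p.1 p.2) g
  exact e.trans this

/-- The ideal of polynomials vanishing at all representatives of a point is prime, since these
representatives form a single orbit of the torus `(ℂˣ)^k`. -/
lemma polyVanish_mul {k : ℕ} {g h : MvPolynomial (Coord k) ℂ} {y : Pt k}
    (H : PolyVanish (n := fun _ : Fin k => 1) (g * h) y) :
    PolyVanish (n := fun _ : Fin k => 1) g y ∨ PolyVanish (n := fun _ : Fin k => 1) h y := by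
  by_contra! hcon
  obtain ⟨h1, h2⟩ := hcon
  simp only [PolyVanish, not_forall] at h1 h2
  obtain ⟨v, hv, hgv⟩ := h1
  obtain ⟨w, hw, hhw⟩ := h2
  obtain ⟨μ, hμ, hwv⟩ := IsRep.exists_smul (y := y) hv hw
  -- pull back to the torus `(ℂˣ)^k` acting on the representative `v`
  let φ : MvPolynomial (Coord k) ℂ →ₐ[ℂ] MvPolynomial (Fin k) ℂ :=
    aeval (fun p => X p.1 * C (v p.1 p.2))
  have hφ : ∀ (ν : Fin k → ℂ) f, eval ν (φ f) = eval (fun p => ν p.1 * v p.1 p.2) f := by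
    intro ν f
    have : (aeval ν).comp φ = aeval (R := ℂ) (fun p : Coord k => ν p.1 * v p.1 p.2) := by
      ext p; simp [φ]
    have := DFunLike.congr_fun this f
    simpa [coe_aeval_eq_eval] using this
  have hz : φ (g * h) = 0 := by
    refine funext_set (fun _ => {0}ᶜ) (fun _ => (Set.finite_singleton _).infinite_compl) ?_
    intro ν hν
    rw [hφ, map_zero]
    refine H (fun i => ν i • v i) (IsRep.smul (y := y) hv ν fun i => ?_)
    simpa using hν i trivial
  rw [map_mul, mul_eq_zero] at hz
  rcases hz with hz | hz
  · apply hgv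
    have := hφ 1 g
    rw [hz] at this
    simpa using this.symm
  · apply hhw
    have := hφ μ h
    rw [hz, map_zero] at this
    rw [this]
    simp [hwv]

/-- `ξ` is a generic point of the multicone over `Y`. -/
def IsGenericPt {k : ℕ} (Y : Set (Pt k)) {K : Type} [Field K] [Algebra ℂ K]
    (ξ : Coord k → K) : Prop :=
  ∀ g : MvPolynomial (Coord k) ℂ, aeval ξ g = 0 ↔ VanishesOn Y g

/-- Irreducibility of `Y` makes its vanishing ideal prime; the generic point is the tuple of
coordinate functions in the fraction field of the multihomogeneous coordinate ring. -/
lemma exists_genericPt {k : ℕ} {Y : Set (Pt k)} (hY : IsIrredVariety Y) :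
    ∃ (K : Type) (_ : Field K) (_ : Algebra ℂ K) (ξ : Coord k → K), IsGenericPt Y ξ := by
  let J : Ideal (MvPolynomial (Coord k) ℂ) :=
    { carrier := {g | VanishesOn Y g}
      add_mem' := by
        intro a b ha hb y hy v hv
        have h1 := ha y hy v hv
        have h2 := hb y hy v hv
        rw [map_add, h1, h2, add_zero]
      zero_mem' := by
        intro y hy v hv
        exact map_zero _
      smul_mem' := by
        intro c a ha y hy v hv
        have h1 := ha y hy v hv
        rw [smul_eq_mul, map_mul, h1, mul_zero] }
  have hJ : J.IsPrime := by
    refine ⟨?_, ?_⟩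
    · rw [Ideal.ne_top_iff_one]
      intro h
      obtain ⟨y, hy⟩ := hY.2.1
      obtain ⟨v, hv⟩ := exists_rep y
      have := h y hy v hv
      rw [map_one] at this
      exact one_ne_zero this
    · intro g h hgh
      have key : ∀ f : MvPolynomial (Coord k) ℂ, IsAlgebraicSet (n := fun _ : Fin k => 1)
          {x | PolyVanish (n := fun _ : Fin k => 1) f x} := fun f => ⟨{f}, by simp⟩
      rcases hY.2.2 _ _ (key g) (key h) (fun y hy => polyVanish_mul (hgh y hy)) with H | H
      · exact Or.inl fun y hy => H hy
      · exact Or.inr fun y hy => H hy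
  refine ⟨FractionRing (MvPolynomial (Coord k) ℂ ⧸ J), inferInstance, inferInstance,
    fun p => algebraMap (MvPolynomial (Coord k) ℂ ⧸ J) _ (Ideal.Quotient.mk J (X p)), fun g => ?_⟩
  have : (aeval (R := ℂ) fun p : Coord k =>
      algebraMap (MvPolynomial (Coord k) ℂ ⧸ J) (FractionRing (MvPolynomial (Coord k) ℂ ⧸ J))
        (Ideal.Quotient.mk J (X p))) =
      (IsScalarTower.toAlgHom ℂ (MvPolynomial (Coord k) ℂ ⧸ J) _).comp (Ideal.Quotient.mkₐ ℂ J) := by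
    ext p; simp
  rw [this]
  simp only [AlgHom.comp_apply, IsScalarTower.coe_toAlgHom', Ideal.Quotient.mkₐ_eq_mk]
  rw [FaithfulSMul.algebraMap_eq_zero_iff, Ideal.Quotient.eq_zero_iff_mem]
  rfl

/-- The vanishing ideal of `Y` is multihomogeneous, so the relations of a generic point survive
rescaling each factor by an arbitrary element of the field. -/
lemma IsGenericPt.scale {k : ℕ} {Y : Set (Pt k)} {K : Type} [Field K] [Algebra ℂ K]
    {ξ : Coord k → K} (hξ : IsGenericPt Y ξ) {g : MvPolynomial (Coord k) ℂ}
    (hg : VanishesOn Y g) (μ : Fin k → K) : aeval (fun p => μ p.1 * ξ p) g = 0 := by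
  let φ : MvPolynomial (Coord k) ℂ →ₐ[ℂ] MvPolynomial (Fin k) K :=
    aeval (fun p => X p.1 * C (ξ p))
  have hφ : ∀ (ν : Fin k → K) f, eval ν (φ f) = aeval (fun p => ν p.1 * ξ p) f := by
    intro ν f
    have : ((aeval (R := K) ν).restrictScalars ℂ).comp φ =
        aeval (R := ℂ) (fun p : Coord k => ν p.1 * ξ p) := by
      ext p; simp [φ]
    have := DFunLike.congr_fun this f
    simpa [coe_aeval_eq_eval] using this
  have hz : φ g = 0 := by
    refine funext_set (fun _ => algebraMap ℂ K '' {0}ᶜ) (fun _ =>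
      (Set.finite_singleton _).infinite_compl.image (algebraMap ℂ K).injective.injOn) ?_
    intro ν hν
    choose c hc hcν using fun i => hν i trivial
    rw [hφ, map_zero]
    have h1 := (hξ _).2 (hg.scale c (fun i => by simpa using hc i))
    rw [aeval_scalePoly] at h1
    simpa only [hcν] using h1
  rw [← hφ, hz, map_zero]

/-- A generic point has no factor with both homogeneous coordinates zero. -/
lemma IsGenericPt.ne_zero {k : ℕ} {Y : Set (Pt k)} {K : Type} [Field K] [Algebra ℂ K]
    {ξ : Coord k → K} (hξ : IsGenericPt Y ξ) (hne : Y.Nonempty) (i : Fin k)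
    (h0 : ξ ⟨i, 0⟩ = 0) : ξ ⟨i, 1⟩ ≠ 0 := by
  intro h1
  obtain ⟨y, hy⟩ := hne
  obtain ⟨v, hv⟩ := exists_rep y
  have H : ∀ a, v i a = 0 := by
    intro a
    have : aeval ξ (X ⟨i, a⟩ : MvPolynomial (Coord k) ℂ) = 0 := by
      rw [aeval_X]
      fin_cases a
      · exact h0
      · exact h1
    have := (hξ _).1 this y hy v hv
    simpa using this
  exact (hv i).1 (funext H)

/-! ### Specialization of generic points -/

/-- Homogenization of a polynomial relation among affine coordinates, with an extra factor making
the identity hold for all values of the homogeneous coordinates (`x / 0 = 0` is harmless there). -/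
lemma exists_homogenize {k : ℕ} {σ : Type} [Fintype σ] [DecidableEq σ] (f : σ → Fin k)
    (q : MvPolynomial σ ℂ) :
    ∃ (Q : MvPolynomial (Coord k) ℂ) (N : ℕ), ∀ (L : Type) [Field L] [Algebra ℂ L]
      (x : Coord k → L), aeval x Q =
        (∏ s, x ⟨f s, 0⟩) ^ (N + 1) * aeval (fun s => x ⟨f s, 1⟩ / x ⟨f s, 0⟩) q := by
  induction q using MvPolynomial.induction_on with
  | C a =>
    refine ⟨C a * ∏ s, X ⟨f s, 0⟩, 0, fun L _ _ x => ?_⟩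
    simp [mul_comm]
  | add p q hp hq =>
    obtain ⟨P, N, hP⟩ := hp
    obtain ⟨Q, M, hQ⟩ := hq
    refine ⟨P * (∏ s, X ⟨f s, 0⟩) ^ M + Q * (∏ s, X ⟨f s, 0⟩) ^ N, N + M, fun L _ _ x => ?_⟩
    simp only [map_add, map_mul, map_pow, map_prod, aeval_X, hP, hQ]
    ring
  | mul_X p s hp =>
    obtain ⟨P, N, hP⟩ := hp
    refine ⟨P * X ⟨f s, 1⟩ * ∏ r ∈ Finset.univ.erase s, X ⟨f r, 0⟩, N + 1, fun L _ _ x => ?_⟩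
    simp only [map_mul, map_prod, aeval_X, hP]
    have e := Finset.mul_prod_erase Finset.univ (fun r => x ⟨f r, 0⟩) (Finset.mem_univ s)
    by_cases h0 : x ⟨f s, 0⟩ = 0
    · rw [← e]; simp [h0]
    · rw [pow_succ _ (N + 1), ← e]
      field_simp

lemma algebraicIndependent_update_inv {σ K : Type} [DecidableEq σ] [Field K] [Algebra ℂ K]
    {x : σ → K} (hx : AlgebraicIndependent ℂ x) (i : σ) :
    AlgebraicIndependent ℂ (Function.update x i (x i)⁻¹) := by
  rw [AlgebraicIndependent.iff_transcendental_adjoin_image i] at hx ⊢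
  have e1 : (fun j : {j // j ≠ i} => Function.update x i (x i)⁻¹ j) = fun j : {j // j ≠ i} => x j := by
    ext j; exact Function.update_of_ne j.2 _ _
  have e2 : Function.update x i (x i)⁻¹ '' {i}ᶜ = x '' {i}ᶜ :=
    Set.image_congr fun j hj => Function.update_of_ne hj _ _
  rw [e1, e2, Function.update_self]
  exact ⟨hx.1, fun h => hx.2 (IsAlgebraic.inv_iff.1 h)⟩

lemma algebraicIndependent_ite_inv {σ K : Type} [DecidableEq σ] [Field K] [Algebra ℂ K]
    {x : σ → K} (hx : AlgebraicIndependent ℂ x) (T : Finset σ) :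
    AlgebraicIndependent ℂ (fun i => if i ∈ T then (x i)⁻¹ else x i) := by
  induction T using Finset.induction_on with
  | empty => simpa using hx
  | insert a T ha ih =>
    convert algebraicIndependent_update_inv ih a using 1
    ext i
    by_cases h : i = a
    · subst h; simp [ha]
    · simp [h]

/-- Algebraically independent elements can be given arbitrary residues at a suitable place. -/
lemma exists_valuationSubring {σ K : Type} [Field K] [Algebra ℂ K] {u : σ → K}
    (hu : AlgebraicIndependent ℂ u) (b : σ → ℂ) :
    ∃ V : ValuationSubring K, (∀ c : ℂ, algebraMap ℂ K c ∈ V) ∧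
      ∀ s, u s - algebraMap ℂ K (b s) ∈ V.nonunits := by
  let A := Algebra.adjoin ℂ (Set.range u)
  let ψ : A →ₐ[ℂ] ℂ := (aeval b).comp hu.aevalEquiv.symm.toAlgHom
  let ψ' : A.toSubring →+* ℂ := ψ.toRingHom
  obtain ⟨V, hAV, hV⟩ := Ideal.image_subset_nonunits_valuationSubring (A := A.toSubring)
    (RingHom.ker ψ') (RingHom.ker_ne_top ψ')
  refine ⟨V, fun c => hAV (A.algebraMap_mem c), fun s => hV ?_⟩
  let z : A := hu.aevalEquiv (X s - C (b s))
  refine ⟨z, ?_, ?_⟩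
  · change ψ z = 0
    simp [ψ, z]
  · change (z : K) = _
    exact (hu.algebraMap_aevalEquiv (X s - C (b s))).trans (by simp)

/-- Weak Nullstellensatz: a proper ideal of `ℂ[X]` has a zero. -/
lemma exists_eval_eq_zero {τ : Type} [Finite τ] (P : Ideal (MvPolynomial τ ℂ)) (hP : P ≠ ⊤) :
    ∃ v : τ → ℂ, ∀ g ∈ P, eval v g = 0 := by
  obtain ⟨M, hM, hPM⟩ := Ideal.exists_le_maximal P hP
  obtain ⟨v, hv⟩ := eq_vanishingIdeal_singleton_of_isMaximal ℂ hM
  refine ⟨v, fun g hg => ?_⟩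
  have := hPM hg
  rw [hv, mem_vanishingIdeal_singleton_iff] at this
  simpa using this

/-- Points of `ℙ¹` in normalized coordinates `[1 : b]` or `[0 : 1]`. -/
lemma P1_cases (p : Projectivization ℂ (Fin (1 + 1) → ℂ)) :
    (∃ b : ℂ, ∀ v : Fin (1 + 1) → ℂ, v 0 = 1 → v 1 = b →
      ∃ hv : v ≠ 0, Projectivization.mk ℂ v hv = p) ∨
    (∀ v : Fin (1 + 1) → ℂ, v 0 = 0 → v 1 = 1 →
      ∃ hv : v ≠ 0, Projectivization.mk ℂ v hv = p) := by
  induction p using Projectivization.ind with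
  | h r hr =>
  by_cases h0 : r 0 = 0
  · right
    intro v h1 h2
    refine ⟨fun h => by simp [h] at h2, ?_⟩
    rw [Projectivization.mk_eq_mk_iff']
    have h3 : r 1 ≠ 0 := fun h => hr (by ext a; fin_cases a <;> assumption)
    refine ⟨(r 1)⁻¹, ?_⟩
    ext a
    fin_cases a
    · simp [h0, h1]
    · simp [h2, h3]
  · left
    refine ⟨r 1 / r 0, fun v h1 h2 => ?_⟩
    refine ⟨fun h => by simp [h] at h1, ?_⟩
    rw [Projectivization.mk_eq_mk_iff']
    refine ⟨(r 0)⁻¹, ?_⟩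
    ext a
    fin_cases a
    · simp [h0, h1]
    · simp [h2]; ring

/-- The affine coordinates `x_{i,1} / x_{i,0}` of a point; the value is `0` if `x_{i,0} = 0`. -/
noncomputable def aff {k : ℕ} {K : Type} [Field K] (ξ : Coord k → K) (i : Fin k) : K :=
  ξ ⟨i, 1⟩ / ξ ⟨i, 0⟩

/-- If the coordinates indexed by `S` are algebraically independent on `Y`, then `Y` surjects onto
the corresponding factors: by the valuative criterion a generic point specializes to a point over
any prescribed value, and the Nullstellensatz makes this point rational. -/
lemma exists_point_of_indep {k : ℕ} {Y : Set (Pt k)} (hY : IsIrredVariety Y) {K : Type} [Field K]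
    [Algebra ℂ K] {ξ : Coord k → K} (hξ : IsGenericPt Y ξ) (S : Finset (Fin k))
    (hS : AlgebraicIndependent ℂ (fun i : {j // j ∈ S} => aff ξ i))
    (a : {j // j ∈ S} → Projectivization ℂ (Fin (1 + 1) → ℂ)) :
    ∃ y ∈ Y, ∀ i : {j // j ∈ S}, y i = a i := by
  classical
  -- `T` is the set of indices at which the prescribed point is at infinity
  let T : Finset {j // j ∈ S} := Finset.univ.filter fun i =>
    ∀ v : Fin (1 + 1) → ℂ, v 0 = 0 → v 1 = 1 → ∃ hv : v ≠ 0, Projectivization.mk ℂ v hv = a i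
  have hb : ∀ i, ∃ b : ℂ, (i ∈ T → b = 0) ∧ (i ∉ T → ∀ v : Fin (1 + 1) → ℂ, v 0 = 1 → v 1 = b →
      ∃ hv : v ≠ 0, Projectivization.mk ℂ v hv = a i) := by
    intro i
    by_cases hi : i ∈ T
    · exact ⟨0, fun _ => rfl, fun h => absurd hi h⟩
    · rcases P1_cases (a i) with ⟨b, hb⟩ | h
      · exact ⟨b, fun h => absurd h hi, fun _ => hb⟩
      · exact absurd (Finset.mem_filter.2 ⟨Finset.mem_univ _, h⟩) hi
  choose b hbT hbT' using hb
  have haff : ∀ i ∈ S, aff ξ i ≠ 0 := fun i hi h => by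
    have := hS.transcendental ⟨i, hi⟩
    simp only [h] at this
    exact this isAlgebraic_zero
  -- at infinity the local coordinate `1 / aff ξ i` has residue `0`
  obtain ⟨V, hCV, hV⟩ := exists_valuationSubring (algebraicIndependent_ite_inv hS T) b
  let φ : ℂ →+* V := (algebraMap ℂ K).codRestrict V.toSubring hCV
  -- rescale each factor of `ξ` so that both coordinates lie in `V` and one of them is `1`
  have hρ : ∃ (ρ : Coord k → V) (μ : Fin k → K), (∀ p, (ρ p : K) = μ p.1 * ξ p) ∧
      ∀ i, (ξ ⟨i, 0⟩ ≠ 0 ∧ aff ξ i ∈ V ∧ ρ ⟨i, 0⟩ = 1 ∧ (ρ ⟨i, 1⟩ : K) = aff ξ i) ∨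
        (¬ (ξ ⟨i, 0⟩ ≠ 0 ∧ aff ξ i ∈ V) ∧ ρ ⟨i, 1⟩ = 1 ∧ (ρ ⟨i, 0⟩ : K) = (aff ξ i)⁻¹) := by
    have : ∀ i, ∃ (r : Fin (1 + 1) → V) (m : K), (∀ a, (r a : K) = m * ξ ⟨i, a⟩) ∧
        ((ξ ⟨i, 0⟩ ≠ 0 ∧ aff ξ i ∈ V ∧ r 0 = 1 ∧ (r 1 : K) = aff ξ i) ∨
        (¬ (ξ ⟨i, 0⟩ ≠ 0 ∧ aff ξ i ∈ V) ∧ r 1 = 1 ∧ (r 0 : K) = (aff ξ i)⁻¹)) := by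
      intro i
      by_cases hD : ξ ⟨i, 0⟩ ≠ 0 ∧ aff ξ i ∈ V
      · refine ⟨![1, ⟨aff ξ i, hD.2⟩], (ξ ⟨i, 0⟩)⁻¹, ?_, Or.inl ⟨hD.1, hD.2, rfl, rfl⟩⟩
        have := hD.1
        intro c
        fin_cases c
        · simp [this]
        · simp [aff]; ring
      · have hinv : (aff ξ i)⁻¹ ∈ V := by
          by_cases h0 : ξ ⟨i, 0⟩ = 0
          · simp [aff, h0, V.zero_mem]
          · exact (V.mem_or_inv_mem _).resolve_left fun h => hD ⟨h0, h⟩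
        have h1 : ξ ⟨i, 1⟩ ≠ 0 := by
          by_cases h0 : ξ ⟨i, 0⟩ = 0
          · exact hξ.ne_zero hY.2.1 i h0
          · intro h1
            exact hD ⟨h0, by simp [aff, h1, V.zero_mem]⟩
        refine ⟨![⟨(aff ξ i)⁻¹, hinv⟩, 1], (ξ ⟨i, 1⟩)⁻¹, ?_, Or.inr ⟨hD, rfl, rfl⟩⟩
        intro c
        fin_cases c
        · simp [aff]; ring
        · simp [h1]
    choose r m h1 h2 using this
    exact ⟨fun p => r p.1 p.2, m, fun p => h1 p.1 p.2, h2⟩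
  obtain ⟨ρ, μ, hρμ, hρ⟩ := hρ
  let Φ : MvPolynomial (Coord k) ℂ →+* V := eval₂Hom φ ρ
  have hΦ : ∀ g, (Φ g : K) = aeval (fun p => (ρ p : K)) g := by
    intro g
    have : V.subtype.comp Φ = (aeval (R := ℂ) (fun p => (ρ p : K))).toRingHom := by
      ext p
      · simp [Φ, φ]
      · simp [Φ]
    exact DFunLike.congr_fun this g
  let Ψ : MvPolynomial (Coord k) ℂ →+* IsLocalRing.ResidueField V :=
    (IsLocalRing.residue V).comp Φ
  have hΨ : ∀ g, (Φ g : K) ∈ V.nonunits → Ψ g = 0 := by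
    intro g hg
    rw [V.coe_mem_nonunits_iff] at hg
    exact (IsLocalRing.residue_eq_zero_iff _).2 hg
  -- the residue field may be larger than `ℂ`, so a complex zero of the kernel replaces the
  -- residues of `ρ`; residues that already lie in `ℂ` are kept
  obtain ⟨v, hv⟩ := exists_eval_eq_zero (RingHom.ker Ψ) (RingHom.ker_ne_top Ψ)
  have hvan : ∀ g, VanishesOn Y g → eval v g = 0 := by
    intro g hg
    refine hv g (hΨ g ?_)
    rw [hΦ]
    simp only [hρμ]
    rw [hξ.scale hg]
    exact V.nonunits.zero_mem
  have hval : ∀ p c, (ρ p : K) - algebraMap ℂ K c ∈ V.nonunits → v p = c := by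
    intro p c h
    have := hv (X p - C c) (hΨ _ (by rw [hΦ]; simpa using h))
    simpa [sub_eq_zero] using this
  have hval1 : ∀ p, ρ p = 1 → v p = 1 := fun p h => hval p 1 (by simp [h])
  have hv0 : ∀ i, (fun c => v ⟨i, c⟩) ≠ 0 := by
    intro i h
    rcases hρ i with h' | h'
    · exact one_ne_zero ((hval1 _ h'.2.2.1).symm.trans (congrFun h 0))
    · exact one_ne_zero ((hval1 _ h'.2.1).symm.trans (congrFun h 1))
  let y : Pt k := fun i => Projectivization.mk ℂ (fun c => v ⟨i, c⟩) (hv0 i)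
  have hrep : IsRep (fun i c => v ⟨i, c⟩) y := fun i => ⟨hv0 i, rfl⟩
  refine ⟨y, ?_, ?_⟩
  · obtain ⟨F, hF⟩ := hY.1
    rw [hF]
    intro f hf w hw
    have hfY : VanishesOn Y f := fun z hz => by
      rw [hF] at hz
      exact hz f hf
    obtain ⟨ν, hν, hwν⟩ := hrep.exists_smul (w := w) hw
    have h1 : aeval v (scalePoly ν f) = 0 := hvan _ (hfY.scale ν hν)
    rw [aeval_scalePoly] at h1
    refine Eq.trans ?_ h1
    change eval _ f = eval _ f
    simp [hwν]
  · intro i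
    have hVi := hV i
    have hd := hρ i
    by_cases hi : i ∈ T
    · simp only [hi, if_true, hbT i hi, map_zero, sub_zero] at hVi
      rw [V.inv_mem_nonunits_iff] at hVi
      have hnV := hVi.resolve_left (haff i i.2)
      rcases hd with hd | hd
      · exact absurd hd.2.1 hnV
      · have h := (Finset.mem_filter.1 hi).2 (fun c => v ⟨i, c⟩) (hval _ 0 ?_) (hval1 _ hd.2.1)
        · exact h.2
        · rw [hd.2.2, map_zero, sub_zero, V.inv_mem_nonunits_iff]
          exact hVi
    · simp only [hi, if_false] at hVi
      have htV : aff ξ i ∈ V := by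
        have := V.add_mem _ _ (V.nonunits_subset hVi) (hCV (b i))
        simpa using this
      have h0 : ξ ⟨i, 0⟩ ≠ 0 := fun h => haff i i.2 (by simp [aff, h])
      rcases hd with hd | hd
      · have h := hbT' i hi (fun c => v ⟨i, c⟩) (hval1 _ hd.2.2.1) (hval _ _ ?_)
        · exact h.2
        · rw [hd.2.2.2]; exact hVi
      · exact absurd ⟨h0, htV⟩ hd.1

/-! ### Slices and algebraic relations -/

/-- Parameters of slices of type `e` in `(ℙ¹)^k`. -/
abbrev SP {k : ℕ} (e : Fin k → ℕ) := SliceParams (fun _ : Fin k => 1) e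

/-- The zero `(-c₁, c₀)` of the first linear form `c` of the slice in factor `i`; it is `(0, 0)`
if there is no such form. -/
noncomputable def slicePt {k : ℕ} {e : Fin k → ℕ} (L : SP e) (i : Fin k) : Fin (1 + 1) → ℂ :=
  if h : 0 < e i then ![-(L i ⟨0, h⟩ 1), L i ⟨0, h⟩ 0] else 0

lemma analyticAt_slicePt {k : ℕ} {e : Fin k → ℕ} (i : Fin k) (a : Fin (1 + 1)) (L : SP e) :
    AnalyticAt ℂ (fun L : SP e => slicePt L i a) L := by
  by_cases h : 0 < e i
  · have key : ∀ c : Fin (1 + 1), AnalyticAt ℂ (fun L : SP e => L i ⟨0, h⟩ c) L := by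
      intro c
      exact (((ContinuousLinearMap.proj (R := ℂ) (φ := fun _ : Fin (1 + 1) => ℂ) c).comp
        (ContinuousLinearMap.proj (R := ℂ) (φ := fun _ : Fin (e i) => Fin (1 + 1) → ℂ)
          ⟨0, h⟩)).comp
        (ContinuousLinearMap.proj (R := ℂ) (φ := fun i : Fin k => Fin (e i) → Fin (1 + 1) → ℂ)
          i)).analyticAt L
    fin_cases a
    · have e1 : (fun L : SP e => slicePt L i 0) = fun L => -(L i ⟨0, h⟩ 1) := by
        ext L
        simp [slicePt, h]
      exact e1 ▸ (key 1).fun_neg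
    · have e1 : (fun L : SP e => slicePt L i 1) = fun L => L i ⟨0, h⟩ 0 := by
        ext L
        simp [slicePt, h]
      exact e1 ▸ key 0
  · simpa [slicePt, h] using analyticAt_const

/-- The non-vanishing locus of a nonzero analytic function is open and dense. -/
lemma dense_ne_zero {E : Type*} [NormedAddCommGroup E] [NormedSpace ℂ E] {f : E → ℂ}
    (hf : ∀ x, AnalyticAt ℂ f x) (x₀ : E) (hx₀ : f x₀ ≠ 0) :
    IsOpen {x | f x ≠ 0} ∧ Dense {x | f x ≠ 0} := by
  have hc : Continuous f := continuous_iff_continuousAt.2 fun x => (hf x).continuousAt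
  refine ⟨isOpen_ne_fun hc continuous_const, ?_⟩
  intro z
  by_contra hz
  have hev : f =ᶠ[nhds z] 0 := by
    filter_upwards [isClosed_closure.isOpen_compl.mem_nhds hz] with x hx
    by_contra h
    exact hx (subset_closure h)
  have := AnalyticOnNhd.eq_of_eventuallyEq (fun x _ => hf x)
    (fun x _ => analyticAt_const (v := (0 : ℂ))) hev
  exact hx₀ (congrFun this x₀)

lemma plinVanish_iff {c v : Fin (1 + 1) → ℂ} (hv : v ≠ 0) :
    PLinVanish c (Projectivization.mk ℂ v hv) ↔ c 0 * v 0 + c 1 * v 1 = 0 := by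
  constructor
  · intro h
    simpa [Fin.sum_univ_two] using h v hv rfl
  · intro h w hw e
    rw [Projectivization.mk_eq_mk_iff'] at e
    obtain ⟨a, rfl⟩ := e
    refine (Fin.sum_univ_two _).trans ?_
    simp only [Pi.smul_apply, smul_eq_mul]
    linear_combination a * h

lemma exists_plinVanish (c : Fin (1 + 1) → ℂ) : ∃ p, PLinVanish c p := by
  by_cases h : (![-(c 1), c 0] : Fin (1 + 1) → ℂ) = 0
  · have h1 : c 1 = 0 := by simpa using congrFun h 0
    have h0 : c 0 = 0 := by simpa using congrFun h 1
    refine ⟨Projectivization.mk ℂ ![0, 1] (fun h => by simpa using congrFun h 1), ?_⟩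
    rw [plinVanish_iff]
    simp [h0, h1]
  · refine ⟨Projectivization.mk ℂ _ h, ?_⟩
    rw [plinVanish_iff]
    simp; ring

lemma slicePt_rep {k : ℕ} {e : Fin k → ℕ} {L : SP e} {y : Pt k} (hy : y ∈ SliceZeros L)
    {i : Fin k} (hi : slicePt L i ≠ 0) : Projectivization.mk ℂ (slicePt L i) hi = y i := by
  have h : 0 < e i := by
    by_contra h
    exact hi (by simp [slicePt, h])
  have hv := hy i ⟨0, h⟩
  generalize y i = p at hv
  induction p using Projectivization.ind with
  | h v hv0 =>
  rw [plinVanish_iff] at hv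
  rw [Projectivization.mk_eq_mk_iff']
  have e0 : slicePt L i 0 = -(L i ⟨0, h⟩ 1) := by simp [slicePt, h]
  have e1 : slicePt L i 1 = L i ⟨0, h⟩ 0 := by simp [slicePt, h]
  rw [← e1, show L i ⟨0, h⟩ 1 = -slicePt L i 0 by rw [e0, neg_neg]] at hv
  by_cases h0 : v 0 = 0
  · have h1 : v 1 ≠ 0 := fun h1 => hv0 (by ext a; fin_cases a <;> assumption)
    have h2 : slicePt L i 0 = 0 := by
      rw [h0] at hv
      simpa [h1] using hv
    refine ⟨slicePt L i 1 / v 1, ?_⟩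
    ext a
    fin_cases a
    · simp [h0, h2]
    · simp [h1]
  · refine ⟨slicePt L i 0 / v 0, ?_⟩
    ext a
    fin_cases a
    · simp [h0]
    · simp only [Fin.mk_one, Pi.smul_apply, smul_eq_mul]
      field_simp
      linear_combination -hv

/-- A relation among affine coordinates gives a multihomogeneous equation of `Y`. -/
lemma exists_equation {k : ℕ} {Y : Set (Pt k)} {K : Type} [Field K]
    [Algebra ℂ K] {ξ : Coord k → K} (hξ : IsGenericPt Y ξ) (S : Finset (Fin k))
    (q : MvPolynomial {j // j ∈ S} ℂ) (hq : aeval (fun i : {j // j ∈ S} => aff ξ i) q = 0) :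
    ∃ (Q : MvPolynomial (Coord k) ℂ) (N : ℕ), VanishesOn Y Q ∧ ∀ x : Coord k → ℂ,
      eval x Q = (∏ s : {j // j ∈ S}, x ⟨s, 0⟩) ^ (N + 1) *
        eval (fun s : {j // j ∈ S} => x ⟨s, 1⟩ / x ⟨s, 0⟩) q := by
  obtain ⟨Q, N, hQ⟩ := exists_homogenize (fun i : {j // j ∈ S} => (i : Fin k)) q
  refine ⟨Q, N, (hξ Q).1 ?_, fun x => hQ ℂ x⟩
  rw [hQ]
  simp only [aff] at hq
  rw [hq, mul_zero]

/-- If slices of type `e` generically meet `Y`, the coordinates in the support of `e` are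
algebraically independent: a relation would hold at the points cut out by generic forms. -/
lemma indep_of_dense {k : ℕ} {Y : Set (Pt k)} {K : Type} [Field K]
    [Algebra ℂ K] {ξ : Coord k → K} (hξ : IsGenericPt Y ξ) (e : Fin k → ℕ) (S : Finset (Fin k))
    (hS : ∀ i ∈ S, 0 < e i) (U : Set (SP e)) (hU : Dense U)
    (hne : ∀ L ∈ U, (Y ∩ SliceZeros L).Nonempty) :
    AlgebraicIndependent ℂ (fun i : {j // j ∈ S} => aff ξ i) := by
  rw [algebraicIndependent_iff]
  intro q hq
  obtain ⟨Q, N, hQY, hQ⟩ := exists_equation hξ S q hq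
  have hcont : Continuous fun L : SP e => eval (fun p : Coord k => slicePt L p.1 p.2) Q :=
    (MvPolynomial.continuous_eval Q).comp (continuous_pi fun p =>
      continuous_iff_continuousAt.2 fun L => (analyticAt_slicePt p.1 p.2 L).continuousAt)
  have hzero : ∀ L ∈ U, eval (fun p : Coord k => slicePt L p.1 p.2) Q = 0 := by
    intro L hL
    obtain ⟨y, hyY, hyL⟩ := hne L hL
    by_cases hw : ∀ i ∈ S, slicePt L i ≠ 0
    · classical
      have hx : IsRep (fun i => if i ∈ S then slicePt L i else (y i).rep) y := by
        intro i
        by_cases hi : i ∈ S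
        · simp only [hi, if_true]
          exact ⟨hw i hi, slicePt_rep hyL (hw i hi)⟩
        · simp only [hi, if_false]
          exact ⟨(y i).rep_nonzero, (y i).mk_rep⟩
      have := hQY y hyY _ hx
      rw [hQ] at this ⊢
      simpa using this
    -- at a degenerate slice the factor `∏ x_{s,0}` of `Q` vanishes
    · push Not at hw
      obtain ⟨i, hi, h0⟩ := hw
      rw [hQ, Finset.prod_eq_zero (Finset.mem_univ ⟨i, hi⟩) (by simp [h0])]
      simp
  have hall : ∀ L : SP e, eval (fun p : Coord k => slicePt L p.1 p.2) Q = 0 :=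
    fun L => congrFun (hcont.ext_on hU continuous_const hzero) L
  apply MvPolynomial.funext
  intro b
  -- the linear form with coefficients `(b i, -1)` has the zero `[1 : b i]`
  have hb := hall (fun i _ => if h : i ∈ S then ![b ⟨i, h⟩, -1] else 0)
  rw [hQ] at hb
  have h0 : ∀ s : {j // j ∈ S}, 0 < e s := fun s => hS s s.2
  simpa [slicePt, h0] using hb

/-! ### Finiteness of general slices -/

/-- The coordinates of the slice zeros `slicePt L`, with factor `j` replaced by `[1 : z]`. -/
noncomputable def lineAt {k : ℕ} {e : Fin k → ℕ} (L : SP e) (j : Fin k) (z : ℂ) (p : Coord k) : ℂ :=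
  if p.1 = j then (![1, z] : Fin (1 + 1) → ℂ) p.2 else slicePt L p.1 p.2

lemma finite_roots {k : ℕ} {e : Fin k → ℕ} (L : SP e) (j : Fin k)
    (Q : MvPolynomial (Coord k) ℂ) (z₀ : ℂ) (h : eval (lineAt L j z₀) Q ≠ 0) :
    {z | eval (lineAt L j z) Q = 0}.Finite := by
  -- `Q` restricted to the line where the `j`-th factor is `[1 : z]`, as a polynomial in `z`
  let P : Polynomial ℂ := aeval (fun p : Coord k => if p.1 = j then
    (![1, Polynomial.X] : Fin (1 + 1) → Polynomial ℂ) p.2 else Polynomial.C (slicePt L p.1 p.2)) Q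
  have hP : ∀ z, P.eval z = eval (lineAt L j z) Q := by
    intro z
    have : (Polynomial.aeval z).comp (aeval (R := ℂ) (fun p : Coord k => if p.1 = j then
        (![1, Polynomial.X] : Fin (1 + 1) → Polynomial ℂ) p.2
        else Polynomial.C (slicePt L p.1 p.2))) = aeval (R := ℂ) (lineAt L j z) := by
      ext ⟨i, a⟩
      by_cases hi : i = j
      · fin_cases a <;> simp [hi, lineAt]
      · simp [hi, lineAt]
    exact DFunLike.congr_fun this Q
  have hP0 : P ≠ 0 := by
    intro h0
    rw [← hP, h0, Polynomial.eval_zero] at h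
    exact h rfl
  refine (Polynomial.finite_setOfPred_isRoot hP0).subset fun z hz => ?_
  change P.eval z = 0
  rw [hP]
  exact hz

/-- If coordinate `j` is algebraic over the coordinates in `S`, it takes finitely many values on a
general slice by forms in the factors of `S`. -/
lemma finite_coord {k : ℕ} {Y : Set (Pt k)} {K : Type} [Field K]
    [Algebra ℂ K] {ξ : Coord k → K} (hξ : IsGenericPt Y ξ) (e : Fin k → ℕ) (S : Finset (Fin k))
    (hS : ∀ i ∈ S, 0 < e i) (j : Fin k) (hj : j ∉ S)
    (hdep : ¬ AlgebraicIndependent ℂ (fun i : {l // l ∈ insert j S} => aff ξ i)) :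
    ∃ U : Set (SP e), IsOpen U ∧ Dense U ∧ ∀ L ∈ U, (∀ i ∈ S, slicePt L i ≠ 0) →
      ((fun y : Pt k => y j) '' (Y ∩ SliceZeros L)).Finite := by
  classical
  rw [algebraicIndependent_iff] at hdep
  push Not at hdep
  obtain ⟨q, hq, hq0⟩ := hdep
  obtain ⟨b, hb⟩ : ∃ b, eval b q ≠ 0 := by
    by_contra! hcon
    exact hq0 (MvPolynomial.funext fun b => by rw [hcon, map_zero])
  obtain ⟨Q, N, hQY, hQ⟩ := exists_equation hξ (insert j S) q hq
  let z₀ : ℂ := b ⟨j, Finset.mem_insert_self j S⟩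
  have han : ∀ L : SP e, AnalyticAt ℂ (fun L : SP e => eval (lineAt L j z₀) Q) L := by
    intro L
    refine AnalyticAt.aeval_mvPolynomial (f := fun (L : SP e) p => lineAt L j z₀ p) ?_ Q
    intro p
    by_cases hp : p.1 = j
    · simpa [lineAt, hp] using analyticAt_const
    · simpa [lineAt, hp] using analyticAt_slicePt p.1 p.2 L
  obtain ⟨ho, hd⟩ := dense_ne_zero han
    (fun i _ => if h : i ∈ insert j S then ![b ⟨i, h⟩, -1] else 0) (by
      rw [hQ]
      have h1 : ∀ s : {l // l ∈ insert j S}, lineAt (e := e) (fun i _ =>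
          if h : i ∈ insert j S then ![b ⟨i, h⟩, -1] else 0) j z₀ ⟨s, 0⟩ = 1 := by
        rintro ⟨s, hs⟩
        by_cases hsj : s = j
        · simp [lineAt, hsj]
        · have : 0 < e s := hS s ((Finset.mem_insert.1 hs).resolve_left hsj)
          simp [lineAt, hsj, slicePt, this, (Finset.mem_insert.1 hs).resolve_left hsj]
      have h2 : ∀ s : {l // l ∈ insert j S}, lineAt (e := e) (fun i _ =>
          if h : i ∈ insert j S then ![b ⟨i, h⟩, -1] else 0) j z₀ ⟨s, 1⟩ = b s := by
        rintro ⟨s, hs⟩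
        by_cases hsj : s = j
        · subst hsj
          simp [lineAt, z₀]
        · have : 0 < e s := hS s ((Finset.mem_insert.1 hs).resolve_left hsj)
          simp [lineAt, hsj, slicePt, this, (Finset.mem_insert.1 hs).resolve_left hsj]
      simp only [h1, h2]
      simpa using hb)
  refine ⟨_, ho, hd, fun L hL hLS => ?_⟩
  have hfin := finite_roots L j Q z₀ hL
  have hne1 : ∀ z : ℂ, (![1, z] : Fin (1 + 1) → ℂ) ≠ 0 := fun z h => by simpa using congrFun h 0
  have hne0 : (![0, 1] : Fin (1 + 1) → ℂ) ≠ 0 := fun h => by simpa using congrFun h 1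
  refine ((hfin.image fun z => Projectivization.mk ℂ _ (hne1 z)).insert
    (Projectivization.mk ℂ _ hne0)).subset ?_
  rintro _ ⟨y, ⟨hyY, hyL⟩, rfl⟩
  rcases P1_cases (y j) with ⟨z, hz⟩ | hinf
  · refine Or.inr ⟨z, ?_, (hz ![1, z] rfl rfl).2⟩
    have hx : IsRep (fun i => if i = j then ![1, z] else
        if i ∈ S then slicePt L i else (y i).rep) y := by
      intro i
      by_cases hij : i = j
      · subst hij
        simpa using hz ![1, z] rfl rfl
      by_cases hi : i ∈ S
      · simp only [hij, hi, if_true, if_false]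
        exact ⟨hLS i hi, slicePt_rep hyL (hLS i hi)⟩
      · simp only [hij, hi, if_false]
        exact ⟨(y i).rep_nonzero, (y i).mk_rep⟩
    have := hQY y hyY _ hx
    -- `Q` only involves the factors in `insert j S`, where this representative is `lineAt L j z`
    have hcoord : ∀ (s : {l // l ∈ insert j S}) a, (if (s : Fin k) = j then ![1, z] else
        if (s : Fin k) ∈ S then slicePt L s else (y s).rep) a = lineAt L j z ⟨s, a⟩ := by
      rintro ⟨s, hs⟩ a
      by_cases hsj : s = j
      · simp [lineAt, hsj]
      · simp [lineAt, hsj, (Finset.mem_insert.1 hs).resolve_left hsj]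
    change eval (lineAt L j z) Q = 0
    rw [hQ] at this ⊢
    simpa only [hcoord] using this
  · exact Or.inl (hinf ![0, 1] rfl rfl).2.symm

/-- If the coordinates in the support `S` of `e` generate the others algebraically, a general slice
of type `e` is finite. -/
lemma generic_finite {k : ℕ} {Y : Set (Pt k)} {K : Type} [Field K]
    [Algebra ℂ K] {ξ : Coord k → K} (hξ : IsGenericPt Y ξ) (e : Fin k → ℕ) (S : Finset (Fin k))
    (hS : ∀ i ∈ S, 0 < e i)
    (hdep : ∀ j, j ∉ S →
      ¬ AlgebraicIndependent ℂ (fun i : {l // l ∈ insert j S} => aff ξ i)) :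
    Generic (fun L : SP e => (Y ∩ SliceZeros L).Finite) := by
  classical
  have H : ∀ j, ∃ U : Set (SP e), IsOpen U ∧ Dense U ∧ ∀ L ∈ U,
      (j ∈ S → slicePt L j ≠ 0) ∧ ((∀ i ∈ S, slicePt L i ≠ 0) →
        ((fun y : Pt k => y j) '' (Y ∩ SliceZeros L)).Finite) := by
    intro j
    by_cases hj : j ∈ S
    · obtain ⟨ho, hd⟩ := dense_ne_zero (fun L : SP e => analyticAt_slicePt j 1 L)
        (fun _ _ => ![1, 0]) (by simp [slicePt, hS j hj])
      refine ⟨_, ho, hd, fun L hL => ?_⟩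
      have h0 : slicePt L j ≠ 0 := fun h => hL (by simp [h])
      refine ⟨fun _ => h0, fun _ => ?_⟩
      refine (Set.finite_singleton (Projectivization.mk ℂ _ h0)).subset ?_
      rintro _ ⟨y, ⟨-, hy⟩, rfl⟩
      exact (slicePt_rep hy h0).symm
    · obtain ⟨U, ho, hd, h⟩ := finite_coord hξ e S hS j hj (hdep j hj)
      exact ⟨U, ho, hd, fun L hL => ⟨fun h' => absurd h' hj, h L hL⟩⟩
  choose U ho hd h using H
  refine ⟨⋂ j, U j, isOpen_iInter_of_finite ho, dense_iInter_of_isOpen ho hd, fun L hL => ?_⟩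
  have hL' := Set.mem_iInter.1 hL
  have hne : ∀ i ∈ S, slicePt L i ≠ 0 := fun i hi => (h i L (hL' i)).1 hi
  refine (Set.Finite.pi fun j => (h j L (hL' j)).2 hne).subset fun y hy j _ => ⟨y, hy, rfl⟩

/-- Independent coordinates can be prescribed on the zero locus of any slice supported on them. -/
lemma slice_nonempty {k : ℕ} {Y : Set (Pt k)} (hY : IsIrredVariety Y) {K : Type} [Field K]
    [Algebra ℂ K] {ξ : Coord k → K} (hξ : IsGenericPt Y ξ) {e : Fin k → ℕ} (he : ∀ i, e i ≤ 1)
    (S : Finset (Fin k)) (hS : ∀ i, i ∈ S ↔ e i = 1)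
    (hind : AlgebraicIndependent ℂ (fun i : {l // l ∈ S} => aff ξ i)) (L : SP e) :
    (Y ∩ SliceZeros L).Nonempty := by
  have hpos : ∀ i : {l // l ∈ S}, 0 < e i := fun i => by rw [(hS i).1 i.2]; exact one_pos
  choose p hp using fun i : {l // l ∈ S} => exists_plinVanish (L i ⟨0, hpos i⟩)
  obtain ⟨y, hy, hyp⟩ := exists_point_of_indep hY hξ S hind p
  refine ⟨y, hy, fun i j => ?_⟩
  have hi : i ∈ S := (hS i).2 (le_antisymm (he i) (by have := j.2; omega))
  have : j = ⟨0, hpos ⟨i, hi⟩⟩ := by ext; have := j.2; have := he i; simp; omega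
  rw [this, hyp ⟨i, hi⟩]
  exact hp ⟨i, hi⟩

/-- For a 0-1 vector, lying in the multidimension means that its support is a basis of the
algebraic matroid of the coordinates. -/
lemma mem_MDim_iff {k : ℕ} {Y : Set (Pt k)} (hY : IsIrredVariety Y) {K : Type} [Field K]
    [Algebra ℂ K] {ξ : Coord k → K} (hξ : IsGenericPt Y ξ) {e : Fin k → ℕ} (he : ∀ i, e i ≤ 1)
    (S : Finset (Fin k)) (hS : ∀ i, i ∈ S ↔ e i = 1) :
    e ∈ MDim Y ↔ AlgebraicIndependent ℂ (fun i : {l // l ∈ S} => aff ξ i) ∧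
      ∀ j, j ∉ S → ¬ AlgebraicIndependent ℂ (fun i : {l // l ∈ insert j S} => aff ξ i) := by
  classical
  have hpos : ∀ i ∈ S, 0 < e i := fun i hi => by rw [(hS i).1 hi]; exact one_pos
  constructor
  · rintro ⟨-, U, ho, hd, hU⟩
    refine ⟨indep_of_dense hξ e S hpos U hd fun L hL => (hU L hL).2, fun j hj hind => ?_⟩
    obtain ⟨L, hL⟩ := hd.nonempty
    choose p hp using fun i : {l // l ∈ S} => exists_plinVanish (L i ⟨0, hpos i i.2⟩)
    have hne1 : ∀ z : ℂ, (![1, z] : Fin (1 + 1) → ℂ) ≠ 0 :=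
      fun z h => by simpa using congrFun h 0
    -- every value `[1 : z]` of the free coordinate `j` is attained on the slice
    have hpt : ∀ z : ℂ, ∃ y ∈ Y ∩ SliceZeros L, y j = Projectivization.mk ℂ _ (hne1 z) := by
      intro z
      obtain ⟨y, hy, hyp⟩ := exists_point_of_indep hY hξ (insert j S) hind
        (fun i => if h : (i : Fin k) ∈ S then p ⟨i, h⟩ else Projectivization.mk ℂ _ (hne1 z))
      refine ⟨y, ⟨hy, fun i l => ?_⟩, ?_⟩
      · have hi : i ∈ S := (hS i).2 (le_antisymm (he i) (by have := l.2; omega))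
        have : l = ⟨0, hpos i hi⟩ := by ext; have := l.2; have := he i; simp; omega
        rw [this, hyp ⟨i, Finset.mem_insert_of_mem hi⟩]
        simpa [hi] using hp ⟨i, hi⟩
      · rw [hyp ⟨j, Finset.mem_insert_self j S⟩]
        simp [hj]
    choose y hy hyj using hpt
    refine Set.infinite_of_injective_forall_mem (f := y) ?_ hy (hU L hL).1
    intro z z' h
    have h1 : y z j = y z' j := by rw [h]
    rw [hyj, hyj, Projectivization.mk_eq_mk_iff'] at h1
    obtain ⟨a, ha⟩ := h1
    have h0 : a = 1 := by simpa using congrFun ha 0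
    subst h0
    simpa using (congrFun ha 1).symm
  · rintro ⟨hind, hdep⟩
    obtain ⟨U, ho, hd, hU⟩ := generic_finite hξ e S hpos hdep
    exact ⟨he, U, ho, hd, fun L hL => ⟨hU L hL, slice_nonempty hY hξ he S hS hind L⟩⟩

/-- The projection of `Y` to the factors in `S` is surjective exactly when the corresponding
coordinates are algebraically independent. -/
lemma surjective_iff {k : ℕ} {Y : Set (Pt k)} (hY : IsIrredVariety Y) {K : Type} [Field K]
    [Algebra ℂ K] {ξ : Coord k → K} (hξ : IsGenericPt Y ξ) (S : Finset (Fin k)) :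
    resMap S '' Y = Set.univ ↔ AlgebraicIndependent ℂ (fun i : {l // l ∈ S} => aff ξ i) := by
  classical
  constructor
  · intro h
    refine indep_of_dense hξ (fun i => if i ∈ S then 1 else 0) S (fun i hi => by simp [hi])
      Set.univ dense_univ fun L _ => ?_
    choose p hp using fun i : {l // l ∈ S} => exists_plinVanish (L i ⟨0, by simp⟩)
    obtain ⟨y, hy, hyp⟩ : p ∈ resMap S '' Y := h ▸ Set.mem_univ p
    refine ⟨y, hy, fun i j => ?_⟩
    have hi : i ∈ S := by
      by_contra hi
      have := j.2
      simp [hi] at this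
    have : j = ⟨0, by simp [hi]⟩ := by ext; have := j.2; simp [hi] at this; simpa
    rw [this, show y i = p ⟨i, hi⟩ from congrFun hyp ⟨i, hi⟩]
    exact hp ⟨i, hi⟩
  · intro h
    refine Set.eq_univ_of_forall fun a => ?_
    obtain ⟨y, hy, hya⟩ := exists_point_of_indep hY hξ S h a
    exact ⟨y, hy, _root_.funext hya⟩

/-! ### The algebraic matroid of the coordinates -/

/-- The algebraic matroid of the affine coordinates of a point `ξ` of the multicone. -/
noncomputable def coordMatroid {k : ℕ} {K : Type} [Field K] [Algebra ℂ K] (ξ : Coord k → K) :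
    Matroid (Fin k) :=
  (AlgebraicIndependent.matroid ℂ K).comap (aff ξ)

lemma coordMatroid_indep_iff {k : ℕ} {K : Type} [Field K] [Algebra ℂ K] (ξ : Coord k → K)
    (S : Finset (Fin k)) : (coordMatroid ξ).Indep S ↔
      AlgebraicIndependent ℂ (fun i : {l // l ∈ S} => aff ξ i) := by
  rw [coordMatroid, Matroid.comap_indep_iff, AlgebraicIndependent.matroid_indep_iff]
  constructor
  · rintro ⟨h, hinj⟩
    exact (algebraicIndependent_image hinj).2 h
  · intro h
    have hinj : Set.InjOn (aff ξ) (S : Set (Fin k)) := by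
      intro i hi j hj hij
      have := h.injective (a₁ := ⟨i, hi⟩) (a₂ := ⟨j, hj⟩) hij
      exact congrArg Subtype.val this
    exact ⟨(algebraicIndependent_image hinj).1 h, hinj⟩

lemma mem_MDim_iff_isBase {k : ℕ} {Y : Set (Pt k)} (hY : IsIrredVariety Y) {K : Type} [Field K]
    [Algebra ℂ K] {ξ : Coord k → K} (hξ : IsGenericPt Y ξ) {e : Fin k → ℕ} (he : ∀ i, e i ≤ 1)
    (S : Finset (Fin k)) (hS : ∀ i, i ∈ S ↔ e i = 1) :
    e ∈ MDim Y ↔ (coordMatroid ξ).IsBase S := by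
  classical
  rw [mem_MDim_iff hY hξ he S hS, ← coordMatroid_indep_iff]
  simp only [← coordMatroid_indep_iff, Finset.coe_insert]
  constructor
  · rintro ⟨h, h'⟩
    exact h.isBase_of_forall_insert fun j hj =>
      h' j (by simpa using hj.2)
  · intro h
    exact ⟨h.indep, fun j hj => (h.insert_dep ⟨by simp [coordMatroid], by simpa using hj⟩).not_indep⟩

lemma sum_eq_card {k : ℕ} {e : Fin k → ℕ} (he : ∀ i, e i ≤ 1) :
    ∑ i, e i = (Finset.univ.filter fun i => e i = 1).card := by
  rw [Finset.card_filter]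
  refine Finset.sum_congr rfl fun i _ => ?_
  have := he i
  split_ifs <;> omega

/-- The intrinsic dimension is the rank of the algebraic matroid. -/
lemma dimOf_eq {k : ℕ} {Y : Set (Pt k)} (hY : IsIrredVariety Y) {K : Type} [Field K]
    [Algebra ℂ K] {ξ : Coord k → K} (hξ : IsGenericPt Y ξ) {B : Set (Fin k)}
    (hB : (coordMatroid ξ).IsBase B) : dimOf Y = B.ncard := by
  classical
  have : {m | ∃ e ∈ MDim Y, ∑ i, e i = m} = {B.ncard} := by
    ext m
    constructor
    · rintro ⟨e, he, rfl⟩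
      rw [sum_eq_card he.1]
      have := (mem_MDim_iff_isBase hY hξ he.1 (Finset.univ.filter fun i => e i = 1)
        (by simp)).1 he
      rw [Set.mem_singleton_iff, hB.ncard_eq_ncard_of_isBase this, Set.ncard_coe_finset]
    · rintro rfl
      have h1 : ∀ i, (if i ∈ B then 1 else 0 : ℕ) ≤ 1 := fun i => by split_ifs <;> simp
      refine ⟨fun i => if i ∈ B then 1 else 0, ?_, ?_⟩
      · rw [mem_MDim_iff_isBase hY hξ h1 B.toFinset (by simp), Set.coe_toFinset]
        exact hB
      · rw [sum_eq_card h1, ← Set.ncard_coe_finset]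
        simp
  rw [dimOf, this, csSup_singleton]

end P1Matroid

/-- For an irreducible multiprojective variety `Y ⊂ (ℙ¹)^k` of
intrinsic dimension `e`, `Dim(Y)` consists of 0-1 vectors with exactly `e` ones, and a
0-1 vector with support `S`, `|S| = e`, lies in `Dim(Y)` iff the projection of `Y` onto
the factors indexed by `S` is surjective. -/
theorem mdim_p1k_algebraic_matroid {k : ℕ}
    (Y : Set (PStack (fun _ : Fin k => 1))) (hY : IsIrredVariety Y) :
    (∀ v ∈ MDim Y, (∀ i, v i ≤ 1) ∧ ∑ i, v i = dimOf Y) ∧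
    (∀ e : Fin k → ℕ, (∀ i, e i ≤ 1) → (∑ i, e i = dimOf Y) →
      (e ∈ MDim Y ↔
        resMap (Finset.univ.filter (fun i => e i = 1)) '' Y = Set.univ)) := by
  obtain ⟨K, _, _, ξ, hξ⟩ := P1Matroid.exists_genericPt hY
  have hbase : ∀ e : Fin k → ℕ, (∀ i, e i ≤ 1) → (e ∈ MDim Y ↔ (P1Matroid.coordMatroid ξ).IsBase
      (Finset.univ.filter (fun i => e i = 1) : Finset (Fin k))) := fun e he =>
    P1Matroid.mem_MDim_iff_isBase hY hξ he _ (by simp)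
  refine ⟨fun v hv => ⟨hv.1, ?_⟩, fun e he hsum => ?_⟩
  · rw [P1Matroid.dimOf_eq hY hξ ((hbase v hv.1).1 hv), Set.ncard_coe_finset,
      P1Matroid.sum_eq_card hv.1]
  · rw [hbase e he, P1Matroid.surjective_iff hY hξ, ← P1Matroid.coordMatroid_indep_iff]
    refine ⟨fun h => h.indep, fun h => ?_⟩
    -- an independent set of full rank is a basis
    obtain ⟨B, hB, hSB⟩ := h.exists_isBase_superset
    rw [P1Matroid.dimOf_eq hY hξ hB, P1Matroid.sum_eq_card he, ← Set.ncard_coe_finset] at hsum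
    rwa [Set.eq_of_subset_of_ncard_le hSB hsum.ge]
end
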